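/- For each d ≥ 1, the infinite measure preserving dynamical system (X^d, μ^{⊗d}, T^{×d}) is conservative and ergodic. Moreover, if σ is a nonzero, Radon, T^{×d}-invariant and ergodic measure on X^d such that σ(X^d ∖ X_∞^d) = 0, then there exists a partition of {1,…,d} into r subsets D_1,…,D_r such that σ = σ^{D_1} ⊗ ⋯ ⊗ σ^{D_r}, where each σ^{D_j} is a graph measure on X^{D_j} arising from powers of T. -/

import Mathlib

/-!
The column vector of a point of `X^ι` in tower `N` records, for each coordinate, which of the three
copies of tower `N` inside tower `N + 1` contains it. It is constant, *narrow* (exactly two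
consecutive columns), or *wide* (both outer columns). The twist `S_G` applies `T` to the coordinates in
`G` only.

**Narrow positions.** The power `T^{h_N + s_N}`, where `s_N` spacers stand above each copy, moves
columns `1, 2` to `2, 3`; because of the additional spacer above the middle column it lowers by one
level exactly the coordinates which were in column `2`. If a set of positive measure shows infinitely
often a narrow vector with right-hand column on `G`, an invariant Radon measure `σ` and its image by
`S_G` are therefore not mutually singular: a set separating them could be approximated by a set
determined by one tower, which does not distinguish a point from the twist of its displacement
(`twist_not_singular`, `stageA`).

**Wide positions.** A wide vector followed by a constant one becomes narrow under one of boundedly many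
powers of `T` (`exists_narrowing`; at a large spacer the `h_{n-k(ℓ)}` spacers act as an additional copy
of a low tower, and a pigeonhole argument avoids the gaps). By Borel–Cantelli this happens finitely often
once narrow vectors are gone (`ae_not_wideConst`). If the vectors stay wide for ever, then
`T^{h_{R_ℓ}}`, with `R_ℓ = n_ℓ - ℓ`, either makes the vector narrow or lowers some coordinates only
(`stageC`, where the definition of `X_∞` is used), and a twist appears again (`ae_not_wide`). Hence
either some proper twist image of `σ` is not singular to `σ`, or almost every point has eventually
constant column vectors (`dichotomy`).

**Classification.** In the former case ergodicity makes the twist image proportional to `σ`, and the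
constant is `1` because an iterate of the twist keeps a set of positive mass inside a set of finite
mass (`twist_smul`, `one_le_of_map`, `twist_invariant`). Then `σ` is a product of marginals over `G`
and its complement (`marg_prod`), and induction on the number of coordinates applies
(`GP_of_ergodic`). In the latter case the coordinates lie on a common orbit (`exists_phi`), so `σ` is
carried by one graph, and uniqueness of the invariant Radon measure on `X` makes it a graph measure
(`graph_case`, `eq_smul_pi`).

**The product measure.** Under `μ^{⊗d}` the columns are independent, so every narrow pattern shows
infinitely often (`mpi_no_pat`, `mpi_freq`). Applied to restrictions to invariant sets, `stageA` shows
that invariant sets are invariant under `T` acting on each single coordinate (`mpi_sdiff`); since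
`μ^{⊗d}` is, up to a constant, the only Radon measure with this invariance, it is ergodic
(`mpi_ergodic`). Conservativity follows, as the measure is not carried by one orbit
(`mpi_conservative`).
-/


open MeasureTheory Set Filter Topology
open scoped ENNReal
open scoped Classical

noncomputable section

/-! ## The nearly finite Chacon transformation: symbolic model -/

/-- The alphabet `{*} ∪ ℕ` is modelled by `Option ℕ`, `none` playing the role of `*`. -/
instance optionNatTop : TopologicalSpace (Option ℕ) := ⊥

/-- The data of the two sequences `(n_ℓ)` and `(ℓ_k)` used in the construction of the
nearly finite Chacon transformation, together with the growth conditions imposed on them. -/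
structure NFCseq where
  nseq : ℕ → ℕ
  lseq : ℕ → ℕ
  nseq_zero : nseq 0 = 0
  lseq_zero : lseq 0 = 1
  lseq_strictMono : StrictMono lseq
  nseq_growth : ∀ ℓ : ℕ, 1 ≤ ℓ → nseq (ℓ - 1) + 2 * ℓ < nseq ℓ
  lseq_growth : ∀ k : ℕ, (2 : ℝ) ≤ (1 + ((7 : ℝ) ^ k)⁻¹) ^ (lseq (k + 1) - lseq k)

namespace NFCseq

/-- `k(ℓ)`: the unique `k` with `ℓ_k ≤ ℓ < ℓ_{k+1}`. -/
def kOf (P : NFCseq) (ℓ : ℕ) : ℕ := sSup {k | P.lseq k ≤ ℓ}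

/-- The heights `h_n` of the towers. -/
def hgt (P : NFCseq) : ℕ → ℕ
  | 0 => 1
  | n + 1 =>
    3 * P.hgt n +
      3 * (if hn : ∃ ℓ, 1 ≤ ℓ ∧ P.nseq ℓ = n then P.hgt (n - P.kOf (Nat.find hn)) else 0) + 1
termination_by n => n
decreasing_by all_goals omega

theorem hgt_pos (P : NFCseq) (n : ℕ) : 0 < P.hgt n := by
  cases n with
  | zero => simp [hgt]
  | succ n => rw [hgt]; omega

/-- The number of spacers put above the first subcolumn at step `n+1`
(`h_{n-k(ℓ)}` if `n = n_ℓ`, and `0` otherwise). -/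
def spa (P : NFCseq) (n : ℕ) : ℕ :=
  if hn : ∃ ℓ, 1 ≤ ℓ ∧ P.nseq ℓ = n then P.hgt (n - P.kOf (Nat.find hn)) else 0

/-- The map `p_n` sending the index of a level of tower `n+1` to the index of the level of
tower `n` containing it (`none` if that level lies outside tower `n`). -/
def pmap (P : NFCseq) (n j : ℕ) : Option ℕ :=
  if j < P.hgt n then some j
  else if j < P.hgt n + P.spa n then none
  else if j < 2 * P.hgt n + P.spa n then some (j - (P.hgt n + P.spa n))
  else if j < 2 * P.hgt n + 2 * P.spa n + 1 then none
  else if j < 3 * P.hgt n + 2 * P.spa n + 1 then some (j - (2 * P.hgt n + 2 * P.spa n + 1))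
  else none

/-- The defining property of points of the space `X`. -/
def Xspec (P : NFCseq) (x : ℕ → Option ℕ) : Prop :=
  (∀ n, x n = (x (n + 1)).bind (P.pmap n)) ∧ ∃ n, x n ≠ none

/-- The space `X` of the symbolic model, with its product (subspace) topology. -/
abbrev Xpt (P : NFCseq) : Type := {x : ℕ → Option ℕ // P.Xspec x}

instance (P : NFCseq) : MeasurableSpace P.Xpt := borel _

/-- `L_n^j`, the `j`-th level of tower `n`. -/
def level (P : NFCseq) (n j : ℕ) : Set P.Xpt := {x | x.1 n = some j}

/-- `C_n`, the union of all levels of tower `n`. -/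
def tower (P : NFCseq) (n : ℕ) : Set P.Xpt := {x | x.1 n ≠ none}

theorem pmap_zero (P : NFCseq) (n : ℕ) : P.pmap n 0 = some 0 := by
  unfold pmap
  simp [P.hgt_pos n]

/-- The point `𝟎 = (0,0,…)`. -/
def zeroPt (P : NFCseq) : P.Xpt :=
  ⟨fun _ => some 0, fun n => by
    show some 0 = (some 0).bind (P.pmap n)
    simp [P.pmap_zero n], 0, by simp⟩

/-- `t_n(x) ∈ {1,2,3}`: the subcolumn of tower `n` to which `x` belongs
(junk value `0` if `x` is not in tower `n+1`). -/
def tcol (P : NFCseq) (n : ℕ) (x : P.Xpt) : ℕ :=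
  match x.1 (n + 1) with
  | none => 0
  | some j =>
    if j < P.hgt n + P.spa n then 1
    else if j < 2 * P.hgt n + 2 * P.spa n + 1 then 2
    else 3

/-- The index (from `0` to `3^(m-n) - 1`, ordered from bottom to top of tower `m`) of the
occurrence of tower `n` inside tower `m` to which `x` belongs. -/
def occIdx (P : NFCseq) (n m : ℕ) (x : P.Xpt) : ℕ :=
  ∑ r ∈ Finset.Ico n m, (P.tcol r x - 1) * 3 ^ (r - n)

/-- `x` belongs to one of the first hundred occurrences of tower `n` inside tower `m`. -/
def inFirstHundred (P : NFCseq) (n m : ℕ) (x : P.Xpt) : Prop := P.occIdx n m x < 100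

/-- `x` belongs to one of the last hundred occurrences of tower `n` inside tower `m`. -/
def inLastHundred (P : NFCseq) (n m : ℕ) (x : P.Xpt) : Prop :=
  3 ^ (m - n) ≤ P.occIdx n m x + 100

end NFCseq

/-- The nearly finite Chacon transformation `T` together with its invariant measure `μ`. -/
structure NFC extends NFCseq where
  T : toNFCseq.Xpt → toNFCseq.Xpt
  μ : Measure toNFCseq.Xpt
  T_inj : Function.Injective T
  T_range : Set.range T = {toNFCseq.zeroPt}ᶜ
  T_up : ∀ x : toNFCseq.Xpt, ∃ N : ℕ, ∀ n, N ≤ n →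
    ∃ j : ℕ, x.1 n = some j ∧ (T x).1 n = some (j + 1)
  T_meas : Measurable T
  μ_level : ∀ n j : ℕ, j < toNFCseq.hgt n →
    μ (toNFCseq.level n j) = (3 : ℝ≥0∞)⁻¹ ^ n
  μ_pres : MeasurePreserving T μ μ
  μ_sfin : SigmaFinite μ

namespace NFC

/-- `X^d`. -/
abbrev Xd (S : NFC) (d : ℕ) : Type := Fin d → S.toNFCseq.Xpt

/-- The Cartesian power `T^{×d}`. -/
def Td (S : NFC) (d : ℕ) : S.Xd d → S.Xd d := fun y i => S.T (y i)

/-- `C_n^d`. -/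
def towerD (S : NFC) (d n : ℕ) : Set (S.Xd d) := {y | ∀ i, y i ∈ S.toNFCseq.tower n}

/-- `B` is an `n`-box. -/
def IsNBox (S : NFC) (d n : ℕ) (B : Set (S.Xd d)) : Prop :=
  ∃ v : Fin d → ℕ, (∀ i, v i < S.toNFCseq.hgt n) ∧
    B = {y : S.Xd d | ∀ i, y i ∈ S.toNFCseq.level n (v i)}

/-- A measure on `X^d` is Radon iff it is finite on each `C_n^d`. -/
def IsRadon (S : NFC) (d : ℕ) (σ : Measure (S.Xd d)) : Prop :=
  ∀ n, σ (S.towerD d n) < ⊤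

/-- `σ` is `T^{×d}`-invariant. -/
def InvariantD (S : NFC) (d : ℕ) (σ : Measure (S.Xd d)) : Prop :=
  ∀ A : Set (S.Xd d), MeasurableSet A → σ ((S.Td d) ⁻¹' A) = σ A

/-- `T^{-e} A`, the preimage of `A` under `T^e` for `e ∈ ℤ` (image for negative `e`). -/
def preT (S : NFC) : ℤ → Set S.toNFCseq.Xpt → Set S.toNFCseq.Xpt
  | Int.ofNat k, A => S.T^[k] ⁻¹' A
  | Int.negSucc k, A => S.T^[k + 1] '' A

/-- `σ` is a graph measure arising from powers of `T` on `X^ι`: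
`σ(∏ᵢ Aᵢ) = α · μ(⋂ᵢ T^{-eᵢ} Aᵢ)`. -/
def IsGraphMeasure (S : NFC) {ι : Type} (σ : Measure (ι → S.toNFCseq.Xpt)) : Prop :=
  ∃ α : ℝ≥0∞, 0 < α ∧ α ≠ ⊤ ∧ ∃ e : ι → ℤ,
    ∀ A : ι → Set S.toNFCseq.Xpt, (∀ i, MeasurableSet (A i)) →
      σ (Set.univ.pi A) = α * S.μ (⋂ i, S.preT (e i) (A i))

/-- `σ = σ^{D_1} ⊗ ⋯ ⊗ σ^{D_r}` for a partition `D_1, …, D_r` of `{1,…,d}` where each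
`σ^{D_j}` is a graph measure on `X^{D_j}` arising from powers of `T`. -/
def IsProductOfGraphMeasures (S : NFC) (d : ℕ) (σ : Measure (S.Xd d)) : Prop :=
  ∃ (r : ℕ) (D : Fin r → Finset (Fin d)),
    (∀ j, (D j).Nonempty) ∧
    (∀ j j', j ≠ j' → Disjoint (D j) (D j')) ∧
    (∀ i : Fin d, ∃ j, i ∈ D j) ∧
    ∃ σD : ∀ j : Fin r, Measure ({i // i ∈ D j} → S.toNFCseq.Xpt),
      (∀ j, S.IsGraphMeasure (σD j)) ∧
      ∀ A : Fin d → Set S.toNFCseq.Xpt, (∀ i, MeasurableSet (A i)) →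
        σ (Set.univ.pi A) =
          ∏ j : Fin r, σD j (Set.univ.pi fun i : {i // i ∈ D j} => A i.1)

end NFC


/-- `(T)^j W` for `j ∈ ℤ`: forward images for `j ≥ 0`, preimages for `j < 0`. -/
def iterZ {α : Type*} (f : α → α) : ℤ → Set α → Set α
  | Int.ofNat k, A => f^[k] '' A
  | Int.negSucc k, A => f^[k + 1] ⁻¹' A

namespace NFC

/-- `σ` is totally dissipative: there is a wandering set `W` whose `ℤ`-orbit covers
`X^d` up to a `σ`-null set. -/
def TotallyDissipative (S : NFC) (d : ℕ) (σ : Measure (S.Xd d)) : Prop :=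
  ∃ W : Set (S.Xd d), MeasurableSet W ∧
    (∀ j j' : ℤ, j ≠ j' → Disjoint (iterZ (S.Td d) j W) (iterZ (S.Td d) j' W)) ∧
    σ (⋃ j : ℤ, iterZ (S.Td d) j W)ᶜ = 0

/-- The ring `𝓡` of finite unions of `n`-boxes. -/
def BoxRing (S : NFC) (d : ℕ) : Set (Set (S.Xd d)) :=
  {B | ∃ n : ℕ, ∃ 𝔅 : Finset (Set (S.Xd d)), (∀ b ∈ 𝔅, S.IsNBox d n b) ∧ B = ⋃₀ ↑𝔅}

/-- Convergence of a sequence of Radon measures on `X^d`. -/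
def RTendsto (S : NFC) (d : ℕ) (σk : ℕ → Measure (S.Xd d)) (σ : Measure (S.Xd d)) : Prop :=
  ∀ n : ℕ, 0 < σ (S.towerD d n) →
    (∀ᶠ k in atTop, 0 < σk k (S.towerD d n)) ∧
    ∀ B : Set (S.Xd d), S.IsNBox d n B →
      Tendsto (fun k => σk k B / σk k (S.towerD d n)) atTop
        (𝓝 (σ B / σ (S.towerD d n)))

/-- The edge `∂C_n^d` of `C_n^d`. -/
def edgeD (S : NFC) (d n : ℕ) : Set (S.Xd d) :=
  {y | y ∈ S.towerD d n ∧ ∃ i, y i ∈ S.toNFCseq.level n 0 ∨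
    y i ∈ S.toNFCseq.level n (S.toNFCseq.hgt n - 1)}

/-- `Ω_m`: the union of all `m`-boxes `L_m^{j_1} × ⋯ × L_m^{j_d}` with `j_i ≠ 0` for all `i`. -/
def OmegaD (S : NFC) (d m : ℕ) : Set (S.Xd d) :=
  {y | ∀ i, ∃ j : ℕ, j ≠ 0 ∧ j < S.toNFCseq.hgt m ∧ y i ∈ S.toNFCseq.level m j}

/-- A twisting transformation on `X^d`: it applies `T` to the coordinates in a nonempty
proper subset `G_1 ⊆ {1,…,d}` and the identity to the others. -/
def IsTwist (S : NFC) (d : ℕ) (Sw : S.Xd d → S.Xd d) : Prop :=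
  ∃ G : Fin d → Bool, (∃ i, G i = true) ∧ (∃ i, G i = false) ∧
    ∀ (y : S.Xd d) (i : Fin d), Sw y i = if G i then S.T (y i) else y i

/-- The empirical measure `γ_J = ∑_{j ∈ J} δ_{(T^{×d})^j x}` along a two-sided orbit `o`. -/
def emp (S : NFC) (d : ℕ) (o : ℤ → S.Xd d) (J : Finset ℤ) : Measure (S.Xd d) :=
  ∑ j ∈ J, Measure.dirac (o j)

end NFC

/-- `J` is a (nonempty finite) interval of `ℤ`. -/
def IsIntervalZ (J : Finset ℤ) : Prop := ∃ a b : ℤ, a ≤ b ∧ J = Finset.Icc a b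

namespace NFC

/-- `J` is an `n`-crossing for the orbit `o` of a point of `X^d`: a maximal interval on which
the orbit stays in `C_n^d` with all the `t_n(T^j x_i)` constant. -/
def IsCrossing (S : NFC) (d : ℕ) (o : ℤ → S.Xd d) (n : ℕ) (J : Finset ℤ) : Prop :=
  IsIntervalZ J ∧
  (∀ j ∈ J, o j ∈ S.towerD d n) ∧
  (∀ i : Fin d, ∀ j ∈ J, ∀ j' ∈ J, S.toNFCseq.tcol n (o j i) = S.toNFCseq.tcol n (o j' i)) ∧
  ∀ J' : Finset ℤ, J ⊆ J' → IsIntervalZ J' →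
    (∀ j ∈ J', o j ∈ S.towerD d n) →
    (∀ i : Fin d, ∀ j ∈ J', ∀ j' ∈ J', S.toNFCseq.tcol n (o j i) = S.toNFCseq.tcol n (o j' i)) →
    J' = J

/-- An `n`-crossing is synchronized if `t_n(T^j x_1) = ⋯ = t_n(T^j x_d)` on it. -/
def IsSync (S : NFC) (d : ℕ) (o : ℤ → S.Xd d) (n : ℕ) (J : Finset ℤ) : Prop :=
  ∀ j ∈ J, ∀ i i' : Fin d, S.toNFCseq.tcol n (o j i) = S.toNFCseq.tcol n (o j i')

end NFC

/-- The interval `I_n` of length `h_n` centered at `0`. -/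
def Imid (P : NFCseq) (n : ℕ) : Finset ℤ :=
  Finset.Icc (-((P.hgt n / 2 : ℕ) : ℤ)) (-((P.hgt n / 2 : ℕ) : ℤ) + P.hgt n - 1)

namespace NFC

/-- A substantial `n`-crossing: an `n`-crossing whose intersection with `I_n` has at least
`η·h_n` elements. -/
def IsSubstantial (S : NFC) (d : ℕ) (o : ℤ → S.Xd d) (η : ℝ) (n : ℕ) (J : Finset ℤ) : Prop :=
  S.IsCrossing d o n J ∧ η * S.toNFCseq.hgt n ≤ ((J ∩ Imid S.toNFCseq n).card : ℝ)

/-- `x_i` climbs into tower `n` along the interval `I`. -/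
def Climbs (S : NFC) (d : ℕ) (o : ℤ → S.Xd d) (i : Fin d) (n : ℕ) (I : Finset ℤ) : Prop :=
  (∀ j ∈ I, (o j) i ∈ S.toNFCseq.tower n) ∧
  ¬ ∃ j : ℤ, j ∈ I ∧ j + 1 ∈ I ∧
      (o j) i ∈ S.toNFCseq.level n (S.toNFCseq.hgt n - 1) ∧
      (o (j + 1)) i ∈ S.toNFCseq.level n 0

end NFC

/-- The nearly finite Chacon system together with the conull set `X_∞` and the function
`x ↦ ℓ(x)` of Lemma 2.3. -/
structure NFCX extends NFC where
  Xinf : Set toNFCseq.Xpt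
  ellx : toNFCseq.Xpt → ℕ
  Xinf_conull : μ Xinfᶜ = 0
  Xinf_spec : ∀ x ∈ Xinf, ∀ ℓ : ℕ, ellx x ≤ ℓ → ∀ n : ℕ,
    nseq (ℓ - 1) ≤ n → n + ℓ ≤ nseq ℓ →
      x ∈ toNFCseq.tower n ∧ ¬ toNFCseq.inFirstHundred n (nseq ℓ) x ∧
        ¬ toNFCseq.inLastHundred n (nseq ℓ) x

namespace NFCX

/-- `o` is the two-sided orbit of a `σ`-typical point `x = o 0` (satisfying
conditions (1), (2) and (3) of Section 3.4 of the paper). -/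
def IsTypicalOrbit (S : NFCX) (d : ℕ) (σ : Measure (S.toNFC.Xd d))
    (o : ℤ → S.toNFC.Xd d) : Prop :=
  (∀ j : ℤ, S.toNFC.Td d (o j) = o (j + 1)) ∧
  (∀ j : ℤ, ∀ n : ℕ, 0 < σ (S.toNFC.towerD d n) →
    ∀ B : Set (S.toNFC.Xd d), S.toNFC.IsNBox d n B →
    ∀ a b : ℕ → ℤ, (∀ k, a k ≤ 0) → (∀ k, 0 ≤ b k) →
      Tendsto (fun k => b k - a k) atTop atTop →
      Tendsto (fun k =>
          (((Finset.Icc (a k) (b k)).filter (fun j' => o (j + j') ∈ B)).card : ℝ) /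
            (((Finset.Icc (a k) (b k)).filter
              (fun j' => o (j + j') ∈ S.toNFC.towerD d n)).card : ℝ))
        atTop (𝓝 ((σ B).toReal / (σ (S.toNFC.towerD d n)).toReal))) ∧
  (∀ n : ℕ, ∀ B : Set (S.toNFC.Xd d), S.toNFC.IsNBox d n B → o 0 ∈ B → 0 < σ B) ∧
  (∀ i : Fin d, (o 0) i ∈ S.Xinf)

end NFCX

/-! ## Subsets of `ℤ` of order `ℓ` inside an interval -/

/-- A piece of `F ∩ I`: a maximal interval included in `F ∩ I`. -/
def IsPieceZ (F : Set ℤ) (I : Finset ℤ) (J : Finset ℤ) : Prop :=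
  IsIntervalZ J ∧ (↑J : Set ℤ) ⊆ F ∩ ↑I ∧
    ∀ J' : Finset ℤ, IsIntervalZ J' → (↑J' : Set ℤ) ⊆ F ∩ ↑I → J ⊆ J' → J' = J

/-- A hole of `F ∩ I`: a maximal interval included in `I \ F`. -/
def IsHoleZ (F : Set ℤ) (I : Finset ℤ) (J : Finset ℤ) : Prop :=
  IsIntervalZ J ∧ (↑J : Set ℤ) ⊆ (↑I : Set ℤ) \ F ∧
    ∀ J' : Finset ℤ, IsIntervalZ J' → (↑J' : Set ℤ) ⊆ (↑I : Set ℤ) \ F → J ⊆ J' → J' = J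

/-- Each hole of `F ∩ I` has size at most `s`. -/
def HolesSmall (F : Set ℤ) (I : Finset ℤ) (s : ℕ) : Prop :=
  ∀ H : Finset ℤ, IsHoleZ F I H → H.card ≤ s

/-- Two consecutive holes of `F ∩ I` are always separated by a piece of size at least `c`. -/
def HolesSeparated (F : Set ℤ) (I : Finset ℤ) (c : ℕ) : Prop :=
  ∀ H₁ H₂ : Finset ℤ, IsHoleZ F I H₁ → IsHoleZ F I H₂ →
    (∀ a ∈ H₁, ∀ b ∈ H₂, a < b) →
    ∃ J : Finset ℤ, IsPieceZ F I J ∧ c ≤ J.card ∧ ∀ a ∈ H₁, ∀ b ∈ H₂, ∀ x ∈ J, a < x ∧ x < b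

/-- `F` is of order `ℓ ≥ 1` inside the interval `I`, with respect to the sequences `c`, `s`. -/
def IsOrder (c s : ℕ → ℕ) : ℕ → Set ℤ → Finset ℤ → Prop
  | 0, _, _ => False
  | 1, F, I => HolesSmall F I (s 1) ∧ HolesSeparated F I (c 1)
  | (ℓ + 2), F, I => ∃ F' : Set ℤ, F ⊆ F' ∧ HolesSmall F' I (s (ℓ + 2)) ∧
      HolesSeparated F' I (c (ℓ + 2)) ∧
      ∀ J : Finset ℤ, IsPieceZ F' I J → IsOrder c s (ℓ + 1) F J

/-- `p_1`: the smallest integer such that `3^{p_1} > 2d+1` and `p_1 > d`. -/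
def pOne (d : ℕ) : ℕ := sInf {p : ℕ | 2 * d + 1 < 3 ^ p ∧ d < p}

/-- `p_2`: the smallest integer such that `1/3^{p_2} < η/3`. -/
def pTwo (η : ℝ) : ℕ := sInf {p : ℕ | ((3 : ℝ) ^ p)⁻¹ < η / 3}

/-! ### Positions in the towers -/

namespace NFCseq

variable {P : NFCseq}

/-- The index in tower `n+1` of the bottom level of the `a`-th copy of tower `n`
(`a = 1, 2, 3`). -/
def off (P : NFCseq) (n a : ℕ) : ℕ :=
  if a = 3 then 2 * (P.hgt n + P.spa n) + 1 else if a = 2 then P.hgt n + P.spa n else 0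

@[simp] theorem off_one (n : ℕ) : P.off n 1 = 0 := by simp [off]
@[simp] theorem off_two (n : ℕ) : P.off n 2 = P.hgt n + P.spa n := by simp [off]
@[simp] theorem off_three (n : ℕ) : P.off n 3 = 2 * (P.hgt n + P.spa n) + 1 := by simp [off]

/-- `a` is a column index. -/
def IsDig (a : ℕ) : Prop := a = 1 ∨ a = 2 ∨ a = 3

theorem hgt_succ (n : ℕ) : P.hgt (n + 1) = 3 * P.hgt n + 3 * P.spa n + 1 := by
  rw [hgt, spa]

theorem off_add_lt {n a v : ℕ} (hv : v < P.hgt n) : P.off n a + v < P.hgt (n + 1) := by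
  rw [hgt_succ, off]; split_ifs <;> omega

theorem pmap_off {n a v : ℕ} (ha : IsDig a) (hv : v < P.hgt n) :
    P.pmap n (P.off n a + v) = some v := by
  rcases ha with rfl | rfl | rfl
  · simp [pmap, hv]
  · simp only [pmap, off_two]
    rw [if_neg (by omega), if_neg (by omega), if_pos (by omega)]
    simp
  · simp only [pmap, off_three]
    rw [if_neg (by omega), if_neg (by omega), if_neg (by omega), if_neg (by omega),
      if_pos (by omega)]
    congr 1; omega

theorem exists_of_pmap {n j v : ℕ} (h : P.pmap n j = some v) :
    v < P.hgt n ∧ ∃ a, IsDig a ∧ j = P.off n a + v := by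
  unfold pmap at h
  split_ifs at h with h1 h2 h3 h4 h5 <;> simp only [Option.some.injEq] at h
  · exact ⟨by omega, 1, by simp [IsDig], by simp [h]⟩
  · exact ⟨by omega, 2, by simp [IsDig], by simp; omega⟩
  · exact ⟨by omega, 3, by simp [IsDig], by simp; omega⟩

/-- The projection from level indices of tower `n + k` to level indices of tower `n`. -/
def pr (P : NFCseq) (n : ℕ) : ℕ → ℕ → Option ℕ
  | 0, J => if J < P.hgt n then some J else none
  | k + 1, J => (P.pmap (n + k) J).bind (pr P n k)

theorem pr_succ_iff {n k J v : ℕ} : P.pr n (k + 1) J = some v ↔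
    ∃ a w, IsDig a ∧ w < P.hgt (n + k) ∧ J = P.off (n + k) a + w ∧ P.pr n k w = some v := by
  simp only [pr, Option.bind_eq_some_iff]
  constructor
  · rintro ⟨w, hw, h⟩
    obtain ⟨h1, a, ha, h2⟩ := exists_of_pmap hw
    exact ⟨a, w, ha, h1, h2, h⟩
  · rintro ⟨a, w, ha, hw, rfl, h⟩
    exact ⟨w, pmap_off ha hw, h⟩

theorem pr_zero_iff {n J v : ℕ} : P.pr n 0 J = some v ↔ J < P.hgt n ∧ J = v := by
  simp only [pr]; split_ifs <;> simp [*]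

theorem pr_bounds {n k J j : ℕ} (h : P.pr n k J = some j) :
    j < P.hgt n ∧ j ≤ J ∧ J + P.hgt n ≤ P.hgt (n + k) + j := by
  induction k generalizing J with
  | zero => rw [pr_zero_iff] at h; obtain ⟨h1, rfl⟩ := h; simp; omega
  | succ k ih =>
    obtain ⟨a, w, ha, hw, rfl, h'⟩ := pr_succ_iff.1 h
    obtain ⟨h1, h2, h3⟩ := ih h'
    have := off_add_lt (P := P) (a := a) (n := n + k) (v := P.hgt (n+k) - 1) (by omega)
    rw [← add_assoc n k 1]
    refine ⟨h1, by omega, by omega⟩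

theorem pr_shift {n k J j J' j' : ℕ} (h : P.pr n k J = some j) (e : J' + j = J + j')
    (hj : j' < P.hgt n) : P.pr n k J' = some j' := by
  induction k generalizing J J' with
  | zero => rw [pr_zero_iff] at h ⊢; omega
  | succ k ih =>
    obtain ⟨a, w, ha, hw, rfl, h'⟩ := pr_succ_iff.1 h
    obtain ⟨h1, h2, h3⟩ := pr_bounds h'
    exact pr_succ_iff.2 ⟨a, w + j' - j, ha, by omega, by omega, ih h' (by omega)⟩

theorem hgt_le_succ (n : ℕ) : P.hgt n < P.hgt (n + 1) := by rw [hgt_succ]; omega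

theorem hgt_mono : Monotone P.hgt := monotone_nat_of_le_succ fun n => (hgt_le_succ n).le

theorem pr_small {n k J : ℕ} (h : J < P.hgt n) : P.pr n k J = some J := by
  induction k with
  | zero => simp [pr, h]
  | succ k ih =>
    exact pr_succ_iff.2 ⟨1, J, by simp [IsDig], h.trans_le (hgt_mono (by omega)), by simp, ih⟩

/-! ### Points of the symbolic model -/

theorem lev_lt_of {x : P.Xpt} {n v : ℕ} (h : x.1 n = some v) :
    v < P.hgt n ∧ ∃ a, IsDig a ∧ x.1 (n + 1) = some (P.off n a + v) := by
  rw [x.2.1 n, Option.bind_eq_some_iff] at h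
  obtain ⟨J, hJ, h⟩ := h
  obtain ⟨h1, a, ha, rfl⟩ := exists_of_pmap h
  exact ⟨h1, a, ha, hJ⟩

theorem lev_lt {x : P.Xpt} {n v : ℕ} (h : x.1 n = some v) : v < P.hgt n := (lev_lt_of h).1

theorem lev_down {x : P.Xpt} {n a v : ℕ} (ha : IsDig a) (hv : v < P.hgt n)
    (h : x.1 (n + 1) = some (P.off n a + v)) : x.1 n = some v := by
  rw [x.2.1 n, h]; simpa using pmap_off ha hv

theorem tcol_eq {x : P.Xpt} {n a v : ℕ} (ha : IsDig a) (hv : v < P.hgt n)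
    (h : x.1 (n + 1) = some (P.off n a + v)) : P.tcol n x = a := by
  unfold tcol; rw [h]
  simp only
  rcases ha with rfl | rfl | rfl
  · rw [off_one, if_pos (by omega)]
  · rw [off_two, if_neg (by omega), if_pos (by omega)]
  · rw [off_three, if_neg (by omega), if_neg (by omega)]

theorem lev_up {x : P.Xpt} {n v : ℕ} (h : x.1 n = some v) :
    IsDig (P.tcol n x) ∧ x.1 (n + 1) = some (P.off n (P.tcol n x) + v) := by
  obtain ⟨h1, a, ha, h2⟩ := lev_lt_of h
  rw [tcol_eq ha h1 h2]; exact ⟨ha, h2⟩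

theorem lev_pr (x : P.Xpt) (n k : ℕ) : x.1 n = (x.1 (n + k)).bind (P.pr n k) := by
  induction k with
  | zero =>
    cases h : x.1 n with
    | none => simp
    | some v => simp [pr, lev_lt h]
  | succ k ih =>
    rw [ih, x.2.1 (n + k), ← add_assoc]
    cases x.1 (n + k + 1) <;> simp [pr]

theorem lev_of_pr {x : P.Xpt} {n k J v : ℕ} (h : x.1 (n + k) = some J)
    (h' : P.pr n k J = some v) : x.1 n = some v := by
  rw [lev_pr x n k, h]; simpa using h'

theorem pr_of_lev {x : P.Xpt} {n k J v : ℕ} (h : x.1 (n + k) = some J)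
    (h' : x.1 n = some v) : P.pr n k J = some v := by
  rw [lev_pr x n k, h] at h'; simpa using h'

theorem lev_exists {x : P.Xpt} {n m v : ℕ} (hnm : n ≤ m) (h : x.1 n = some v) :
    ∃ J, x.1 m = some J ∧ v ≤ J := by
  obtain ⟨k, rfl⟩ := Nat.exists_eq_add_of_le hnm
  cases hx : x.1 (n + k) with
  | none => rw [lev_pr x n k, hx] at h; simp at h
  | some J => exact ⟨J, rfl, (pr_bounds (pr_of_lev hx h)).2.1⟩

theorem lev_ne_none {x : P.Xpt} {n m : ℕ} (hnm : n ≤ m) (h : x.1 n ≠ none) : x.1 m ≠ none := by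
  obtain ⟨v, hv⟩ := Option.ne_none_iff_exists'.1 h
  obtain ⟨J, hJ, -⟩ := lev_exists hnm hv
  simp [hJ]

theorem Xpt_ext {x y : P.Xpt} (N : ℕ) (h : ∀ n, N ≤ n → x.1 n = y.1 n) : x = y := by
  apply Subtype.ext; funext n
  rw [lev_pr x n N, lev_pr y n N, h _ (by omega)]

end NFCseq

namespace NFC
open NFCseq

variable {S : NFC}

theorem iter_up (x : S.Xpt) (t : ℕ) : ∃ N, ∀ n, N ≤ n →
    ∃ j, x.1 n = some j ∧ (S.T^[t] x).1 n = some (j + t) := by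
  induction t with
  | zero =>
    obtain ⟨N, hN⟩ := S.T_up x
    refine ⟨N, fun n hn => ?_⟩
    obtain ⟨j, h, -⟩ := hN n hn
    exact ⟨j, h, h⟩
  | succ t ih =>
    obtain ⟨N, hN⟩ := ih
    obtain ⟨N', hN'⟩ := S.T_up (S.T^[t] x)
    refine ⟨max N N', fun n hn => ?_⟩
    obtain ⟨j, h1, h2⟩ := hN n (by omega)
    obtain ⟨j', h3, h4⟩ := hN' n (by omega)
    rw [h2] at h3
    refine ⟨j, h1, ?_⟩
    rw [Function.iterate_succ_apply', h4]
    congr 1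
    have := Option.some.inj h3
    omega

/-- Points in a common copy of tower `m` move rigidly. -/
theorem lev_iter {x : S.Xpt} {m j t : ℕ} (h : x.1 m = some j) (ht : j + t < S.hgt m) :
    (S.T^[t] x).1 m = some (j + t) := by
  obtain ⟨N, hN⟩ := iter_up x t
  obtain ⟨J, h1, h2⟩ := hN (m + N) (by omega)
  exact lev_of_pr h2 (pr_shift (pr_of_lev h1 h) (by omega) ht)

theorem lev_of_iter {x : S.Xpt} {m j t : ℕ} (h : (S.T^[t] x).1 m = some (j + t)) :
    x.1 m = some j := by
  obtain ⟨N, hN⟩ := iter_up x t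
  obtain ⟨J, h1, h2⟩ := hN (m + N) (by omega)
  have := lev_lt h
  exact lev_of_pr h1 (pr_shift (pr_of_lev h2 h) (by omega) (by omega))

/-- Two points at levels `j`, `j+t` of tower `m` which are moved one to the other by `T^t` have
the same position above tower `m`. -/
theorem lev_iter_up {x : S.Xpt} {m r j t : ℕ} (hmr : m ≤ r) (h : x.1 m = some j)
    (ht : j + t < S.hgt m) :
    ∃ w, x.1 r = some w ∧ w + t < S.hgt r ∧ (S.T^[t] x).1 r = some (w + t) ∧
      S.tcol r (S.T^[t] x) = S.tcol r x := by
  obtain ⟨k, rfl⟩ := Nat.exists_eq_add_of_le hmr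
  obtain ⟨w, hw, -⟩ := lev_exists hmr h
  have hb := pr_bounds (pr_of_lev hw h)
  have hwt : w + t < S.hgt (m + k) := by omega
  refine ⟨w, hw, hwt, lev_iter hw hwt, ?_⟩
  obtain ⟨hd, hu⟩ := lev_up hw
  have h2 := lev_iter (t := t) hu
    (by rw [add_assoc]; exact off_add_lt hwt)
  rw [add_assoc] at h2
  exact tcol_eq hd hwt (h2.trans (by rw [add_assoc]))

end NFC

/-! ### Large spacers and runs of towers without them -/

namespace NFCseq

variable {P : NFCseq}

theorem nseq_strictMono : StrictMono P.nseq := by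
  refine strictMono_nat_of_lt_succ fun n => ?_
  have := P.nseq_growth (n + 1) (by omega)
  simp at this; omega

theorem spa_nseq {ℓ : ℕ} (hl : 1 ≤ ℓ) : P.spa (P.nseq ℓ) = P.hgt (P.nseq ℓ - P.kOf ℓ) := by
  have hn : ∃ l, 1 ≤ l ∧ P.nseq l = P.nseq ℓ := ⟨ℓ, hl, rfl⟩
  rw [spa, dif_pos hn]
  have := (Nat.find_spec hn).2
  rw [nseq_strictMono.injective this]

theorem exists_of_spa {n : ℕ} (h : P.spa n ≠ 0) : ∃ ℓ, 1 ≤ ℓ ∧ P.nseq ℓ = n := by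
  by_contra hn
  exact h (by rw [spa, dif_neg hn])

theorem spa_zero {ℓ r : ℕ} (h1 : P.nseq (ℓ - 1) < r) (h2 : r < P.nseq ℓ) : P.spa r = 0 := by
  by_contra h
  obtain ⟨l, hl, rfl⟩ := exists_of_spa h
  have a := nseq_strictMono.lt_iff_lt.1 h1
  have b := nseq_strictMono.lt_iff_lt.1 h2
  omega

theorem lseq_gt (k : ℕ) : k < P.lseq k := by
  induction k with
  | zero => rw [P.lseq_zero]; omega
  | succ k ih => have := P.lseq_strictMono (Nat.lt_add_one k); omega

theorem kOf_le (ℓ : ℕ) : P.kOf ℓ ≤ ℓ := by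
  apply csSup_le'
  intro k hk
  have := lseq_gt (P := P) k
  simp at hk; omega

theorem le_kOf {k ℓ : ℕ} (h : P.lseq k ≤ ℓ) : k ≤ P.kOf ℓ := by
  apply le_csSup
  · refine ⟨ℓ, fun k hk => ?_⟩
    have := lseq_gt (P := P) k
    simp at hk; omega
  · exact h

/-- `R_ℓ = n_ℓ - ℓ`. -/
def Rl (P : NFCseq) (ℓ : ℕ) : ℕ := P.nseq ℓ - ℓ

theorem Rl_spec {ℓ : ℕ} (hl : 1 ≤ ℓ) :
    P.Rl ℓ + ℓ = P.nseq ℓ ∧ P.nseq (ℓ - 1) + ℓ < P.Rl ℓ := by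
  have := P.nseq_growth ℓ hl
  unfold Rl; omega

theorem three_pow_hgt (n k : ℕ) : 3 ^ k * P.hgt n ≤ P.hgt (n + k) := by
  induction k with
  | zero => simp
  | succ k ih => rw [← add_assoc, hgt_succ, pow_succ]; linarith

/-- One step of length `h_R` inside a tower `R+k` without spacers of type `spa`: a copy of tower
`R` is followed by another one, with at most one spacer in between. -/
theorem pr_step {R k : ℕ} (h0 : ∀ r, R ≤ r → r < R + k → P.spa r = 0) {J v : ℕ}
    (h : P.pr R k J = some v) (hv : 1 ≤ v) :
    (J + P.hgt R < P.hgt (R + k) → P.pr R k (J + P.hgt R) = some v ∨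
      P.pr R k (J + P.hgt R) = some (v - 1)) ∧
    (P.hgt (R + k) ≤ J + P.hgt R → J + P.hgt R = P.hgt (R + k) + v) := by
  induction k generalizing J with
  | zero =>
    rw [pr_zero_iff] at h
    obtain ⟨h1, rfl⟩ := h
    simp; omega
  | succ k ih =>
    obtain ⟨a, w, ha, hw, rfl, h'⟩ := pr_succ_iff.1 h
    have ih := @ih (fun r h1 h2 => h0 r h1 (by omega)) w h'
    have hs := h0 (R + k) (by omega) (by omega)
    have hb := (pr_bounds h').1
    have hH := hgt_succ (P := P) (R + k)
    rw [hs] at hH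
    rw [← add_assoc]
    by_cases hc : w + P.hgt R < P.hgt (R + k)
    · have hh := off_add_lt (P := P) (a := a) hc
      rw [add_assoc]
      refine ⟨fun _ => ?_, by omega⟩
      rcases ih.1 hc with h1 | h1
      · exact Or.inl (pr_succ_iff.2 ⟨a, _, ha, hc, rfl, h1⟩)
      · exact Or.inr (pr_succ_iff.2 ⟨a, _, ha, hc, rfl, h1⟩)
    · have e := ih.2 (by omega)
      have hR : P.hgt R ≤ P.hgt (R + k) := hgt_mono (by omega)
      rcases ha with rfl | rfl | rfl
      · rw [off_one]
        refine ⟨fun _ => Or.inl ?_, by omega⟩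
        exact pr_succ_iff.2 ⟨2, v, by simp [IsDig], by omega, by rw [off_two, hs]; omega,
          pr_small hb⟩
      · rw [off_two, hs]
        refine ⟨fun _ => Or.inr ?_, by omega⟩
        exact pr_succ_iff.2 ⟨3, v - 1, by simp [IsDig], by omega,
          by rw [off_three, hs]; omega, pr_small (by omega)⟩
      · rw [off_three, hs]
        refine ⟨by omega, by omega⟩

/-- Positions in tower `R` along two copies of tower `R+k` separated by `h_R` spacers, the block
of spacers being considered as an additional copy of tower `R`. -/
def ex (P : NFCseq) (R k J : ℕ) : Option ℕ :=
  if J < P.hgt (R + k) then P.pr R k J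
  else if J < P.hgt (R + k) + P.hgt R then some (J - P.hgt (R + k))
  else P.pr R k (J - P.hgt (R + k) - P.hgt R)

theorem ex_step {R k : ℕ} (h0 : ∀ r, R ≤ r → r < R + k → P.spa r = 0) {J v : ℕ}
    (h : P.ex R k J = some v) (hv : 1 ≤ v) (hJ : J + P.hgt R < 2 * P.hgt (R + k) + P.hgt R) :
    P.ex R k (J + P.hgt R) = some v ∨ P.ex R k (J + P.hgt R) = some (v - 1) := by
  have hR : P.hgt R ≤ P.hgt (R + k) := hgt_mono (by omega)
  unfold ex at h
  split_ifs at h with h1 h2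
  · have hb := (pr_bounds h).1
    have := pr_step h0 h hv
    by_cases hc : J + P.hgt R < P.hgt (R + k)
    · simpa [ex, hc] using this.1 hc
    · have e := this.2 (by omega)
      left; rw [ex, if_neg hc, if_pos (by omega), e]; simp
  · left
    simp only [Option.some.injEq] at h
    rw [ex, if_neg (by omega), if_neg (by omega),
      show J + P.hgt R - P.hgt (R + k) - P.hgt R = v by omega]
    exact pr_small (by omega)
  · have := pr_step h0 h hv
    rw [ex, if_neg (by omega), if_neg (by omega),
      show J + P.hgt R - P.hgt (R + k) - P.hgt R =
        J - P.hgt (R + k) - P.hgt R + P.hgt R by omega]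
    exact this.1 (by omega)

theorem ex_steps {R k : ℕ} (h0 : ∀ r, R ≤ r → r < R + k → P.spa r = 0) {J v c : ℕ}
    (h : P.ex R k J = some v) (hv : c ≤ v)
    (hJ : J + c * P.hgt R < 2 * P.hgt (R + k) + P.hgt R) :
    ∃ δ ≤ c, P.ex R k (J + c * P.hgt R) = some (v - δ) := by
  induction c with
  | zero => exact ⟨0, le_rfl, by simpa using h⟩
  | succ c ih =>
    rw [add_mul, one_mul, ← add_assoc] at hJ ⊢
    obtain ⟨δ, h1, h2⟩ := ih (by omega) (by omega)
    rcases ex_step h0 h2 (by omega) hJ with h3 | h3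
    · exact ⟨δ, by omega, h3⟩
    · exact ⟨δ + 1, by omega, by rw [h3]; congr 1⟩

/-- Two points whose positions in tower `M` differ by the same amount as their positions in
tower `m` lie in the same copies in between. -/
theorem two_pts {x z : P.Xpt} {m r M J J' j j' : ℕ} (hmr : m ≤ r) (hrM : r ≤ M)
    (hx : x.1 M = some J) (hz : z.1 M = some J') (hm : x.1 m = some j)
    (e : J' + j = J + j') (hj' : j' < P.hgt m) :
    (∃ w w', x.1 r = some w ∧ z.1 r = some w' ∧ w' + j = w + j') ∧
      (r < M → P.tcol r z = P.tcol r x) := by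
  obtain ⟨k, rfl⟩ := Nat.exists_eq_add_of_le hmr
  obtain ⟨w, hw, -⟩ := lev_exists hmr hm
  have hb := pr_bounds (pr_of_lev hw hm)
  have key : ∀ q, q ≤ M → ∀ u u', x.1 q = some u → u' < P.hgt q → u' + j = u + j' →
      z.1 q = some u' := by
    intro q hq u u' hu hu' hh
    obtain ⟨l, rfl⟩ := Nat.exists_eq_add_of_le hq
    exact lev_of_pr hz (pr_shift (pr_of_lev hx hu) (by omega) hu')
  have hz1 := key _ hrM w (w + j' - j) hw (by omega) (by omega)
  refine ⟨⟨w, _, hw, hz1, by omega⟩, fun hlt => ?_⟩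
  obtain ⟨hd, hu⟩ := lev_up hw
  have hw' : w + j' - j < P.hgt (m + k) := by omega
  exact tcol_eq hd hw' (key _ hlt _ _ hu (off_add_lt hw') (by omega))

/-- The form of `two_pts` used for a downward displacement by `δ`: a level of tower `M` lowered by
`δ` is lowered by `δ` in tower `m` too, as long as the level there is at least `δ`. -/
theorem two_pts_low {x z : P.Xpt} {m M J J' j δ : ℕ} (hmM : m ≤ M)
    (hx : x.1 M = some J) (hz : z.1 M = some J') (hm : x.1 m = some j)
    (e : J' + δ = J) (hj : δ ≤ j) : z.1 m = some (j - δ) := by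
  have := lev_lt hm
  obtain ⟨⟨w, w', h1, h2, h3⟩, -⟩ := two_pts (j' := j - δ) le_rfl hmM hx hz hm (by omega) (by omega)
  rw [h2]; rw [hm] at h1; have := Option.some.inj h1; congr 1; omega

end NFCseq

/-! ### Effect of powers of `T` on two successive columns -/

namespace NFC
open NFCseq

variable {S : NFC}

theorem tower_of_low {x z : S.Xpt} {n N w v δ : ℕ} (hnN : n ≤ N) (hx : x.1 N = some w)
    (hn : x.1 n = some v) (hz : z.1 N = some (w - δ)) (hδ : δ ≤ v) : z.1 n ≠ none := by
  obtain ⟨J, hJ, hle⟩ := lev_exists hnN hn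
  rw [hx] at hJ; cases hJ
  rw [two_pts_low hnN hx hz hn (by omega) hδ]; simp

/-- Effect of `T^{h_N + s_N}`, with `s_N` the spacers above each copy of tower `N`, on the columns `N`, `N+1` when there is no large spacer at `N+1`. -/
theorem shiftB {x : S.Xpt} {n N v b : ℕ} (hnN : n ≤ N) (hs : S.spa (N + 1) = 0)
    (hn : x.1 n = some v) (hv : 2 ≤ v) (hb : b = 1 ∨ b = 2) (hxb : S.tcol (N + 1) x = b) :
    (S.T^[S.hgt N + S.spa N] x).1 n ≠ none ∧
    (S.tcol N x ≠ 3 → S.tcol (N + 1) (S.T^[S.hgt N + S.spa N] x) = b) ∧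
    (S.tcol N x = 3 → S.tcol (N + 1) (S.T^[S.hgt N + S.spa N] x) = b + 1) ∧
    (∀ r, N + 1 < r → S.tcol r (S.T^[S.hgt N + S.spa N] x) = S.tcol r x) := by
  obtain ⟨w, hw, hvw⟩ := lev_exists hnN hn
  have hwl := lev_lt hw
  obtain ⟨hd, hu⟩ := lev_up hw
  obtain ⟨-, hu2⟩ := lev_up hu
  rw [hxb] at hu2
  have hH := hgt_succ (P := S.toNFCseq) N
  have hH1 := hgt_succ (P := S.toNFCseq) (N + 1)
  rw [hs] at hH1
  have main : ∀ δ ≤ 2, (S.T^[S.hgt N + S.spa N] x).1 N = some (w - δ) →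
    (S.T^[S.hgt N + S.spa N] x).1 n ≠ none := fun δ hδ h =>
      tower_of_low hnN hw hn h (by omega)
  rcases hd with ha | ha | ha
  · rw [ha] at hu hu2 ⊢
    have h1 := lev_iter (t := S.hgt N + S.spa N) hu (by simp; omega)
    refine ⟨main 0 (by omega) (lev_down (a := 2) (by simp [IsDig]) hwl ?_), fun _ => ?_, by simp,
      fun r hr => ?_⟩
    · rw [h1]; simp; omega
    · rw [(lev_iter_up le_rfl hu (by simp; omega)).choose_spec.2.2.2, hxb]
    · exact (lev_iter_up hr.le hu (by simp; omega)).choose_spec.2.2.2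
  · rw [ha] at hu hu2 ⊢
    have h1 := lev_iter (t := S.hgt N + S.spa N) hu (by simp; omega)
    refine ⟨main 1 (by omega) (lev_down (a := 3) (by simp [IsDig]) (by omega) ?_), fun _ => ?_,
      by simp, fun r hr => ?_⟩
    · rw [h1]; simp; omega
    · rw [(lev_iter_up le_rfl hu (by simp; omega)).choose_spec.2.2.2, hxb]
    · exact (lev_iter_up hr.le hu (by simp; omega)).choose_spec.2.2.2
  · rw [ha] at hu hu2 ⊢
    have hlt : S.off (N + 1) b + (S.off N 3 + w) + (S.hgt N + S.spa N) < S.hgt (N + 1 + 1) := by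
      rcases hb with rfl | rfl <;> simp [hs] <;> omega
    have h1 := lev_iter (t := S.hgt N + S.spa N) hu2 hlt
    have h2 : ∃ δ ≤ 1, (S.T^[S.hgt N + S.spa N] x).1 (N + 1 + 1)
        = some (S.off (N + 1) (b + 1) + (w - δ)) := by
      rcases hb with rfl | rfl
      · exact ⟨0, by omega, by rw [h1]; simp [hs]; omega⟩
      · exact ⟨1, by omega, by rw [h1]; simp [hs]; omega⟩
    obtain ⟨δ, hδ, h2⟩ := h2
    have hbd : IsDig (b + 1) := by rcases hb with rfl | rfl <;> simp [IsDig]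
    have h3 := lev_down hbd (by omega) h2
    refine ⟨main δ (by omega) (lev_down (a := 1) (by simp [IsDig]) (by omega)
      (by rw [h3]; simp)), by simp, fun _ => tcol_eq hbd (by omega) h2, fun r hr => ?_⟩
    exact (lev_iter_up hr hu2 hlt).choose_spec.2.2.2

/-- Effect of `T^{h_N + c h_R}` on the columns `N`, `N+1` when `h_R` spacers are inserted at
`N+1 = R+k+1`, and none are between `R` and `N`. -/
theorem shiftD {x : S.Xpt} {n R k K c v b p : ℕ} (hnR : n ≤ R)
    (h0 : ∀ r, R ≤ r → r < R + (k + 1) → S.spa r = 0) (hs : S.spa (R + k + 1) = S.hgt R)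
    (hn : x.1 n = some v) (hv : K + 3 ≤ v) (hb : b = 1 ∨ b = 2)
    (hxb : S.tcol (R + k + 1) x = b) (hc : 1 ≤ c) (hcK : c ≤ K)
    (hK : K * S.hgt R ≤ S.hgt (R + k)) (hp : x.1 (R + k + 1) = some p)
    (hgap : ¬ (S.hgt (R + k + 1) ≤ p + (S.hgt (R + k) + c * S.hgt R) ∧
      p + (S.hgt (R + k) + c * S.hgt R) < S.hgt (R + k + 1) + S.hgt R)) :
    (S.T^[S.hgt (R + k) + c * S.hgt R] x).1 n ≠ none ∧
    (S.tcol (R + k) x = 1 → S.tcol (R + k + 1) (S.T^[S.hgt (R + k) + c * S.hgt R] x) = b) ∧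
    (S.tcol (R + k) x = 3 → S.tcol (R + k + 1) (S.T^[S.hgt (R + k) + c * S.hgt R] x) = b + 1) ∧
    (S.tcol (R + k + 1) (S.T^[S.hgt (R + k) + c * S.hgt R] x) = b ∨
      S.tcol (R + k + 1) (S.T^[S.hgt (R + k) + c * S.hgt R] x) = b + 1) ∧
    (∀ r, R + k + 1 < r →
      S.tcol r (S.T^[S.hgt (R + k) + c * S.hgt R] x) = S.tcol r x) := by
  obtain ⟨vR, hvR, hvR'⟩ := lev_exists hnR hn
  obtain ⟨u, hu, -⟩ := lev_exists (show R ≤ R + k by omega) hvR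
  have hpru := pr_of_lev hu hvR
  have hvRl := lev_lt hvR
  have hul := lev_lt hu
  have hpl := lev_lt hp
  obtain ⟨hd, hup⟩ := lev_up hu
  obtain ⟨-, hup2⟩ := lev_up hp
  rw [hxb] at hup2
  have hsk := h0 (R + k) (by omega) (by omega)
  have hM : S.hgt (R + (k + 1)) = S.hgt (R + k + 1) := rfl
  have hH := hgt_succ (P := S.toNFCseq) (R + k)
  have hH1 := hgt_succ (P := S.toNFCseq) (R + k + 1)
  rw [hsk] at hH
  rw [hs] at hH1
  have hRk : S.hgt R ≤ S.hgt (R + k) := hgt_mono (by omega)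
  have hck : c * S.hgt R ≤ S.hgt (R + k) := (Nat.mul_le_mul_right _ hcK).trans hK
  have hpe : p = S.off (R + k) (S.tcol (R + k) x) + u := by
    rw [hp] at hup; exact Option.some.inj hup
  obtain ⟨c', rfl⟩ : ∃ c', c = c' + 1 := ⟨c - 1, by omega⟩
  have hcm : (c' + 1) * S.hgt R = c' * S.hgt R + S.hgt R := by ring
  have hprs : S.pr R (k + 1) u = some vR :=
    pr_succ_iff.2 ⟨1, u, by simp [IsDig], hul, by simp, hpru⟩
  have start : ∃ δ ≤ 2, S.ex R (k + 1) (p + S.hgt (R + k) + S.hgt R) = some (vR - δ) := by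
    have e1 : ∃ δ ≤ 1, S.tcol (R + k) x ≠ 3 →
        S.ex R (k + 1) (p + S.hgt (R + k)) = some (vR - δ) := by
      rcases hd with ha | ha | ha
      · rw [ha] at hpe ⊢
        simp only [off_one] at hpe
        refine ⟨0, by omega, fun _ => ?_⟩
        rw [ex, if_pos (by rw [hM]; omega)]
        exact pr_succ_iff.2 ⟨2, u, by simp [IsDig], hul, by simp [hsk]; omega, hpru⟩
      · rw [ha] at hpe ⊢
        simp only [off_two, hsk] at hpe
        have := pr_bounds hpru
        refine ⟨1, by omega, fun _ => ?_⟩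
        rw [ex, if_pos (by rw [hM]; omega)]
        exact pr_succ_iff.2 ⟨3, u - 1, by simp [IsDig], by omega, by simp [hsk]; omega,
          pr_shift hpru (by omega) (by omega)⟩
      · exact ⟨0, by omega, by simp [ha]⟩
    obtain ⟨δ, hδ, e1⟩ := e1
    by_cases ha : S.tcol (R + k) x = 3
    · rw [ha] at hpe
      simp only [off_three, hsk] at hpe
      refine ⟨0, by omega, ?_⟩
      rw [ex, if_neg (by rw [hM]; omega), if_neg (by rw [hM]; omega)]
      rw [show p + S.hgt (R + k) + S.hgt R - S.hgt (R + (k + 1)) - S.hgt R = u by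
        rw [hM]; omega]
      exact hprs
    · rcases ex_step h0 (e1 ha) (by omega) (by rw [hM]; omega) with h | h
      · exact ⟨δ, by omega, h⟩
      · exact ⟨δ + 1, by omega, by rw [h]; congr 1⟩
  obtain ⟨δ0, hδ0, start⟩ := start
  obtain ⟨δ1, hδ1, hex⟩ := ex_steps h0 (c := c') start (by omega) (by rw [hM]; omega)
  rw [show p + S.hgt (R + k) + S.hgt R + c' * S.hgt R =
    p + (S.hgt (R + k) + (c' + 1) * S.hgt R) by rw [hcm]; omega] at hex
  set t := S.hgt (R + k) + (c' + 1) * S.hgt R with ht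
  have htl : t = S.hgt (R + k) + (c' * S.hgt R + S.hgt R) := by rw [ht, hcm]
  have low : ∀ δ ≤ K + 2, (S.T^[t] x).1 R = some (vR - δ) → (S.T^[t] x).1 n ≠ none :=
    fun δ hδ h => tower_of_low hnR hvR hn h (by omega)
  by_cases hcr : p + t < S.hgt (R + k + 1)
  · have h3 : S.tcol (R + k) x ≠ 3 := by
      intro ha; rw [ha] at hpe; simp only [off_three, hsk] at hpe; omega
    have h4 := lev_iter hp hcr
    rw [ex, if_pos (by rw [hM]; exact hcr)] at hex
    have h5 := lev_of_pr (k := k + 1) h4 hex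
    have h6 := (lev_iter_up le_rfl hp hcr).choose_spec.2.2.2
    refine ⟨low (δ0 + δ1) (by omega) (by rw [h5]; congr 1; omega), fun _ => by rw [h6, hxb],
      fun h => absurd h h3, Or.inl (by rw [h6, hxb]), fun r hr =>
      (lev_iter_up hr.le hp hcr).choose_spec.2.2.2⟩
  · have hcr' : S.hgt (R + k + 1) + S.hgt R ≤ p + t := by omega
    have h1 : S.tcol (R + k) x ≠ 1 := by
      intro ha; rw [ha] at hpe; simp only [off_one] at hpe; omega
    rw [ex, if_neg (by rw [hM]; omega), if_neg (by rw [hM]; omega),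
      hM] at hex
    set q := p + t - S.hgt (R + k + 1) - S.hgt R with hq
    have hql := pr_bounds hex
    rw [hM] at hql
    have hbd : IsDig (b + 1) := by rcases hb with rfl | rfl <;> simp [IsDig]
    have hlt : S.off (R + k + 1) b + p + t < S.hgt (R + k + 1 + 1) := by
      rcases hb with rfl | rfl <;> simp [hs] <;> omega
    have h4 := lev_iter hup2 hlt
    have h5 : ∃ ε ≤ 1, (S.T^[t] x).1 (R + k + 1 + 1)
        = some (S.off (R + k + 1) (b + 1) + (q - ε)) := by
      rcases hb with rfl | rfl
      · exact ⟨0, by omega, by rw [h4]; simp [hs]; omega⟩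
      · exact ⟨1, by omega, by rw [h4]; simp [hs]; omega⟩
    obtain ⟨ε, hε, h5⟩ := h5
    have hqq : q < S.hgt (R + k + 1) := by omega
    have h6 := lev_down hbd (by omega) h5
    have h7 := lev_of_pr (k := k + 1) h6
      (pr_shift (j' := vR - δ0 - δ1 - ε) hex (by omega) (by omega))
    have h8 := tcol_eq hbd (by omega) h5
    exact ⟨low (δ0 + δ1 + ε) (by omega) (by rw [h7]; congr 1; omega), fun h => absurd h h1,
      fun _ => h8, Or.inr h8, fun r hr => (lev_iter_up hr hup2 hlt).choose_spec.2.2.2⟩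

end NFC

/-! ### Column patterns of points of `X^ι` -/

namespace NFC
open NFCseq

variable {S : NFC} {ι : Type}

/-- The Cartesian power `T^{×ι}`. -/
def TI (S : NFC) (ι : Type) : (ι → S.Xpt) → (ι → S.Xpt) := fun y i => S.T (y i)

theorem TI_iter (t : ℕ) (y : ι → S.Xpt) (i : ι) : ((TI S ι)^[t] y) i = S.T^[t] (y i) := by
  induction t generalizing y with
  | zero => rfl
  | succ t ih => rw [Function.iterate_succ_apply, ih, Function.iterate_succ_apply]; rfl

/-- `C_n^ι`. -/
def CI (S : NFC) (ι : Type) (n : ℕ) : Set (ι → S.Xpt) := {y | ∀ i, (y i).1 n ≠ none}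

theorem CI_mono {n m : ℕ} (h : n ≤ m) : CI S ι n ⊆ CI S ι m :=
  fun _ hy i => lev_ne_none h (hy i)

variable [Fintype ι]

/-- The points all of whose coordinates lie in tower `n`, away from its bottom and top. -/
def Om (S : NFC) (ι : Type) [Fintype ι] (n : ℕ) : Set (ι → S.Xpt) :=
  {y | ∀ i, ∃ v, (y i).1 n = some v ∧ Fintype.card ι + 4 ≤ v ∧ v + 2 ≤ S.hgt n}

/-- The coordinates of `y` lie in column `c` of tower `m` off `G`, and in column `c+1` on `G`. -/
def pat (m : ℕ) (G : Finset ι) (c : ℕ) (y : ι → S.Xpt) : Prop :=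
  ∀ i, S.tcol m (y i) = c + if i ∈ G then 1 else 0

/-- The coordinates occupy exactly two, consecutive, columns of tower `m`. -/
def narrow (m : ℕ) (y : ι → S.Xpt) : Prop :=
  ∃ G : Finset ι, G.Nonempty ∧ Gᶜ.Nonempty ∧ (pat m G 1 y ∨ pat m G 2 y)

/-- The coordinates occupy both outer columns of tower `m`. -/
def wide (m : ℕ) (y : ι → S.Xpt) : Prop :=
  (∃ i, S.tcol m (y i) = 1) ∧ ∃ i, S.tcol m (y i) = 3

theorem Om_sub_CI (n : ℕ) : Om S ι n ⊆ CI S ι n := by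
  intro y hy i
  obtain ⟨v, hv, -⟩ := hy i
  simp [hv]

theorem Om_mono {n m : ℕ} (h : n ≤ m) : Om S ι n ⊆ Om S ι m := by
  intro y hy i
  obtain ⟨v, hv, h1, h2⟩ := hy i
  obtain ⟨k, rfl⟩ := Nat.exists_eq_add_of_le h
  obtain ⟨w, hw, h3⟩ := lev_exists h hv
  have := pr_bounds (pr_of_lev hw hv)
  exact ⟨w, hw, by omega, by omega⟩

theorem narrow_of {m b : ℕ} {y : ι → S.Xpt} (hb : b = 1 ∨ b = 2)
    (h : ∀ i, S.tcol m (y i) = b ∨ S.tcol m (y i) = b + 1)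
    (h1 : ∃ i, S.tcol m (y i) = b) (h2 : ∃ i, S.tcol m (y i) = b + 1) : narrow m y := by
  refine ⟨Finset.univ.filter fun i => S.tcol m (y i) = b + 1, ?_, ?_, ?_⟩
  · obtain ⟨i, hi⟩ := h2
    exact ⟨i, by simp [hi]⟩
  · obtain ⟨i, hi⟩ := h1
    exact ⟨i, by simp [hi]⟩
  · have : pat m (Finset.univ.filter fun i => S.tcol m (y i) = b + 1) b y := by
      intro i
      rcases h i with h | h <;> simp [h]
    rcases hb with rfl | rfl
    · exact Or.inl this
    · exact Or.inr this

theorem const_or_narrow_or_wide {m : ℕ} {y : ι → S.Xpt} (h : ∀ i, IsDig (S.tcol m (y i))) :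
    (∃ b, IsDig b ∧ ∀ i, S.tcol m (y i) = b) ∨ narrow m y ∨ wide m y := by
  by_cases h1 : ∃ i, S.tcol m (y i) = 1
  · by_cases h3 : ∃ i, S.tcol m (y i) = 3
    · exact Or.inr (Or.inr ⟨h1, h3⟩)
    · by_cases h2 : ∃ i, S.tcol m (y i) = 2
      · refine Or.inr (Or.inl (narrow_of (b := 1) (by simp) (fun i => ?_) h1 h2))
        rcases h i with h | h | h
        · simp [h]
        · simp [h]
        · exact absurd ⟨i, h⟩ h3
      · refine Or.inl ⟨1, by simp [IsDig], fun i => ?_⟩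
        rcases h i with h | h | h
        · simp [h]
        · exact absurd ⟨i, h⟩ h2
        · exact absurd ⟨i, h⟩ h3
  · by_cases h2 : ∃ i, S.tcol m (y i) = 2
    · by_cases h3 : ∃ i, S.tcol m (y i) = 3
      · refine Or.inr (Or.inl (narrow_of (b := 2) (by simp) (fun i => ?_) h2 h3))
        rcases h i with h | h | h
        · exact absurd ⟨i, h⟩ h1
        · simp [h]
        · simp [h]
      · refine Or.inl ⟨2, by simp [IsDig], fun i => ?_⟩
        rcases h i with h | h | h
        · exact absurd ⟨i, h⟩ h1
        · simp [h]
        · exact absurd ⟨i, h⟩ h3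
    · refine Or.inl ⟨3, by simp [IsDig], fun i => ?_⟩
      rcases h i with h | h | h
      · exact absurd ⟨i, h⟩ h1
      · exact absurd ⟨i, h⟩ h2
      · simp [h]

/-- Each coordinate meets the forbidden interval of length `h` for at most one multiple of `h`, so
one of the first `|ι| + 1` multiples avoids it for all coordinates. -/
theorem exists_good_shift (A B h : ℕ) (p : ι → ℕ) :
    ∃ c, 1 ≤ c ∧ c ≤ Fintype.card ι + 1 ∧
      ∀ i, ¬ (A ≤ p i + (B + c * h) ∧ p i + (B + c * h) < A + h) := by
  by_contra hcon
  push Not at hcon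
  have hch : ∀ c, ∃ i : ι, 1 ≤ c → c ≤ Fintype.card ι + 1 →
      A ≤ p i + (B + c * h) ∧ p i + (B + c * h) < A + h := by
    intro c
    by_cases hc : 1 ≤ c ∧ c ≤ Fintype.card ι + 1
    · obtain ⟨i, hi⟩ := hcon c hc.1 hc.2
      exact ⟨i, fun _ _ => hi⟩
    · obtain ⟨i, -⟩ := hcon 1 le_rfl (by omega)
      exact ⟨i, fun h1 h2 => absurd ⟨h1, h2⟩ hc⟩
  choose f hf using hch
  obtain ⟨c, hc, c', hc', hne, he⟩ := Finset.exists_ne_map_eq_of_card_lt_of_maps_to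
    (s := Finset.Icc 1 (Fintype.card ι + 1)) (t := Finset.univ) (f := f)
    (by simp) (fun _ _ => by simp)
  simp only [Finset.mem_Icc] at hc hc'
  have a1 := hf c hc.1 hc.2
  have a2 := hf c' hc'.1 hc'.2
  rw [← he] at a2
  rcases lt_or_gt_of_ne hne with hl | hl
  · have : (c + 1) * h ≤ c' * h := Nat.mul_le_mul_right _ hl
    rw [add_mul, one_mul] at this
    omega
  · have : (c' + 1) * h ≤ c * h := Nat.mul_le_mul_right _ hl
    rw [add_mul, one_mul] at this
    omega

/-- A point whose column vector is wide at `N` and constant equal to `1` or `2` at `N+1` can be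
moved, by a power of `T` taken from a set of bounded size, to a point which is narrow at `N+1`,
with the same columns above. -/
theorem exists_narrowing (n : ℕ) : ∃ N1, ∀ N, N1 ≤ N → ∃ Ts : Finset ℕ,
    Ts.card ≤ Fintype.card ι + 1 ∧ ∀ (y : ι → S.Xpt) (b : ℕ), (b = 1 ∨ b = 2) → y ∈ Om S ι n →
      wide N y → (∀ i, S.tcol (N + 1) (y i) = b) → ∃ t ∈ Ts,
        (TI S ι)^[t] y ∈ CI S ι n ∧ narrow (N + 1) ((TI S ι)^[t] y) ∧
        ∀ r, N + 1 < r → ∀ i, S.tcol r (((TI S ι)^[t] y) i) = S.tcol r (y i) := by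
  set K := Fintype.card ι + 1 with hKdef
  set L0 := S.lseq (K + 1) + n + 1 with hL0
  refine ⟨S.nseq L0 + n, fun N hN => ?_⟩
  -- Without large spacers above tower `N + 1`, the shift by one copy of tower `N` suffices.
  by_cases hs : S.spa (N + 1) = 0
  · refine ⟨{S.hgt N + S.spa N}, by simp [hKdef], fun y b hb hy hw hc => ?_⟩
    refine ⟨_, Finset.mem_singleton_self _, ?_⟩
    choose v hv hv1 _ using hy
    have key := fun i => shiftB (show n ≤ N by omega) hs (hv i)
      (by have := hv1 i; omega) hb (hc i)
    refine ⟨fun i => by rw [TI_iter]; exact (key i).1, ?_, fun r hr i => by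
      rw [TI_iter]; exact (key i).2.2.2 r hr⟩
    obtain ⟨⟨i1, hi1⟩, i3, hi3⟩ := hw
    refine narrow_of hb (fun i => ?_) ⟨i1, ?_⟩ ⟨i3, ?_⟩ <;> rw [TI_iter]
    · by_cases h3 : S.tcol N (y i) = 3
      · exact Or.inr ((key i).2.2.1 h3)
      · exact Or.inl ((key i).2.1 h3)
    · exact (key i1).2.1 (by omega)
    · exact (key i3).2.2.1 hi3
  · obtain ⟨ℓ, hl, hlN⟩ := exists_of_spa hs
    have hlL : L0 ≤ ℓ := by
      by_contra hh
      have := nseq_strictMono (P := S.toNFCseq) (show ℓ < L0 by omega)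
      omega
    have hk1 : K + 1 ≤ S.kOf ℓ := le_kOf (by omega)
    have hk2 := kOf_le (P := S.toNFCseq) ℓ
    have hR := Rl_spec (P := S.toNFCseq) hl
    obtain ⟨k, hk⟩ : ∃ k, S.kOf ℓ = k + 1 := ⟨S.kOf ℓ - 1, by omega⟩
    set R := N - k with hRdef
    have hRk : R + k = N := by omega
    have hsp := spa_nseq (P := S.toNFCseq) hl
    rw [hlN, hk, show N + 1 - (k + 1) = R by omega] at hsp
    have h0 : ∀ r, R ≤ r → r < R + (k + 1) → S.spa r = 0 := by
      intro r h1 h2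
      exact spa_zero (ℓ := ℓ) (by omega) (by omega)
    -- Tower `N` is at least `3 ^ k` copies of tower `R`, which leaves room for `K` of them.
    have hKR : K * S.hgt R ≤ S.hgt (R + k) := by
      refine le_trans (Nat.mul_le_mul_right _ ?_) (three_pow_hgt R k)
      exact (show K ≤ k by omega).trans (Nat.lt_pow_self (by norm_num)).le
    refine ⟨(Finset.Icc 1 K).image fun c => S.hgt (R + k) + c * S.hgt R,
      Finset.card_image_le.trans (by simp), fun y b hb hy hw hc => ?_⟩
    have hp : ∀ i, ∃ p, (y i).1 (N + 1) = some p := fun i => by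
      obtain ⟨v, hv, -⟩ := hy i
      obtain ⟨p, hp, -⟩ := lev_exists (show n ≤ N + 1 by omega) hv
      exact ⟨p, hp⟩
    choose p hp using hp
    obtain ⟨c, hc1, hc2, hgap⟩ := exists_good_shift (S.hgt (N + 1)) (S.hgt N) (S.hgt R) p
    refine ⟨S.hgt (R + k) + c * S.hgt R, Finset.mem_image.2 ⟨c, by simp; omega, rfl⟩, ?_⟩
    choose v hv hv1 _ using hy
    have key := fun i => shiftD (K := K) (k := k) (p := p i) (b := b) (show n ≤ R by omega) h0
      (by rw [hRk]; exact hsp) (hv i) (by have := hv1 i; omega) hb (by rw [hRk]; exact hc i)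
      hc1 hc2 hKR (by rw [hRk]; exact hp i) (by rw [hRk]; exact hgap i)
    rw [hRk] at key ⊢
    refine ⟨fun i => by rw [TI_iter]; exact (key i).1, ?_, fun r hr i => by
      rw [TI_iter]; exact (key i).2.2.2.2 r hr⟩
    obtain ⟨⟨i1, hi1⟩, i3, hi3⟩ := hw
    refine narrow_of hb (fun i => ?_) ⟨i1, ?_⟩ ⟨i3, ?_⟩ <;> rw [TI_iter]
    · exact (key i).2.2.2.1
    · exact (key i1).2.1 hi1
    · exact (key i3).2.2.1 hi3

end NFC

/-! ### Good points -/

namespace NFC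
open NFCseq

variable {S : NFC}

/-- Effect of `T^{h_R}` on a point which is not in the last copy of tower `R` inside tower
`R+k`, when there are no large spacers in between. -/
theorem shiftC {x : S.Xpt} {n R k v p : ℕ} (hnR : n ≤ R) (hk : 1 ≤ k)
    (h0 : ∀ r, R ≤ r → r < R + k → S.spa r = 0)
    (hn : x.1 n = some v) (hv : 1 ≤ v) (hv' : v + 2 ≤ S.hgt n) (hp : x.1 (R + k) = some p)
    (hpR : p + S.hgt R < S.hgt (R + k)) :
    ∃ δ u, δ ≤ 1 ∧ x.1 R = some (u + δ) ∧ (S.T^[S.hgt R] x).1 R = some u ∧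
      (S.tcol R x = 1 → δ = 0 ∧ S.tcol R (S.T^[S.hgt R] x) = 2) ∧ (S.tcol R x = 2 → δ = 1) ∧
      (S.tcol R x = 3 → S.tcol R (S.T^[S.hgt R] x) = 1) ∧ (S.T^[S.hgt R] x).1 n ≠ none ∧
      ∀ r, R + k ≤ r → S.tcol r (S.T^[S.hgt R] x) = S.tcol r x := by
  obtain ⟨w, hw, hvw⟩ := lev_exists hnR hn
  have hbd := pr_bounds (n := n) (k := R - n) (J := w) (j := v)
    (pr_of_lev (by rw [Nat.add_sub_cancel' hnR]; exact hw) hn)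
  rw [Nat.add_sub_cancel' hnR] at hbd
  have hs := h0 R le_rfl (by omega)
  have hH := hgt_succ (P := S.toNFCseq) R
  rw [hs] at hH
  obtain ⟨hd, hu⟩ := lev_up hw
  have hup : ∀ r, R + k ≤ r → S.tcol r (S.T^[S.hgt R] x) = S.tcol r x :=
    fun r hr => (lev_iter_up hr hp hpR).choose_spec.2.2.2
  have low : ∀ δ ≤ 1, (S.T^[S.hgt R] x).1 R = some (w - δ) → (S.T^[S.hgt R] x).1 n ≠ none :=
    fun δ hδ h => tower_of_low hnR hw hn h (by omega)
  rcases hd with ha | ha | ha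
  · rw [ha] at hu ⊢
    have h1 := lev_iter (t := S.hgt R) hu (by simp; omega)
    have h2 : (S.T^[S.hgt R] x).1 (R + 1) = some (S.off R 2 + w) := by
      rw [h1]; simp [hs]; omega
    have h3 := lev_down (by simp [IsDig]) (lev_lt hw) h2
    exact ⟨0, w, by omega, hw, h3,
      fun _ => ⟨rfl, tcol_eq (by simp [IsDig]) (lev_lt hw) h2⟩, by simp, by simp,
      low 0 (by omega) h3, hup⟩
  · rw [ha] at hu ⊢
    have h1 := lev_iter (t := S.hgt R) hu (by simp [hs]; omega)
    have h2 : (S.T^[S.hgt R] x).1 (R + 1) = some (S.off R 3 + (w - 1)) := by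
      rw [h1]; simp [hs]; omega
    have h3 := lev_down (by simp [IsDig]) (by omega) h2
    exact ⟨1, w - 1, by omega, by rw [hw]; congr 1; omega, h3, by simp, by simp, by simp,
      low 1 (by omega) h3, hup⟩
  · rw [ha]
    have hz := lev_iter hp hpR
    have hst := (pr_step h0 (pr_of_lev hp hw) (by omega)).1 hpR
    have h3 : ∃ δ ≤ 1, (S.T^[S.hgt R] x).1 R = some (w - δ) := by
      rcases hst with h | h
      · exact ⟨0, by omega, lev_of_pr hz h⟩
      · exact ⟨1, by omega, lev_of_pr hz h⟩
    obtain ⟨δ, hδ, h3⟩ := h3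
    refine ⟨δ, w - δ, hδ, by rw [hw]; congr 1; omega, h3, by simp, by simp, fun _ => ?_,
      low δ hδ h3, hup⟩
    obtain ⟨hd', hu'⟩ := lev_up h3
    rcases hd' with hb | hb | hb
    · exact hb
    · exfalso
      rw [hb] at hu'
      have h4 := lev_of_iter (x := x) (j := w - δ) (t := S.hgt R)
        (hu'.trans (by simp [hs]; omega))
      have := tcol_eq (x := x) (n := R) (a := 1) (v := w - δ) (by simp [IsDig]) (by omega) (by rw [h4]; simp)
      omega
    · exfalso
      rw [hb] at hu'
      have h4 := lev_of_iter (x := x) (j := S.hgt R + (w - δ + 1)) (t := S.hgt R)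
        (hu'.trans (by simp [hs]; omega))
      have := tcol_eq (x := x) (n := R) (a := 2) (v := w - δ + 1) (by simp [IsDig]) (by omega)
        (by rw [h4]; simp [hs])
      omega

/-- The condition defining good positions at stage `ℓ`: the point is not in the last copy of tower
`R_ℓ` inside tower `n_ℓ`. -/
def okAt (ℓ : ℕ) (x : S.Xpt) : Prop :=
  ∃ p, x.1 (S.nseq ℓ) = some p ∧ p + S.hgt (S.Rl ℓ) < S.hgt (S.nseq ℓ)

/-- A set of points containing `X_∞` and defined by explicit measurable conditions. -/
def Good (x : S.Xpt) : Prop :=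
  (∀ D, ∃ n v, x.1 n = some v ∧ D ≤ v ∧ v + D ≤ S.hgt n) ∧ ∃ L, ∀ ℓ, L ≤ ℓ → okAt ℓ x

/-- Without large spacers between `R` and `R + k`, a point in the top `h_R` levels of tower `R + k`
lies in the last column of all the towers in between. -/
theorem all_three {x : S.Xpt} {R k p : ℕ} (h0 : ∀ r, R ≤ r → r < R + k → S.spa r = 0)
    (hp : x.1 (R + k) = some p) (hR : x.1 R ≠ none) (h : S.hgt (R + k) ≤ p + S.hgt R) :
    ∀ r, R ≤ r → r < R + k → S.tcol r x = 3 := by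
  induction k generalizing p with
  | zero => intro r h1 h2; omega
  | succ k ih =>
    obtain ⟨w, hw⟩ := Option.ne_none_iff_exists'.1
      (lev_ne_none (show R ≤ R + k by omega) hR)
    obtain ⟨hd, hu⟩ := lev_up hw
    have hwl := lev_lt hw
    have e : p = S.off (R + k) (S.tcol (R + k) x) + w := by
      have := hp.symm.trans hu; exact Option.some.inj this
    have hs := h0 (R + k) (by omega) (by omega)
    have hH := hgt_succ (P := S.toNFCseq) (R + k)
    have hM : S.hgt (R + (k + 1)) = S.hgt (R + k + 1) := rfl
    have hRk : S.hgt R ≤ S.hgt (R + k) := hgt_mono (by omega)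
    rw [hs] at hH
    have h3 : S.tcol (R + k) x = 3 := by
      rcases hd with ha | ha | ha
      · rw [ha, off_one] at e; omega
      · rw [ha, off_two, hs] at e; omega
      · exact ha
    rw [h3, off_three, hs] at e
    have := ih (fun r h1 h2 => h0 r h1 (by omega)) hw (by omega)
    intro r h1 h2
    rcases (show r < R + k ∨ r = R + k by omega) with h | rfl
    · exact this r h1 h
    · exact h3

theorem le_hgt (n : ℕ) : n < S.hgt n := by
  induction n with
  | zero => exact S.hgt_pos 0
  | succ n ih => rw [hgt_succ]; omega

theorem sum_three_pow (k : ℕ) : ∑ j ∈ Finset.range k, 2 * 3 ^ j + 1 = 3 ^ k := by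
  induction k with
  | zero => simp
  | succ k ih => rw [Finset.sum_range_succ, pow_succ]; omega

/-- Points of `X_∞` are good: a point outside the last occurrences of tower `R_ℓ` in tower `n_ℓ` is
not in the last copy, since there all columns would be `3`; a point outside the first occurrences
lies above the bottom copy, so that its level in tower `n_ℓ` is at least `h_{R_ℓ}`. -/
theorem Good_of {x : S.Xpt} (h : ∃ L, ∀ ℓ, L ≤ ℓ → ∀ n, S.nseq (ℓ - 1) ≤ n → n + ℓ ≤ S.nseq ℓ →
    x ∈ S.tower n ∧ ¬ S.inFirstHundred n (S.nseq ℓ) x ∧ ¬ S.inLastHundred n (S.nseq ℓ) x) :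
    Good x := by
  obtain ⟨L, hL⟩ := h
  have ok : ∀ ℓ, L + 1 ≤ ℓ → okAt ℓ x := by
    intro ℓ hl
    obtain ⟨hR1, hR2⟩ := Rl_spec (P := S.toNFCseq) (show 1 ≤ ℓ by omega)
    obtain ⟨ht, -, hlast⟩ := hL ℓ (by omega) (S.Rl ℓ) (by omega) (by omega)
    obtain ⟨p, hp⟩ := Option.ne_none_iff_exists'.1
      (lev_ne_none (show S.Rl ℓ ≤ S.nseq ℓ by omega) ht)
    refine ⟨p, hp, ?_⟩
    by_contra hc
    rw [← hR1] at hp hc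
    have h3 := all_three (fun r h1 h2 => spa_zero (ℓ := ℓ) (by omega) (by omega)) hp ht
      (by omega)
    apply hlast
    rw [inLastHundred, occIdx, Finset.sum_congr rfl fun r hr => by
      rw [h3 r (by simp at hr; omega) (by simp at hr; omega)],
      Finset.sum_Ico_eq_sum_range]
    simp only [Nat.add_sub_cancel_left]
    have := sum_three_pow (S.nseq ℓ - S.Rl ℓ)
    rw [show 3 - 1 = 2 from rfl]
    omega
  refine ⟨fun D => ?_, L + 1, ok⟩
  set ℓ := L + D + 1 with hl
  obtain ⟨p, hp, hp'⟩ := ok ℓ (by omega)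
  obtain ⟨hR1, hR2⟩ := Rl_spec (P := S.toNFCseq) (show 1 ≤ ℓ by omega)
  obtain ⟨ht, hfirst, -⟩ := hL ℓ (by omega) (S.Rl ℓ) (by omega) (by omega)
  have hDR := le_hgt (S := S) (S.Rl ℓ)
  refine ⟨S.nseq ℓ, p, hp, ?_, by omega⟩
  have hex : ∃ r, S.Rl ℓ ≤ r ∧ r < S.nseq ℓ ∧ S.tcol r x ≠ 1 := by
    by_contra hc
    push Not at hc
    apply hfirst
    rw [inFirstHundred, occIdx, Finset.sum_congr rfl fun r hr => by
      rw [hc r (by simp at hr; omega) (by simp at hr; omega)]]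
    simp
  obtain ⟨r, h1, h2, h3⟩ := hex
  obtain ⟨w, hw⟩ := Option.ne_none_iff_exists'.1 (lev_ne_none h1 ht)
  obtain ⟨hd, hu⟩ := lev_up hw
  obtain ⟨p', hp1, hp2⟩ := lev_exists (show r + 1 ≤ S.nseq ℓ by omega) hu
  have e : p = p' := by have := hp.symm.trans hp1; exact Option.some.inj this
  have hh : S.hgt (S.Rl ℓ) ≤ S.hgt r := hgt_mono h1
  rcases hd with ha | ha | ha
  · exact absurd ha h3
  · rw [ha, off_two] at hp2; omega
  · rw [ha, off_three] at hp2; omega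

/-! ### Measurability of the tower coordinates -/

/-- The discrete σ-algebra on the level indices. -/
instance optionNatMeas : MeasurableSpace (Option ℕ) := ⊤

theorem measurable_lev (n : ℕ) : Measurable fun x : S.Xpt => x.1 n := by
  have : DiscreteTopology (Option ℕ) := ⟨rfl⟩
  have : BorelSpace (S.Xpt) := ⟨rfl⟩
  have : Continuous fun x : S.Xpt => x.1 n := (continuous_apply n).comp continuous_subtype_val
  intro s _
  exact (this.isOpen_preimage s (isOpen_discrete s)).measurableSet

theorem meas_lev {ι : Type} [Fintype ι] (n : ℕ) (Q : (ι → Option ℕ) → Prop) :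
    Measurable fun y : ι → S.Xpt => Q fun i => (y i).1 n := by
  have h : Measurable fun (y : ι → S.Xpt) (i : ι) => (y i).1 n :=
    measurable_pi_lambda _ fun i => (measurable_lev n).comp (measurable_pi_apply i)
  exact measurable_from_top (α := ι → Option ℕ) (f := Q) |>.comp (by
    intro s _
    exact h (Set.to_countable s).measurableSet)

theorem meas_tcol {ι : Type} [Fintype ι] (n : ℕ) (Q : (ι → ℕ) → Prop) :
    Measurable fun y : ι → S.Xpt => Q fun i => S.tcol n (y i) :=
  meas_lev (S := S) (n + 1) fun v => Q fun i => match v i with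
    | none => 0
    | some j =>
      if j < S.hgt n + S.spa n then 1
      else if j < 2 * S.hgt n + 2 * S.spa n + 1 then 2
      else 3

variable {ι : Type}

theorem measurable_TI : Measurable (TI S ι) :=
  measurable_pi_lambda _ fun i => S.T_meas.comp (measurable_pi_apply i)

variable [Fintype ι]

theorem measurableSet_CI (n : ℕ) : MeasurableSet (CI S ι n) :=
  measurableSet_setOfPred.2 (meas_lev n fun v => ∀ i, v i ≠ none)

theorem measurableSet_Om (n : ℕ) : MeasurableSet (Om S ι n) :=
  measurableSet_setOfPred.2 (meas_lev n fun v => ∀ i, ∃ w, v i = some w ∧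
    Fintype.card ι + 4 ≤ w ∧ w + 2 ≤ S.hgt n)

theorem measurable_pat (m : ℕ) (G : Finset ι) (c : ℕ) :
    Measurable fun y : ι → S.Xpt => pat m G c y :=
  meas_tcol m fun v => ∀ i, v i = c + if i ∈ G then 1 else 0

theorem measurable_narrow (m : ℕ) : Measurable fun y : ι → S.Xpt => narrow m y :=
  meas_tcol m fun v => ∃ G : Finset ι, G.Nonempty ∧ Gᶜ.Nonempty ∧
    ((∀ i, v i = 1 + if i ∈ G then 1 else 0) ∨ (∀ i, v i = 2 + if i ∈ G then 1 else 0))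

theorem measurable_wide (m : ℕ) : Measurable fun y : ι → S.Xpt => wide m y :=
  meas_tcol m fun v => (∃ i, v i = 1) ∧ ∃ i, v i = 3

theorem measurable_okAt (ℓ : ℕ) : Measurable fun y : ι → S.Xpt => ∀ i, okAt ℓ (y i) :=
  meas_lev (S.nseq ℓ) fun v => ∀ i, ∃ p, v i = some p ∧ p + S.hgt (S.Rl ℓ) < S.hgt (S.nseq ℓ)

theorem exists_Om {y : ι → S.Xpt} (h4 : ∀ i, Good (y i)) : ∃ n, y ∈ Om S ι n := by
  have h5 := fun i => (h4 i).1 (Fintype.card ι + 4)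
  choose m v hm hv hv' using h5
  refine ⟨Finset.univ.sup m, fun i => ?_⟩
  have hle : m i ≤ Finset.univ.sup m := Finset.le_sup (Finset.mem_univ i)
  obtain ⟨k, hk⟩ := Nat.exists_eq_add_of_le hle
  obtain ⟨w, hw, -⟩ := lev_exists hle (hm i)
  rw [hk] at hw ⊢
  have := pr_bounds (pr_of_lev hw (hm i))
  have := hv i; have := hv' i
  exact ⟨w, hw, by omega, by omega⟩

/-- Along `T^{h_{R_ℓ}}`, a wide point either becomes narrow at `R_ℓ`, or has its coordinates
displaced differently. -/
theorem stageC {ℓ n : ℕ} (hl : 1 ≤ ℓ) (hn : n ≤ S.Rl ℓ) {y : ι → S.Xpt} (hy : y ∈ Om S ι n)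
    (hw : wide (S.Rl ℓ) y) (hok : ∀ i, okAt ℓ (y i)) :
    (TI S ι)^[S.hgt (S.Rl ℓ)] y ∈ CI S ι n ∧
    (∀ r, S.nseq ℓ ≤ r → ∀ i, S.tcol r (((TI S ι)^[S.hgt (S.Rl ℓ)] y) i) = S.tcol r (y i)) ∧
    (narrow (S.Rl ℓ) ((TI S ι)^[S.hgt (S.Rl ℓ)] y) ∨
      ∃ G : Finset ι, G.Nonempty ∧ Gᶜ.Nonempty ∧ ∀ i, ∃ u,
        (y i).1 (S.Rl ℓ) = some (u + if i ∈ G then 1 else 0) ∧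
        (((TI S ι)^[S.hgt (S.Rl ℓ)] y) i).1 (S.Rl ℓ) = some u) := by
  obtain ⟨hR1, hR2⟩ := Rl_spec (P := S.toNFCseq) hl
  choose v hv hv1 hv2 using hy
  choose p hp hp' using hok
  have key := fun i => shiftC (p := p i) hn hl
    (fun r h1 h2 => spa_zero (ℓ := ℓ) (by omega) (by omega)) (hv i) (by have := hv1 i; omega)
    (hv2 i) (by rw [hR1]; exact hp i) (by rw [hR1]; exact hp' i)
  rw [hR1] at key
  choose δ u h1 h2 h3 h4 h5 h6 h7 h8 using key
  obtain ⟨⟨i1, hi1⟩, i3, hi3⟩ := hw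
  refine ⟨fun i => by rw [TI_iter]; exact h7 i, fun r hr i => by rw [TI_iter]; exact h8 i r hr, ?_⟩
  -- A coordinate in column `2` drops by one level while one in column `1` does not. If no coordinate
  -- is in column `2`, the columns `1` and `3` become `2` and `1`.
  by_cases hfull : ∃ i, S.tcol (S.Rl ℓ) (y i) = 2
  · right
    obtain ⟨i2, hi2⟩ := hfull
    refine ⟨Finset.univ.filter fun i => δ i = 1, ⟨i2, by simp [h5 i2 hi2]⟩,
      ⟨i1, by simp [(h4 i1 hi1).1]⟩, fun i => ⟨u i, ?_, by rw [TI_iter]; exact h3 i⟩⟩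
    rw [h2 i]
    rcases (show δ i = 0 ∨ δ i = 1 by have := h1 i; omega) with h | h <;> simp [h]
  · left
    refine narrow_of (b := 1) (by simp) (fun i => ?_) ⟨i3, ?_⟩ ⟨i1, ?_⟩
    · rw [TI_iter]
      rcases (lev_up (h2 i)).1 with h | h | h
      · exact Or.inr (h4 i h).2
      · exact absurd ⟨i, h⟩ hfull
      · exact Or.inl (h6 i h)
    · rw [TI_iter]; exact h6 i3 hi3
    · rw [TI_iter]; exact (h4 i1 hi1).2

end NFC

/-! ### Twists and mutual singularity -/

namespace NFC
open NFCseq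

variable {S : NFC} {ι : Type}

theorem borel_optionNat : BorelSpace (Option ℕ) := by
  have : DiscreteTopology (Option ℕ) := ⟨rfl⟩
  constructor
  refine le_antisymm (fun s _ => ?_) le_top
  exact MeasurableSpace.measurableSet_generateFrom (isOpen_discrete s)

theorem measSpace_eq (P : NFCseq) :
    (inferInstance : MeasurableSpace P.Xpt) = Subtype.instMeasurableSpace := by
  have : DiscreteTopology (Option ℕ) := ⟨rfl⟩
  have := borel_optionNat
  have h : @BorelSpace P.Xpt _ Subtype.instMeasurableSpace := Subtype.borelSpace _
  exact h.measurable_eq.symm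

/-- `X` is a Borel subset of the Polish space `ℕ → Option ℕ`; this makes injective measurable maps
measurable embeddings. -/
instance standardBorel_Xpt (P : NFCseq) : StandardBorelSpace P.Xpt := by
  have : DiscreteTopology (Option ℕ) := ⟨rfl⟩
  have := borel_optionNat
  have : PolishSpace (Option ℕ) := inferInstance
  have h : MeasurableSet {x : ℕ → Option ℕ | P.Xspec x} := by
    rw [measurableSet_setOfPred]
    refine Measurable.and ?_ ?_
    · refine Measurable.forall fun n => ?_
      have hm : Measurable fun x : ℕ → Option ℕ => (x n, x (n + 1)) :=
        (measurable_pi_apply n).prodMk (measurable_pi_apply (n + 1))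
      exact measurableSet_setOfPred.1
        (hm (Set.to_countable {p : Option ℕ × Option ℕ | p.1 = p.2.bind (P.pmap n)}).measurableSet)
    · refine Measurable.exists fun n => ?_
      exact (measurable_from_top (α := Option ℕ)
        (f := fun p => p ≠ none)).comp (measurable_pi_apply n)
  have := h.standardBorel
  have e := measSpace_eq P
  rw [show (instMeasurableSpaceXpt P) = Subtype.instMeasurableSpace from e]
  exact this

/-- `S_G`: apply `T` to the coordinates in `G`, and the identity to the others. -/
def SG (S : NFC) (G : Finset ι) : (ι → S.Xpt) → (ι → S.Xpt) :=
  fun y i => if i ∈ G then S.T (y i) else y i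

theorem measurable_SG (G : Finset ι) : Measurable (SG S G) := by
  refine measurable_pi_lambda _ fun i => ?_
  unfold SG
  by_cases h : i ∈ G
  · simp only [h, if_true]
    exact S.T_meas.comp (measurable_pi_apply i)
  · simp only [h, if_false]
    exact measurable_pi_apply i

/-- The algebra of sets determined by the positions in a single tower. -/
def cyl (S : NFC) (ι : Type) : Set (Set (ι → S.Xpt)) :=
  {U | ∃ (n : ℕ) (Q : (ι → Option ℕ) → Prop), U = {y | Q fun i => (y i).1 n}}

/-- A condition on tower `n` is a condition on any higher tower. -/
theorem cyl_lift {n m : ℕ} (h : n ≤ m) (Q : (ι → Option ℕ) → Prop) :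
    ∃ Q' : (ι → Option ℕ) → Prop, ∀ y : ι → S.Xpt, Q' (fun i => (y i).1 m) ↔
      Q fun i => (y i).1 n := by
  obtain ⟨k, rfl⟩ := Nat.exists_eq_add_of_le h
  refine ⟨fun v => Q fun i => (v i).bind (S.pr n k), fun y => ?_⟩
  rw [show (fun i => (y i).1 n) = fun i => ((y i).1 (n + k)).bind (S.pr n k) from
    funext fun i => lev_pr _ _ _]

theorem cyl_algebra : IsSetAlgebra (cyl S ι) where
  empty_mem := ⟨0, fun _ => False, by simp⟩
  compl_mem := by
    rintro _ ⟨n, Q, rfl⟩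
    exact ⟨n, fun v => ¬ Q v, rfl⟩
  union_mem := by
    rintro _ _ ⟨n, Q, rfl⟩ ⟨m, R, rfl⟩
    obtain ⟨Q', hQ⟩ := cyl_lift (S := S) (le_max_left n m) Q
    obtain ⟨R', hR⟩ := cyl_lift (S := S) (le_max_right n m) R
    refine ⟨max n m, fun v => Q' v ∨ R' v, ?_⟩
    ext y
    simp [hQ, hR]

variable [Fintype ι]

theorem cyl_meas {U : Set (ι → S.Xpt)} (h : U ∈ cyl S ι) : MeasurableSet U := by
  obtain ⟨n, Q, rfl⟩ := h
  exact measurableSet_setOfPred.2 (meas_lev n Q)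

/-- The sets determined by one tower generate the σ-algebra of `X^ι`. -/
theorem cyl_generate :
    (inferInstance : MeasurableSpace (ι → S.Xpt)) = MeasurableSpace.generateFrom (cyl S ι) := by
  refine le_antisymm ?_ (MeasurableSpace.generateFrom_le fun U hU => cyl_meas hU)
  have h : @Measurable (ι → S.Xpt) (ι → S.Xpt) (MeasurableSpace.generateFrom (cyl S ι))
      MeasurableSpace.pi id := by
    refine @measurable_pi_lambda _ _ _ (MeasurableSpace.generateFrom (cyl S ι)) _ _ fun i => ?_
    rw [show (instMeasurableSpaceXpt S.toNFCseq) = Subtype.instMeasurableSpace from measSpace_eq _]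
    refine @Measurable.subtype_mk _ _ (MeasurableSpace.generateFrom (cyl S ι)) _ _
      (fun y => (y i).1) ?_ (fun y => (y i).2)
    refine @measurable_pi_lambda _ _ _ (MeasurableSpace.generateFrom (cyl S ι)) _ _ fun n => ?_
    intro s _
    exact MeasurableSpace.measurableSet_generateFrom ⟨n, fun v => v i ∈ s, rfl⟩
  intro s hs
  exact h hs

theorem TI_emb : MeasurableEmbedding (TI S ι) :=
  measurable_TI.measurableEmbedding fun _ _ h => funext fun i => S.T_inj (congrFun h i)

/-- If a fixed amount of mass can be transported by powers of `T^{×ι}` so that positions in the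
towers are lowered by one exactly on `G`, then `σ` and its image by `S_G` are not mutually
singular. -/
theorem twist_not_singular (σ : Measure (ι → S.Xpt)) (hT : MeasurePreserving (TI S ι) σ σ)
    (n : ℕ) (hfin : σ (CI S ι n) ≠ ⊤) (G : Finset ι) (c : ℝ≥0∞) (hc : c ≠ 0)
    (h : ∀ n', n ≤ n' → ∃ (E F : ℕ → Set (ι → S.Xpt)) (t : ℕ → ℕ),
      (∀ j, MeasurableSet (E j)) ∧ (∀ j, MeasurableSet (F j)) ∧
      (∀ j, E j ⊆ CI S ι n) ∧ (∀ j, F j ⊆ CI S ι n) ∧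
      Pairwise (Function.onFun Disjoint E) ∧ Pairwise (Function.onFun Disjoint F) ∧
      (∀ j, ∀ y ∈ E j, (TI S ι)^[t j] y ∈ F j ∧ ∀ i, ∃ u,
        (y i).1 n' = some (u + if i ∈ G then 1 else 0) ∧
        (((TI S ι)^[t j] y) i).1 n' = some u) ∧ c ≤ ∑' j, σ (E j)) :
    ¬ Measure.MutuallySingular σ (σ.map (SG S G)) := by
  rintro ⟨s, hs, h1, h2⟩
  have hSG := measurable_SG (S := S) G
  rw [Measure.map_apply hSG hs.compl] at h2
  have hCm := measurableSet_CI (S := S) (ι := ι) n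
  set C := CI S ι n with hC
  have : IsFiniteMeasure (σ.restrict C) := ⟨by rw [Measure.restrict_apply_univ]; exact hfin.lt_top⟩
  set ρ := σ.restrict C + (σ.restrict C).map (SG S G) with hρ
  obtain ⟨ε, hε0, hε⟩ := ENNReal.lt_iff_exists_nnreal_btwn.1 (ENNReal.half_pos hc)
  have hε0' : 0 < (ε : ℝ) := by exact_mod_cast hε0
  -- `sᶜ` carries `σ` and is null for its image; `U` approximates it and depends on one tower only.
  obtain ⟨U, hU, happ⟩ := (Measure.MeasureDense.of_generateFrom_isSetAlgebra_finite (μ := ρ)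
    cyl_algebra cyl_generate).approx sᶜ hs.compl (measure_ne_top _ _) ε hε0'
  rw [ENNReal.ofReal_coe_nnreal] at happ
  have hUm := cyl_meas hU
  obtain ⟨n0, Q, rfl⟩ := hU
  set U := {y : ι → S.Xpt | Q fun i => (y i).1 n0} with hUdef
  obtain ⟨Q', hQ'⟩ := cyl_lift (S := S) (le_max_right n n0) Q
  obtain ⟨E, F, t, hE, hF, hEC, hFC, hEd, hFd, hEF, hsum⟩ := h (max n n0) (le_max_left _ _)
  -- `T^{t j} y` followed by the twist is at the position of `y`, so `U` does not distinguish them.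
  have hiff : ∀ j, ∀ y ∈ E j, (y ∈ U ↔ SG S G ((TI S ι)^[t j] y) ∈ U) := by
    intro j y hy
    have : (fun i => (y i).1 (max n n0)) =
        fun i => (SG S G ((TI S ι)^[t j] y) i).1 (max n n0) := by
      funext i
      obtain ⟨u, hu1, hu2⟩ := (hEF j y hy).2 i
      unfold SG
      by_cases hi : i ∈ G
      · simp only [hi, if_true] at hu1 ⊢
        rw [hu1]
        exact (lev_iter (t := 1) hu2 (lev_lt hu1)).symm
      · simp only [hi, if_false] at hu1 ⊢
        rw [hu1, hu2]; rfl
    rw [hUdef, mem_ofPred_eq, mem_ofPred_eq, ← hQ', ← hQ', this]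
  have b1 : σ (C \ U) ≤ ε := by
    calc σ (C \ U) ≤ σ ((C ∩ (sᶜ \ U)) ∪ s) := by
          apply measure_mono
          intro y hy
          by_cases hys : y ∈ s
          · exact Or.inr hys
          · exact Or.inl ⟨hy.1, hys, hy.2⟩
      _ ≤ σ (C ∩ (sᶜ \ U)) + σ s := measure_union_le _ _
      _ = σ.restrict C (sᶜ \ U) := by
          rw [h1, add_zero, Measure.restrict_apply (hs.compl.diff hUm), inter_comm]
      _ ≤ ρ (sᶜ \ U) := by rw [hρ, Measure.add_apply]; exact le_self_add
      _ ≤ ρ (symmDiff sᶜ U) := measure_mono (fun y hy => Or.inl hy)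
      _ ≤ ε := happ.le
  have b2 : σ (C ∩ SG S G ⁻¹' U) ≤ ε := by
    calc σ (C ∩ SG S G ⁻¹' U) ≤ σ ((C ∩ SG S G ⁻¹' (U \ sᶜ)) ∪ SG S G ⁻¹' sᶜ) := by
          apply measure_mono
          intro y hy
          by_cases hys : SG S G y ∈ s
          · exact Or.inl ⟨hy.1, hy.2, fun h => h hys⟩
          · exact Or.inr hys
      _ ≤ σ (C ∩ SG S G ⁻¹' (U \ sᶜ)) + σ (SG S G ⁻¹' sᶜ) := measure_union_le _ _
      _ = (σ.restrict C).map (SG S G) (U \ sᶜ) := by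
          rw [h2, add_zero, Measure.map_apply hSG (hUm.diff hs.compl),
            Measure.restrict_apply (hSG (hUm.diff hs.compl)), inter_comm]
      _ ≤ ρ (U \ sᶜ) := by rw [hρ, Measure.add_apply]; exact le_add_self
      _ ≤ ρ (symmDiff sᶜ U) := measure_mono (fun y hy => Or.inr hy)
      _ ≤ ε := happ.le
  have b3 : ∀ j, σ (E j) ≤ σ (E j \ U) + σ (F j ∩ SG S G ⁻¹' U) := by
    intro j
    have hp := hT.iterate (t j)
    calc σ (E j) ≤ σ ((E j \ U) ∪ ((TI S ι)^[t j]) ⁻¹' (F j ∩ SG S G ⁻¹' U)) := by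
          apply measure_mono
          intro y hy
          by_cases hyU : y ∈ U
          · exact Or.inr ⟨(hEF j y hy).1, (hiff j y hy).1 hyU⟩
          · exact Or.inl ⟨hy, hyU⟩
      _ ≤ _ := measure_union_le _ _
      _ = _ := by rw [hp.measure_preimage ((hF j).inter (hSG hUm)).nullMeasurableSet]
  have b4 : ∑' j, σ (E j \ U) ≤ σ (C \ U) := by
    rw [← measure_iUnion (fun i j hij => (hEd hij).mono sdiff_subset sdiff_subset)
      (fun j => (hE j).diff hUm)]
    exact measure_mono (iUnion_subset fun j => sdiff_subset_sdiff_left (hEC j))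
  have b5 : ∑' j, σ (F j ∩ SG S G ⁻¹' U) ≤ σ (C ∩ SG S G ⁻¹' U) := by
    rw [← measure_iUnion (fun i j hij => (hFd hij).mono inter_subset_left inter_subset_left)
      (fun j => (hF j).inter (hSG hUm))]
    exact measure_mono (iUnion_subset fun j => inter_subset_inter_left _ (hFC j))
  have : c ≤ ε + ε := by
    calc c ≤ ∑' j, σ (E j) := hsum
      _ ≤ ∑' j, (σ (E j \ U) + σ (F j ∩ SG S G ⁻¹' U)) := ENNReal.tsum_le_tsum b3
      _ = _ := ENNReal.tsum_add
      _ ≤ ε + ε := add_le_add (b4.trans b1) (b5.trans b2)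
  have h' : (ε : ℝ≥0∞) + ε < c := by
    calc (ε : ℝ≥0∞) + ε < c / 2 + c / 2 := ENNReal.add_lt_add hε hε
      _ = c := ENNReal.add_halves c
  exact absurd this (not_le.2 h')

end NFC

/-! ### Narrow positions force a twist -/

namespace NFC
open NFCseq

variable {S : NFC} {ι : Type}

/-- `T^{h_N + s_N}` moves column `1` to column `2` without changing the position in tower `N`
(`δ = 0`), and column `2` to column `3` at the cost of one level (`δ = 1`), because of the additional
spacer above the middle column. -/
theorem narrow_shift {x : S.Xpt} {n N v δ : ℕ} (hnN : n ≤ N) (hδ : δ ≤ 1) (hx : x.1 n = some v)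
    (hv : δ ≤ v) (ht : S.tcol N x = 1 + δ) :
    (S.T^[S.hgt N + S.spa N] x).1 n = some (v - δ) ∧
    S.tcol N (S.T^[S.hgt N + S.spa N] x) = 2 + δ ∧
    ∀ r, n ≤ r → r < N → S.tcol r (S.T^[S.hgt N + S.spa N] x) = S.tcol r x := by
  obtain ⟨w, hw, hvw⟩ := lev_exists hnN hx
  obtain ⟨hd, hu⟩ := lev_up hw
  have hlt := lev_lt hw
  have hd2 : IsDig (2 + δ) := by unfold IsDig; omega
  have e : S.off N (1 + δ) + w + (S.hgt N + S.spa N) = S.off N (2 + δ) + (w - δ) := by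
    obtain rfl | rfl : δ = 0 ∨ δ = 1 := by omega
    · simp; omega
    · simp; omega
  rw [ht] at hu
  have hb := off_add_lt (P := S.toNFCseq) (n := N) (a := 2 + δ) (show w - δ < S.hgt N by omega)
  have hz := lev_iter hu (by rw [e]; exact hb)
  rw [e] at hz
  have hzN := lev_down hd2 (by omega) hz
  have hvl := lev_lt hx
  refine ⟨two_pts_low hnN hw hzN hx (by omega) hv, tcol_eq hd2 (by omega) hz, fun r h1 h2 => ?_⟩
  exact (two_pts (j' := v - δ) h1 h2.le hw hzN hx (by omega) (by omega)).2 h2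

/-- The converse of `narrow_shift`. -/
theorem narrow_unshift {x : S.Xpt} {n N v δ : ℕ} (hnN : n ≤ N) (hδ : δ ≤ 1)
    (hx : (S.T^[S.hgt N + S.spa N] x).1 n = some v) (hv : v + δ < S.hgt n)
    (ht : S.tcol N (S.T^[S.hgt N + S.spa N] x) = 2 + δ) :
    x.1 n = some (v + δ) ∧ S.tcol N x = 1 + δ ∧
    ∀ r, n ≤ r → r < N → S.tcol r x = S.tcol r (S.T^[S.hgt N + S.spa N] x) := by
  set z := S.T^[S.hgt N + S.spa N] x with hz
  obtain ⟨w, hw, hvw⟩ := lev_exists hnN hx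
  obtain ⟨hd, hu⟩ := lev_up hw
  have hlt : w + δ < S.hgt N := by
    obtain ⟨k, rfl⟩ := Nat.exists_eq_add_of_le hnN
    have := pr_bounds (pr_of_lev hw hx)
    omega
  have hd2 : IsDig (1 + δ) := by unfold IsDig; omega
  have e : S.off N (2 + δ) + w = S.off N (1 + δ) + (w + δ) + (S.hgt N + S.spa N) := by
    obtain rfl | rfl : δ = 0 ∨ δ = 1 := by omega
    · simp; omega
    · simp; omega
  rw [ht, e] at hu
  have hx' := lev_of_iter hu
  have hxN := lev_down hd2 hlt hx'
  obtain ⟨⟨q, q', h1, h2, h3⟩, -⟩ :=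
    two_pts (j' := v + δ) le_rfl hnN hw hxN hx (by omega) hv
  rw [hx] at h1
  have := Option.some.inj h1
  refine ⟨by rw [h2]; congr 1; omega, tcol_eq hd2 hlt hx', fun r h1 h2 => ?_⟩
  exact (two_pts (j' := v + δ) h1 h2.le hw hxN hx (by omega) hv).2 h2

theorem pairwise_first {α : Type*} {P : ℕ → Set α}
    (h : ∀ a b, a < b → ∀ y, y ∈ P a → y ∈ P b → False) :
    Pairwise (Function.onFun Disjoint P) := by
  intro a b hab
  refine Set.disjoint_left.2 fun y h1 h2 => ?_
  rcases lt_or_gt_of_ne hab with h' | h'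
  · exact h a b h' y h1 h2
  · exact h b a h' y h2 h1

variable [Fintype ι]

/-- No tower `r` with `N0 ≤ r < N` shows the coordinates of `y` in two consecutive columns, the
right-hand one exactly on `G`. -/
def fstPat (N0 N : ℕ) (G : Finset ι) (y : ι → S.Xpt) : Prop :=
  ∀ r, N0 ≤ r → r < N → ¬ (pat r G 1 y ∨ pat r G 2 y)

theorem measurable_fstPat (N0 N : ℕ) (G : Finset ι) :
    Measurable fun y : ι → S.Xpt => fstPat N0 N G y := by
  unfold fstPat
  refine Measurable.forall fun r => Measurable.imp measurable_const (Measurable.imp measurable_const ?_)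
  exact ((measurable_pat r G 1).or (measurable_pat r G 2)).not

/-- If the coordinates occupy two consecutive columns, the right-hand one exactly on `G`, for
infinitely many towers, then `σ` and its image by `S_G` are not mutually singular: moving from
the columns `1, 2` to the columns `2, 3` costs one level exactly on `G`. -/
theorem stageA (σ : Measure (ι → S.Xpt)) (hT : MeasurePreserving (TI S ι) σ σ)
    (n : ℕ) (hfin : σ (CI S ι n) ≠ ⊤) (G : Finset ι)
    (h : σ {y | y ∈ Om S ι n ∧ ∃ᶠ N in atTop, pat N G 1 y ∨ pat N G 2 y} ≠ 0) :
    ¬ Measure.MutuallySingular σ (σ.map (SG S G)) := by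
  set A := {y | y ∈ Om S ι n ∧ ∃ᶠ N in atTop, pat N G 1 y ∨ pat N G 2 y} with hA
  refine twist_not_singular σ hT n hfin G (σ A / 2) (by simpa using h) fun n' hn' => ?_
  -- `E j`, `F j`: the pattern first appears in tower `n' + j`, in columns `1, 2`, resp. `2, 3`.
  set E : ℕ → Set (ι → S.Xpt) := fun j => {y | y ∈ CI S ι n ∧ fstPat n' (n' + j) G y ∧
    pat (n' + j) G 1 y ∧ ∀ i ∈ G, (y i).1 n ≠ some 0} with hE
  set F : ℕ → Set (ι → S.Xpt) := fun j => {y | y ∈ CI S ι n ∧ fstPat n' (n' + j) G y ∧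
    pat (n' + j) G 2 y} with hF
  set t : ℕ → ℕ := fun j => S.hgt (n' + j) + S.spa (n' + j) with ht
  have hEm : ∀ j, MeasurableSet (E j) := fun j => (measurableSet_CI n).inter
    ((measurableSet_setOfPred.2 (measurable_fstPat _ _ G)).inter
      ((measurableSet_setOfPred.2 (measurable_pat _ G 1)).inter
        (measurableSet_setOfPred.2 (meas_lev n fun v => ∀ i ∈ G, v i ≠ some 0))))
  have hFm : ∀ j, MeasurableSet (F j) := fun j => (measurableSet_CI n).inter
    ((measurableSet_setOfPred.2 (measurable_fstPat _ _ G)).inter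
      (measurableSet_setOfPred.2 (measurable_pat _ G 2)))
  have hδ : ∀ i, (if i ∈ G then 1 else 0) ≤ 1 := fun i => by split_ifs <;> omega
  refine ⟨E, F, t, hEm, hFm, fun j y hy => hy.1, fun j y hy => hy.1, ?_, ?_, ?_, ?_⟩
  · refine pairwise_first fun a b hab y h1 h2 => ?_
    exact h2.2.1 (n' + a) (by omega) (by omega) (Or.inl h1.2.2.1)
  · refine pairwise_first fun a b hab y h1 h2 => ?_
    exact h2.2.1 (n' + a) (by omega) (by omega) (Or.inr h1.2.2)
  · rintro j y ⟨h1, h2, h3, h4⟩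
    have key : ∀ i, ∃ v, (y i).1 n = some v ∧ (if i ∈ G then 1 else 0) ≤ v := by
      intro i
      obtain ⟨v, hv⟩ := Option.ne_none_iff_exists'.1 (h1 i)
      refine ⟨v, hv, ?_⟩
      split_ifs with hi
      · have := h4 i hi; rw [hv] at this
        by_contra h0
        exact this (by congr 1; omega)
      · omega
    have key2 : ∀ i, ∃ v, (y i).1 n' = some v ∧ (if i ∈ G then 1 else 0) ≤ v := by
      intro i
      obtain ⟨v, hv, h⟩ := key i
      obtain ⟨w, hw, h'⟩ := lev_exists hn' hv
      exact ⟨w, hw, h.trans h'⟩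
    choose w hw hw' using key2
    have sh : ∀ i, _ := fun i => narrow_shift (x := y i) (N := n' + j) (by omega) (hδ i)
      (hw i) (hw' i) (h3 i)
    have htc : ∀ r, n' ≤ r → r < n' + j → ∀ i, S.tcol r (((TI S ι)^[t j] y) i) = S.tcol r (y i) := by
      intro r hr hr' i
      rw [TI_iter]; exact (sh i).2.2 r hr hr'
    refine ⟨⟨fun i => ?_, fun r hr hr' => ?_, fun i => ?_⟩, fun i => ?_⟩
    · obtain ⟨v, hv, hv'⟩ := key i
      rw [TI_iter, (narrow_shift (x := y i) (N := n' + j) (by omega) (hδ i) hv hv' (h3 i)).1]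
      simp
    · have := h2 r hr hr'
      simpa only [pat, htc r hr hr'] using this
    · rw [TI_iter]; exact (sh i).2.1
    · refine ⟨w i - if i ∈ G then 1 else 0, ?_, ?_⟩
      · rw [hw i, Nat.sub_add_cancel (hw' i)]
      · rw [TI_iter]; exact (sh i).1
  · set P1 : ℕ → Set (ι → S.Xpt) := fun j => {y | y ∈ Om S ι n ∧ fstPat n' (n' + j) G y ∧
      pat (n' + j) G 1 y} with hP1
    set P2 : ℕ → Set (ι → S.Xpt) := fun j => {y | y ∈ Om S ι n ∧ fstPat n' (n' + j) G y ∧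
      pat (n' + j) G 2 y} with hP2
    have hP2m : ∀ j, MeasurableSet (P2 j) := fun j => (measurableSet_Om n).inter
      ((measurableSet_setOfPred.2 (measurable_fstPat _ _ G)).inter
        (measurableSet_setOfPred.2 (measurable_pat _ G 2)))
    have c1 : ∀ j, σ (P1 j) ≤ σ (E j) := by
      intro j
      refine measure_mono fun y hy => ⟨Om_sub_CI n hy.1, hy.2.1, hy.2.2, fun i _ => ?_⟩
      obtain ⟨v, hv, hv', -⟩ := hy.1 i
      rw [hv]; intro h; have := Option.some.inj h; omega
    -- Points first showing the pattern in columns `2, 3` pull back to points showing it in `1, 2`.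
    have c2 : ∀ j, σ (P2 j) ≤ σ (E j) := by
      intro j
      rw [← (hT.iterate (t j)).measure_preimage (hP2m j).nullMeasurableSet]
      refine measure_mono fun y hy => ?_
      obtain ⟨h1, h2, h3⟩ := hy
      have h1 : ∀ i, ∃ v, ((TI S ι)^[t j] y i).1 n = some v ∧ 1 ≤ v ∧ v + 2 ≤ S.hgt n := fun i => by
        obtain ⟨v, hv, hv', hv''⟩ := h1 i
        exact ⟨v, hv, by omega, hv''⟩
      have h3 : ∀ i, S.tcol (n' + j) ((TI S ι)^[t j] y i) = 2 + if i ∈ G then 1 else 0 := h3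
      choose v hv using h1
      simp only [TI_iter] at hv h3
      have sh : ∀ i, _ := fun i => narrow_unshift (x := y i) (n := n) (N := n' + j) (by omega) (hδ i)
        (hv i).1 (by have := hδ i; have := (hv i).2; omega) (h3 i)
      have htc : ∀ r, n' ≤ r → r < n' + j → ∀ i, S.tcol r (y i) = S.tcol r (((TI S ι)^[t j] y) i) := by
        intro r hr hr' i
        rw [TI_iter]; exact (sh i).2.2 r (by omega) hr'
      refine ⟨fun i => ?_, fun r hr hr' => ?_, fun i => ?_, fun i _ => ?_⟩
      · rw [(sh i).1]; simp
      · have := h2 r hr hr'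
        simpa only [pat, htc r hr hr'] using this
      · exact (sh i).2.1
      · rw [(sh i).1]; intro h; have := Option.some.inj h; have := (hv i).2.1; omega
    have c3 : σ A ≤ ∑' j, σ (E j) + ∑' j, σ (E j) := by
      calc σ A ≤ σ ((⋃ j, P1 j) ∪ ⋃ j, P2 j) := by
            refine measure_mono fun y hy => ?_
            obtain ⟨h1, h2⟩ := hy
            have hex : ∃ j, pat (n' + j) G 1 y ∨ pat (n' + j) G 2 y := by
              obtain ⟨N, hN, h⟩ := (Filter.frequently_atTop.1 h2) n'
              exact ⟨N - n', by rwa [Nat.add_sub_cancel' hN]⟩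
            have hf : fstPat n' (n' + Nat.find hex) G y := by
              intro r hr hr' hp
              refine Nat.find_min hex (m := r - n') (by omega) ?_
              rwa [Nat.add_sub_cancel' hr]
            rcases Nat.find_spec hex with h | h
            · exact Or.inl (mem_iUnion.2 ⟨_, h1, hf, h⟩)
            · exact Or.inr (mem_iUnion.2 ⟨_, h1, hf, h⟩)
        _ ≤ σ (⋃ j, P1 j) + σ (⋃ j, P2 j) := measure_union_le _ _
        _ ≤ ∑' j, σ (P1 j) + ∑' j, σ (P2 j) := add_le_add (measure_iUnion_le _) (measure_iUnion_le _)
        _ ≤ _ := add_le_add (ENNReal.tsum_le_tsum c1) (ENNReal.tsum_le_tsum c2)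
    rw [ENNReal.div_le_iff (by simp) (by simp), mul_two]
    exact c3

end NFC

/-! ### Wide positions force a twist or disappear -/

namespace NFC
open NFCseq

variable {S : NFC} {ι : Type}

/-- `T^{h_M + s_M + 1}` carries column `2` of tower `M` to column `3`, and changes neither the level
in tower `M` nor the other columns. -/
theorem column_unshift {x : S.Xpt} {n M v : ℕ} (hnM : n ≤ M)
    (hx : (S.T^[S.hgt M + S.spa M + 1] x).1 n = some v)
    (ht : S.tcol M (S.T^[S.hgt M + S.spa M + 1] x) = 3) :
    x.1 n = some v ∧ S.tcol M x = 2 ∧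
    ∀ r, n ≤ r → r ≠ M → S.tcol r x = S.tcol r (S.T^[S.hgt M + S.spa M + 1] x) := by
  set z := S.T^[S.hgt M + S.spa M + 1] x with hz
  obtain ⟨w, hw, hvw⟩ := lev_exists hnM hx
  obtain ⟨hd, hu⟩ := lev_up hw
  have hlt := lev_lt hw
  have hvl := lev_lt hx
  have hd2 : IsDig 2 := by unfold IsDig; omega
  have e : S.off M 3 + w = S.off M 2 + w + (S.hgt M + S.spa M + 1) := by simp; omega
  rw [ht, e] at hu
  have hx' := lev_of_iter hu
  have hxN := lev_down hd2 hlt hx'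
  obtain ⟨⟨q, q', h1, h2, h3⟩, -⟩ :=
    two_pts (j' := v) le_rfl hnM hw hxN hx (by omega) hvl
  rw [hx] at h1
  have := Option.some.inj h1
  refine ⟨by rw [h2]; congr 1; omega, tcol_eq hd2 hlt hx', fun r h1 h2 => ?_⟩
  rcases lt_or_gt_of_ne h2 with h3 | h3
  · exact (two_pts (j' := v) h1 h3.le hw hxN hx (by omega) hvl).2 h3
  · obtain ⟨_, _, _, _, h⟩ := lev_iter_up (t := S.hgt M + S.spa M + 1) h3 hx' (lev_lt hu)
    exact h.symm

variable [Fintype ι]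

theorem wide_not_narrow {m : ℕ} {y : ι → S.Xpt} (h : wide m y) : ¬ narrow m y := by
  rintro ⟨G, -, -, h1 | h1⟩
  · obtain ⟨i, hi⟩ := h.2
    have := h1 i; split_ifs at this <;> omega
  · obtain ⟨i, hi⟩ := h.1
    have := h1 i; split_ifs at this <;> omega

/-- Points in a wide position at `N` which are constant (equal to `b`) at `N + 1` and never narrow
afterwards. -/
def wideConst (S : NFC) (ι : Type) [Fintype ι] (n b N : ℕ) : Set (ι → S.Xpt) :=
  {y | y ∈ Om S ι n ∧ wide N y ∧ (∀ i, S.tcol (N + 1) (y i) = b) ∧ ∀ r, N + 1 < r → ¬ narrow r y}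

theorem measurableSet_wideConst (n b N : ℕ) : MeasurableSet (wideConst S ι n b N) :=
  (measurableSet_Om n).inter ((measurableSet_setOfPred.2 (measurable_wide _)).inter
    ((measurableSet_setOfPred.2 (meas_tcol _ fun v => ∀ i, v i = b)).inter
      (measurableSet_setOfPred.2 (Measurable.forall fun r =>
        Measurable.imp measurable_const (measurable_narrow r).not))))

/-- Points of `C_n^ι` which are narrow at `N` and never narrow at or after `M`. -/
def lastNarrow (S : NFC) (ι : Type) [Fintype ι] (n N M : ℕ) : Set (ι → S.Xpt) :=
  {y | y ∈ CI S ι n ∧ narrow N y ∧ ∀ r, M ≤ r → ¬ narrow r y}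

theorem measurableSet_lastNarrow (n N M : ℕ) : MeasurableSet (lastNarrow S ι n N M) :=
  (measurableSet_CI n).inter ((measurableSet_setOfPred.2 (measurable_narrow _)).inter
      (measurableSet_setOfPred.2 (Measurable.forall fun r =>
        Measurable.imp measurable_const (measurable_narrow r).not)))

/-- The sets `lastNarrow` for disjoint successive windows are disjoint parts of `C_n^ι`. -/
theorem sum_lastNarrow (σ : Measure (ι → S.Xpt)) (n : ℕ) (f g : ℕ → ℕ)
    (hfg : ∀ a b, a < b → g a ≤ f b) :
    ∑' j, σ (lastNarrow S ι n (f j) (g j)) ≤ σ (CI S ι n) := by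
  rw [← measure_iUnion _ fun j => measurableSet_lastNarrow _ _ _]
  · exact measure_mono (iUnion_subset fun j y hy => hy.1)
  · exact pairwise_first fun a b hab y h1 h2 => h1.2.2 _ (hfg a b hab) h2.2.1

/-- All coordinates in column `3` of tower `N + 1` can be pulled back to column `2`. -/
theorem wideConst_three {σ : Measure (ι → S.Xpt)} (hT : MeasurePreserving (TI S ι) σ σ)
    {n N : ℕ} (hnN : n ≤ N) : σ (wideConst S ι n 3 N) ≤ σ (wideConst S ι n 2 N) := by
  set t := S.hgt (N + 1) + S.spa (N + 1) + 1 with ht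
  rw [← (hT.iterate t).measure_preimage (measurableSet_wideConst n 3 N).nullMeasurableSet]
  refine measure_mono fun y hy => ?_
  obtain ⟨h1, h2, h3, h4⟩ := hy
  have h1 : ∀ i, ∃ v, ((TI S ι)^[t] y i).1 n = some v ∧
    Fintype.card ι + 4 ≤ v ∧ v + 2 ≤ S.hgt n := h1
  choose v hv hv' using h1
  simp only [TI_iter] at hv h3
  have sh : ∀ i, _ := fun i => column_unshift (x := y i) (M := N + 1) (by omega) (hv i) (h3 i)
  have htc : ∀ r, n ≤ r → r ≠ N + 1 → ∀ i,
      S.tcol r (y i) = S.tcol r (((TI S ι)^[t] y) i) := by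
    intro r hr hr' i
    rw [TI_iter]; exact (sh i).2.2 r hr hr'
  refine ⟨fun i => ⟨v i, (sh i).1, hv' i⟩, ?_, fun i => (sh i).2.1, fun r hr => ?_⟩
  · simpa only [wide, htc N hnN (by omega)] using h2
  · have := h4 r hr
    simpa only [narrow, pat, htc r (by omega) (by omega)] using this

/-- Borel–Cantelli: by `exists_narrowing`, the mass of `wideConst` at `N` is at most a constant times
that of a set `lastNarrow`, and these are disjoint parts of a set of finite mass. -/
theorem ae_not_wideConst {σ : Measure (ι → S.Xpt)} (hT : MeasurePreserving (TI S ι) σ σ)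
    (n : ℕ) (hfin : σ (CI S ι n) ≠ ⊤) :
    ∀ᵐ y ∂σ, ∀ᶠ N in atTop, ∀ b, IsDig b → y ∉ wideConst S ι n b N := by
  obtain ⟨N1, hN1⟩ := exists_narrowing (S := S) (ι := ι) n
  set N2 := max N1 n with hN2
  have h12 : ∀ b, b = 1 ∨ b = 2 → ∀ N, N1 ≤ N → σ (wideConst S ι n b N) ≤
      (Fintype.card ι + 1 : ℕ) * σ (lastNarrow S ι n (N + 1) (N + 2)) := by
    intro b hb N hN
    obtain ⟨Ts, hTs, h⟩ := hN1 N hN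
    calc σ (wideConst S ι n b N)
        ≤ σ (⋃ t ∈ Ts, (TI S ι)^[t] ⁻¹' lastNarrow S ι n (N + 1) (N + 2)) := by
          refine measure_mono fun y hy => ?_
          obtain ⟨h1, h2, h3, h4⟩ := hy
          obtain ⟨t, ht, h5, h6, h7⟩ := h y b hb h1 h2 h3
          refine mem_iUnion₂.2 ⟨t, ht, h5, h6, fun r hr => ?_⟩
          have := h4 r hr
          simpa only [narrow, pat, h7 r hr] using this
      _ ≤ ∑ t ∈ Ts, σ ((TI S ι)^[t] ⁻¹' lastNarrow S ι n (N + 1) (N + 2)) :=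
          measure_biUnion_finset_le _ _
      _ = Ts.card * σ (lastNarrow S ι n (N + 1) (N + 2)) := by
          rw [Finset.sum_congr rfl fun t _ => (hT.iterate t).measure_preimage
            (measurableSet_lastNarrow _ _ _).nullMeasurableSet]
          simp
      _ ≤ _ := by gcongr
  have hall : ∀ b, IsDig b → ∀ N, N2 ≤ N → σ (wideConst S ι n b N) ≤
      (Fintype.card ι + 1 : ℕ) * σ (lastNarrow S ι n (N + 1) (N + 2)) := by
    intro b hb N hN
    rcases hb with rfl | rfl | rfl
    · exact h12 1 (by simp) N (by omega)
    · exact h12 2 (by simp) N (by omega)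
    · exact (wideConst_three hT (by omega)).trans (h12 2 (by simp) N (by omega))
  have hBC : ∀ b, IsDig b → ∀ᵐ y ∂σ, ∀ᶠ N in atTop, y ∉ wideConst S ι n b (N2 + N) := by
    intro b hb
    refine ae_eventually_notMem (ne_top_of_le_ne_top ?_
      (ENNReal.tsum_le_tsum fun N => hall b hb (N2 + N) (by omega)))
    rw [ENNReal.tsum_mul_left]
    exact ENNReal.mul_ne_top (by simp) (ne_top_of_le_ne_top hfin
      (sum_lastNarrow σ n (fun N => N2 + N + 1) (fun N => N2 + N + 2) (fun a b h => by omega)))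
  filter_upwards [hBC 1 (by simp [IsDig]), hBC 2 (by simp [IsDig]), hBC 3 (by simp [IsDig])]
    with y h1 h2 h3
  obtain ⟨M, hM⟩ := eventually_atTop.1 (h1.and (h2.and h3))
  refine eventually_atTop.2 ⟨N2 + M, fun N hN b hb => ?_⟩
  have := hM (N - N2) (by omega)
  rw [Nat.add_sub_cancel' (by omega)] at this
  rcases hb with rfl | rfl | rfl
  exacts [this.1, this.2.1, this.2.2]

/-- The points for which `T^{h_R}` lowers by one level in tower `R` exactly the coordinates in `G`,
where `G` is nonempty and proper. -/
def dropSet (S : NFC) (ι : Type) [Fintype ι] (R : ℕ) (G : Finset ι) : Set (ι → S.Xpt) :=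
  {y | (G.Nonempty ∧ Gᶜ.Nonempty) ∧ ∃ u : ι → ℕ,
    (∀ i, (y i).1 R = some (u i + if i ∈ G then 1 else 0)) ∧
    ∀ i, ((TI S ι)^[S.hgt R] y i).1 R = some (u i)}

theorem measurableSet_dropSet (R : ℕ) (G : Finset ι) : MeasurableSet (dropSet S ι R G) := by
  refine measurableSet_setOfPred.2 (Measurable.and measurable_const (Measurable.exists fun u => ?_))
  exact (meas_lev R fun v => ∀ i, v i = some (u i + if i ∈ G then 1 else 0)).and
    ((meas_lev R fun v => ∀ i, v i = some (u i)).comp (measurable_TI.iterate (S.hgt R)))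

/-- If the images of `σ` by proper twists are all singular to it, almost no point stays wide in all
large towers. -/
theorem ae_not_wide {σ : Measure (ι → S.Xpt)} (hT : MeasurePreserving (TI S ι) σ σ)
    (n : ℕ) (hfin : σ (CI S ι n) ≠ ⊤)
    (hno : ∀ G : Finset ι, G.Nonempty → Gᶜ.Nonempty →
      Measure.MutuallySingular σ (σ.map (SG S G))) (L : ℕ) :
    σ {y | y ∈ Om S ι n ∧ ∀ N, L ≤ N → wide N y ∧ ∀ i, okAt N (y i)} = 0 := by
  set W := {y : ι → S.Xpt | y ∈ Om S ι n ∧ ∀ N, L ≤ N → wide N y ∧ ∀ i, okAt N (y i)} with hW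
  by_contra hpos
  have hWm : MeasurableSet W := (measurableSet_Om n).inter
    (measurableSet_setOfPred.2 (Measurable.forall fun N => Measurable.imp measurable_const
      ((measurable_wide N).and (measurable_okAt N))))
  have hWC : W ⊆ CI S ι n := fun y hy => Om_sub_CI n hy.1
  have hWfin : σ W ≠ ⊤ := ne_top_of_le_ne_top hfin (measure_mono hWC)
  have hRl : ∀ l, 1 ≤ l → l < S.Rl l := fun l hl => by have := (S.Rl_spec hl); omega
  set L1 := L + n + 1 with hL1
  set V : ℕ → Set (ι → S.Xpt) := fun l => lastNarrow S ι n (S.Rl (L1 + l)) (S.nseq (L1 + l)) with hV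
  -- `stageC`: a point of `W` becomes narrow at `R_l`, for the last time before `n_l`, or has some of
  -- its coordinates lowered.
  have hcover : ∀ l, L1 ≤ l → W ⊆ ((TI S ι)^[S.hgt (S.Rl l)] ⁻¹' lastNarrow S ι n (S.Rl l) (S.nseq l)) ∪
      ⋃ G ∈ (Finset.univ : Finset (Finset ι)),
        W ∩ (CI S ι n ∩ dropSet S ι (S.Rl l) G ∩ (TI S ι)^[S.hgt (S.Rl l)] ⁻¹' CI S ι n) := by
    intro l hl y hy
    have h1 := hRl l (by omega)
    have h3 : S.Rl l + l = S.nseq l := (S.Rl_spec (by omega)).1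
    obtain ⟨h4, h5, h6⟩ := stageC (S := S) (ℓ := l) (by omega) (by omega) hy.1
      (hy.2 _ (by omega)).1 (hy.2 l (by omega)).2
    rcases h6 with h6 | ⟨G, hG, hG', h6⟩
    · left
      refine ⟨h4, h6, fun r hr => ?_⟩
      have := wide_not_narrow (hy.2 r (by omega)).1
      simpa only [narrow, pat, h5 r hr] using this
    · right
      refine mem_iUnion₂.2 ⟨G, Finset.mem_univ _, hy, ⟨hWC hy, ⟨hG, hG'⟩, ?_⟩, h4⟩
      choose u hu using h6
      exact ⟨u, fun i => (hu i).1, fun i => (hu i).2⟩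
  have hmeas : ∀ l, L1 ≤ l → σ W ≤ σ (lastNarrow S ι n (S.Rl l) (S.nseq l)) +
      ∑ G : Finset ι, σ (W ∩ (CI S ι n ∩ dropSet S ι (S.Rl l) G ∩
        (TI S ι)^[S.hgt (S.Rl l)] ⁻¹' CI S ι n)) := by
    intro l hl
    refine (measure_mono (hcover l hl)).trans ((measure_union_le _ _).trans (add_le_add ?_ ?_))
    · rw [(hT.iterate _).measure_preimage (measurableSet_lastNarrow _ _ _).nullMeasurableSet]
    · exact measure_biUnion_finset_le _ _
  -- The sets `V l` are disjoint, since `n_l ≤ R_{l+1}`, and lie in a set of finite mass.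
  have hlim : Tendsto (fun l => σ (V l)) atTop (𝓝 0) := by
    refine ENNReal.tendsto_atTop_zero_of_tsum_ne_top (ne_top_of_le_ne_top hfin
      (sum_lastNarrow σ n _ _ fun a b hab => ?_))
    have h1 : S.nseq (L1 + b - 1) + (L1 + b) < S.Rl (L1 + b) := (S.Rl_spec (by omega)).2
    have h2 : S.nseq (L1 + a) ≤ S.nseq (L1 + b - 1) := S.nseq_strictMono.monotone (by omega)
    show S.nseq (L1 + a) ≤ S.Rl (L1 + b)
    omega
  set K : ℝ≥0∞ := ((Fintype.card (Finset ι) : ℕ) : ℝ≥0∞) with hK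
  have hK0 : K ≠ 0 := by rw [hK]; exact_mod_cast Fintype.card_ne_zero
  have hKt : K ≠ ⊤ := by simp [hK]
  set c : ℝ≥0∞ := σ W / 2 / K with hc
  have hc0 : c ≠ 0 := by
    rw [hc]; exact (ENNReal.div_pos (ENNReal.half_pos hpos).ne' hKt).ne'
  have hev : ∀ᶠ l in atTop, σ (V l) < σ W / 2 := hlim.eventually_lt_const (ENNReal.half_pos hpos)
  have hfr : ∀ᶠ l in atTop, ∃ G : Finset ι, c ≤ σ (W ∩ (CI S ι n ∩ dropSet S ι (S.Rl (L1 + l)) G ∩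
        (TI S ι)^[S.hgt (S.Rl (L1 + l))] ⁻¹' CI S ι n)) := by
    filter_upwards [hev] with l hl
    by_contra hcon
    push Not at hcon
    have h1 := hmeas (L1 + l) (by omega)
    have h2 : ∑ G : Finset ι, σ (W ∩ (CI S ι n ∩ dropSet S ι (S.Rl (L1 + l)) G ∩
        (TI S ι)^[S.hgt (S.Rl (L1 + l))] ⁻¹' CI S ι n)) ≤ σ W / 2 := by
      calc _ ≤ ∑ G : Finset ι, c := Finset.sum_le_sum fun G _ => (hcon G).le
        _ = K * c := by simp [hK]
        _ = σ W / 2 := by rw [hc]; exact ENNReal.mul_div_cancel hK0 hKt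
    have h3 : σ W < σ W / 2 + σ W / 2 := h1.trans_lt (by
      refine (add_le_add_right h2 _).trans_lt ?_
      exact ENNReal.add_lt_add_right (ne_top_of_le_ne_top hWfin ENNReal.half_le_self) hl)
    rw [ENNReal.add_halves] at h3
    exact lt_irrefl _ h3
  -- There are finitely many `G`, so one of them occurs for infinitely many `l`.
  obtain ⟨G, hG⟩ : ∃ G : Finset ι, ∃ᶠ l in atTop, c ≤ σ (W ∩ (CI S ι n ∩
      dropSet S ι (S.Rl (L1 + l)) G ∩ (TI S ι)^[S.hgt (S.Rl (L1 + l))] ⁻¹' CI S ι n)) := by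
    by_contra hcon
    push Not at hcon
    obtain ⟨l, h1, G, h2⟩ := ((eventually_all.2 fun G => hcon G).and hfr).exists
    exact absurd (h1 G) (not_lt.2 h2)
  have hGn : G.Nonempty ∧ Gᶜ.Nonempty := by
    obtain ⟨l, hl⟩ := hG.exists
    by_contra hcon
    refine hc0 (le_antisymm (hl.trans ?_) bot_le)
    rw [show (W ∩ _ : Set (ι → S.Xpt)) = ∅ from ?_]
    · simp
    · ext y; simp only [mem_inter_iff, mem_empty_iff_false, iff_false]
      exact fun h => hcon h.2.1.2.1
  refine twist_not_singular σ hT n hfin G c hc0 (fun n' hn' => ?_) (hno G hGn.1 hGn.2)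
  obtain ⟨l, hl, hlc⟩ := (frequently_atTop.1 hG) n'
  set R := S.Rl (L1 + l) with hR
  have hn'R : n' ≤ R := by have := hRl (L1 + l) (by omega); omega
  set E0 := W ∩ (CI S ι n ∩ dropSet S ι R G ∩ (TI S ι)^[S.hgt R] ⁻¹' CI S ι n) with hE0
  have hE0m : MeasurableSet E0 := hWm.inter (((measurableSet_CI n).inter
    (measurableSet_dropSet R G)).inter ((measurable_TI.iterate _) (measurableSet_CI n)))
  refine ⟨fun j => if j = 0 then E0 else ∅, fun j => if j = 0 then CI S ι n else ∅,
    fun _ => S.hgt R, fun j => ?_, fun j => ?_, fun j => ?_, fun j => ?_, ?_, ?_, ?_, ?_⟩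
  · show MeasurableSet (if j = 0 then E0 else ∅)
    split_ifs; exacts [hE0m, MeasurableSet.empty]
  · show MeasurableSet (if j = 0 then CI S ι n else ∅)
    split_ifs; exacts [measurableSet_CI n, MeasurableSet.empty]
  · show (if j = 0 then E0 else ∅) ⊆ _
    split_ifs; exacts [fun y hy => hWC hy.1, empty_subset _]
  · show (if j = 0 then CI S ι n else ∅) ⊆ _
    split_ifs; exacts [subset_rfl, empty_subset _]
  · refine pairwise_first fun a b hab y _ h2 => ?_
    simp [show b ≠ 0 by omega] at h2
  · refine pairwise_first fun a b hab y _ h2 => ?_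
    simp [show b ≠ 0 by omega] at h2
  · intro j y hy
    by_cases hj : j = 0
    · simp only [hj, if_true] at hy ⊢
      obtain ⟨h1, ⟨h2, -, u, hu1, hu2⟩, h4⟩ := hy
      refine ⟨h4, fun i => ?_⟩
      obtain ⟨v, hv, hv', -⟩ := h1.1 i
      obtain ⟨w, hw, hvw⟩ := lev_exists hn' hv
      have hd : (if i ∈ G then 1 else 0) ≤ w := by split_ifs <;> omega
      refine ⟨w - if i ∈ G then 1 else 0, ?_, two_pts_low hn'R (hu1 i) (hu2 i) hw rfl hd⟩
      rw [hw, Nat.sub_add_cancel hd]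
    · simp [hj] at hy
  · calc c ≤ σ E0 := hlc
      _ = σ (if 0 = 0 then E0 else ∅) := by simp
      _ ≤ _ := ENNReal.le_tsum 0

/-- If the images of `σ` by proper twists are all singular to it, the coordinates of almost every
point are eventually in the same columns. -/
theorem dichotomy {σ : Measure (ι → S.Xpt)} (hT : MeasurePreserving (TI S ι) σ σ)
    (hfin : ∀ n, σ (CI S ι n) ≠ ⊤) (hgood : ∀ᵐ y ∂σ, ∀ i, Good (y i))
    (hno : ∀ G : Finset ι, G.Nonempty → Gᶜ.Nonempty →
      Measure.MutuallySingular σ (σ.map (SG S G))) :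
    ∀ᵐ y ∂σ, ∀ᶠ N in atTop, ∃ b, ∀ i, S.tcol N (y i) = b := by
  have hA : ∀ᵐ y ∂σ, ∀ n, y ∈ Om S ι n → ∀ᶠ N in atTop, ¬ narrow N y := by
    rw [ae_all_iff]
    intro n
    have : ∀ᵐ y ∂σ, ∀ G : Finset ι, G.Nonempty → Gᶜ.Nonempty → y ∈ Om S ι n →
        ∀ᶠ N in atTop, ¬ (pat N G 1 y ∨ pat N G 2 y) := by
      rw [ae_all_iff]
      intro G
      by_cases hG : G.Nonempty ∧ Gᶜ.Nonempty
      · have h0 : σ {y | y ∈ Om S ι n ∧ ∃ᶠ N in atTop, pat N G 1 y ∨ pat N G 2 y} = 0 := by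
          by_contra h
          exact stageA σ hT n (hfin n) G h (hno G hG.1 hG.2)
        filter_upwards [measure_eq_zero_iff_ae_notMem.1 h0] with y hy _ _ hyO
        by_contra hcon
        exact hy ⟨hyO, hcon⟩
      · exact Eventually.of_forall fun y h1 h2 => absurd ⟨h1, h2⟩ hG
    filter_upwards [this] with y hy hyO
    have h := eventually_all.2 fun G => show ∀ᶠ N in atTop, G.Nonempty → Gᶜ.Nonempty →
        ¬ (pat N G 1 y ∨ pat N G 2 y) by
      by_cases hG : G.Nonempty ∧ Gᶜ.Nonempty
      · filter_upwards [hy G hG.1 hG.2 hyO] with N hN _ _ using hN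
      · exact Eventually.of_forall fun N h1 h2 => absurd ⟨h1, h2⟩ hG
    filter_upwards [h] with N hN
    rintro ⟨G, h1, h2, h3⟩
    exact hN G h1 h2 h3
  have hB : ∀ᵐ y ∂σ, ∀ n, ∀ᶠ N in atTop, ∀ b, IsDig b → y ∉ wideConst S ι n b N :=
    ae_all_iff.2 fun n => ae_not_wideConst hT n (hfin n)
  have hC : ∀ᵐ y ∂σ, ∀ n L, ¬ (y ∈ Om S ι n ∧ ∀ N, L ≤ N → wide N y ∧ ∀ i, okAt N (y i)) := by
    refine ae_all_iff.2 fun n => ae_all_iff.2 fun L => ?_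
    exact measure_eq_zero_iff_ae_notMem.1 (ae_not_wide hT n (hfin n) hno L)
  filter_upwards [hA, hB, hC, hgood] with y h1 h2 h3 h4
  obtain ⟨n, hn⟩ := exists_Om h4
  have hok : ∀ᶠ N in atTop, ∀ i, okAt N (y i) := eventually_all.2 fun i => by
    obtain ⟨L, hL⟩ := (h4 i).2
    exact eventually_atTop.2 ⟨L, hL⟩
  obtain ⟨L, hL⟩ := eventually_atTop.1 (((h1 n hn).and (h2 n)).and (hok.and (eventually_ge_atTop n)))
  have hdig : ∀ N, L ≤ N → (∃ b, IsDig b ∧ ∀ i, S.tcol N (y i) = b) ∨ wide N y := by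
    intro N hN
    have hd : ∀ i, IsDig (S.tcol N (y i)) := fun i => by
      obtain ⟨v, hv, -⟩ := hn i
      obtain ⟨w, hw, -⟩ := lev_exists (hL N hN).2.2 hv
      exact (lev_up hw).1
    rcases const_or_narrow_or_wide hd with h | h | h
    · exact Or.inl h
    · exact absurd h (hL N hN).1.1
    · exact Or.inr h
  -- A wide position followed by a constant one is excluded by `ae_not_wideConst`.
  have hstep : ∀ N, L ≤ N → wide N y → wide (N + 1) y := by
    intro N hN hw
    rcases hdig (N + 1) (by omega) with ⟨b, hb, h⟩ | h
    · exact absurd ⟨hn, hw, h, fun r hr => (hL r (by omega)).1.1⟩ ((hL N hN).1.2 b hb)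
    · exact h
  have hnw : ∀ N, L ≤ N → ¬ wide N y := by
    intro N hN hw
    refine h3 n N ⟨hn, fun M hM => ⟨?_, (hL M (by omega)).2.1⟩⟩
    induction M, hM using Nat.le_induction with
    | base => exact hw
    | succ M hM ih => exact hstep M (by omega) ih
  refine eventually_atTop.2 ⟨L, fun N hN => ?_⟩
  rcases hdig N hN with ⟨b, -, h⟩ | h
  · exact ⟨b, h⟩
  · exact absurd h (hnw N hN)

end NFC

/-! ### Twists preserve ergodic measures -/

section Abstract

variable {α : Type*} [MeasurableSpace α] {f : α → α} {μ ν : Measure α}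

/-- An invariant measure absolutely continuous with respect to an ergodic one is a multiple of
it. -/
theorem eq_smul_of_ac [SigmaFinite μ] [SigmaFinite ν] (hf : MeasurableEmbedding f)
    (hμ : Ergodic f μ) (hν : MeasurePreserving f ν ν) (hac : ν ≪ μ) :
    ∃ c : ℝ≥0∞, ν = c • μ := by
  set g := ν.rnDeriv μ with hg
  have hgm : Measurable g := Measure.measurable_rnDeriv ν μ
  have hinv : (fun x => g (f x)) =ᵐ[μ] g := by
    refine ae_eq_of_forall_setLIntegral_eq_of_sigmaFinite (hgm.comp hf.measurable) hgm
      fun s hs _ => ?_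
    have hs' : s = f ⁻¹' (f '' s) := (preimage_image_eq s hf.injective).symm
    have hfs := hf.measurableSet_image.2 hs
    conv_lhs => rw [hs']
    rw [hμ.toMeasurePreserving.setLIntegral_comp_preimage_emb hf,
      Measure.setLIntegral_rnDeriv hac, Measure.setLIntegral_rnDeriv hac,
      ← hν.measure_preimage hfs.nullMeasurableSet, ← hs']
  obtain ⟨c, hc⟩ := hμ.ae_eq_const_of_ae_eq_comp₀ hgm.nullMeasurable hinv
  refine ⟨c, ?_⟩
  rw [← Measure.withDensity_rnDeriv_eq ν μ hac, ← withDensity_const]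
  exact withDensity_congr_ae hc

/-- Two ergodic measures for the same map are mutually singular or proportional. -/
theorem eq_smul_of_not_singular [SigmaFinite μ] [SigmaFinite ν] (hf : MeasurableEmbedding f)
    (hμ : Ergodic f μ) (hν : Ergodic f ν) (h : ¬ Measure.MutuallySingular μ ν) :
    ∃ c : ℝ≥0∞, c ≠ 0 ∧ c ≠ ⊤ ∧ ν = c • μ := by
  obtain ⟨s, hs, h1, h2⟩ := Measure.mutuallySingular_singularPart ν μ
  -- On `s`, which is null for the singular part of `ν`, null sets of `μ` are null sets of `ν`.
  have hac : ∀ A ⊆ s, μ A = 0 → ν A = 0 := by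
    intro A hA hA0
    rw [Measure.haveLebesgueDecomposition_add ν μ, Measure.add_apply,
      withDensity_absolutelyContinuous _ _ hA0, add_zero]
    exact measure_mono_null hA h1
  have hpre : μ (f ⁻¹' sᶜ) = 0 := by
    rw [hμ.toMeasurePreserving.measure_preimage hs.compl.nullMeasurableSet, h2]
  have hac' : ∀ A, MeasurableSet A → A ⊆ f ⁻¹' s → μ A = 0 → ν A = 0 := by
    intro A hAm hA hA0
    have hs' : A = f ⁻¹' (f '' A) := (preimage_image_eq A hf.injective).symm
    have hfs := (hf.measurableSet_image.2 hAm)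
    rw [hs', hν.toMeasurePreserving.measure_preimage hfs.nullMeasurableSet]
    refine hac _ (image_subset_iff.2 hA) ?_
    rw [← hμ.toMeasurePreserving.measure_preimage hfs.nullMeasurableSet, ← hs', hA0]
  have hinv : f ⁻¹' sᶜ =ᵐ[ν] sᶜ := by
    refine ae_eq_set.2 ⟨?_, ?_⟩
    · refine hac _ (fun x hx => ?_) (measure_mono_null sdiff_subset hpre)
      by_contra h; exact hx.2 h
    · refine hac' _ (hs.compl.diff (hf.measurable hs.compl)) (fun x hx => ?_)
        (measure_mono_null sdiff_subset h2)
      by_contra h; exact hx.2 h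
  rcases hν.quasiErgodic.ae_empty_or_univ₀ hs.compl.nullMeasurableSet hinv with h3 | h3
  · have h3 : ν sᶜ = 0 := by rw [measure_congr h3, measure_empty]
    have hνμ : ν ≪ μ := by
      intro A hA
      refine measure_mono_null (t := (A ∩ s) ∪ sᶜ) (fun x hx => ?_)
        (measure_union_null (hac _ inter_subset_right (measure_mono_null inter_subset_left hA)) h3)
      by_cases hxs : x ∈ s
      · exact Or.inl ⟨hx, hxs⟩
      · exact Or.inr hxs
    obtain ⟨c, hc⟩ := eq_smul_of_ac hf hμ hν.toMeasurePreserving hνμ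
    refine ⟨c, ?_, ?_, hc⟩
    · rintro rfl
      rw [zero_smul] at hc
      exact h (hc ▸ Measure.MutuallySingular.zero_right)
    · rintro rfl
      refine h ?_
      have : ∀ t, MeasurableSet t → ν t ≠ ⊤ → μ t = 0 := by
        intro t _ hνt
        by_contra h0
        refine hνt ?_
        rw [hc, Measure.smul_apply, smul_eq_mul, ENNReal.top_mul h0]
      have h0 : μ univ = 0 := by
        rw [← iUnion_spanningSets ν]
        exact measure_iUnion_null fun i => this _ (measurableSet_spanningSets ν i)
          (measure_spanningSets_lt_top ν i).ne
      rw [Measure.measure_univ_eq_zero.1 h0]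
      exact Measure.MutuallySingular.zero_left
  · refine absurd ?_ h
    exact ⟨sᶜ, hs.compl, h2, by
      rw [← ae_eq_univ]; exact h3⟩

end Abstract

namespace NFC
open NFCseq

variable {S : NFC} {ι : Type}

theorem iUnion_CI [Fintype ι] : ⋃ n, CI S ι n = univ := by
  refine eq_univ_of_forall fun y => ?_
  choose m hm using fun i => (y i).2.2
  exact mem_iUnion.2 ⟨Finset.univ.sup m, fun i =>
    lev_ne_none (Finset.le_sup (Finset.mem_univ i)) (hm i)⟩

theorem sigmaFinite_of_CI [Fintype ι] {σ : Measure (ι → S.Xpt)} (h : ∀ n, σ (CI S ι n) ≠ ⊤) :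
    SigmaFinite σ :=
  ⟨⟨⟨fun n => CI S ι n, fun _ => trivial, fun n => (h n).lt_top, iUnion_CI⟩⟩⟩

theorem SG_emb [Fintype ι] (G : Finset ι) : MeasurableEmbedding (SG S G) :=
  (measurable_SG G).measurableEmbedding fun y z h => funext fun i => by
    have := congrFun h i
    unfold SG at this
    split_ifs at this
    exacts [S.T_inj this, this]

theorem SG_iter (G : Finset ι) (t : ℕ) (y : ι → S.Xpt) (i : ι) :
    ((SG S G)^[t] y) i = if i ∈ G then S.T^[t] (y i) else y i := by
  induction t generalizing y with
  | zero => simp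
  | succ t ih =>
    rw [Function.iterate_succ_apply, ih]
    by_cases h : i ∈ G
    · simp [h, SG]
    · simp [h, SG]

theorem SG_comm (G : Finset ι) : Function.Semiconj (SG S G) (TI S ι) (TI S ι) := fun y => by
  funext i
  by_cases h : i ∈ G <;> simp [SG, TI, h]

theorem SG_compl [Fintype ι] (G : Finset ι) (y : ι → S.Xpt) : SG S G (SG S Gᶜ y) = TI S ι y := by
  funext i
  by_cases h : i ∈ G <;> simp [SG, TI, h]

/-- The image of an ergodic measure by a twist is mutually singular or proportional to it. -/
theorem twist_smul [Fintype ι] {σ : Measure (ι → S.Xpt)} (hE : Ergodic (TI S ι) σ)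
    (hfin : ∀ n, σ (CI S ι n) ≠ ⊤) (G : Finset ι)
    (h : ¬ Measure.MutuallySingular σ (σ.map (SG S G))) :
    ∃ c : ℝ≥0∞, c ≠ 0 ∧ c ≠ ⊤ ∧ σ.map (SG S G) = c • σ := by
  have := sigmaFinite_of_CI hfin
  have := (SG_emb (S := S) G).sigmaFinite_map (μ := σ)
  have hE' : Ergodic (TI S ι) (σ.map (SG S G)) :=
    MeasurePreserving.ergodic_of_ergodic_semiconj ⟨measurable_SG G, rfl⟩ hE measurable_TI
      (SG_comm G)
  exact eq_smul_of_not_singular TI_emb hE hE' h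

variable [Fintype ι]

/-- A twist cannot multiply `σ` by a factor less than one: its iterate of order `h_{R_ℓ}` sends
sets of mass bounded below into a fixed set of finite mass. -/
theorem one_le_of_map {σ : Measure (ι → S.Xpt)} (hfin : ∀ n, σ (CI S ι n) ≠ ⊤)
    (hgood : ∀ᵐ y ∂σ, ∀ i, Good (y i)) (h0 : σ ≠ 0) (G : Finset ι) {c : ℝ≥0∞}
    (hc : σ.map (SG S G) = c • σ) : 1 ≤ c := by
  by_contra hlt
  push Not at hlt
  have hit : ∀ k (A : Set (ι → S.Xpt)), MeasurableSet A →
      σ ((SG S G)^[k] ⁻¹' A) = c ^ k * σ A := by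
    intro k
    induction k with
    | zero => intro A _; simp
    | succ k ih =>
      intro A hA
      rw [Function.iterate_succ', preimage_comp, ih _ (measurable_SG G hA),
        ← Measure.map_apply (measurable_SG G) hA, hc, Measure.smul_apply, smul_eq_mul, pow_succ,
        mul_assoc]
  obtain ⟨n, L, hpos⟩ : ∃ n L, σ {y : ι → S.Xpt | y ∈ Om S ι n ∧
      ∀ l, L ≤ l → ∀ i, okAt l (y i)} ≠ 0 := by
    by_contra hcon
    push Not at hcon
    have h1 : ∀ᵐ y ∂σ, ∀ n L, ¬ (y ∈ Om S ι n ∧ ∀ l, L ≤ l → ∀ i, okAt l (y i)) :=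
      ae_all_iff.2 fun n => ae_all_iff.2 fun L => measure_eq_zero_iff_ae_notMem.1 (hcon n L)
    have h2 : ∀ᵐ y ∂σ, False := by
      filter_upwards [h1, hgood] with y hy hg
      obtain ⟨n, hn⟩ := exists_Om hg
      obtain ⟨L, hL⟩ := eventually_atTop.1 (eventually_all.2 fun i =>
        (show ∀ᶠ l in atTop, okAt l (y i) from
          (hg i).2.elim fun L h => eventually_atTop.2 ⟨L, h⟩))
      exact hy n L ⟨hn, hL⟩
    rw [eventually_false_iff_eq_bot, ae_eq_bot] at h2
    exact h0 h2
  set W := {y : ι → S.Xpt | y ∈ Om S ι n ∧ ∀ l, L ≤ l → ∀ i, okAt l (y i)} with hW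
  -- By `shiftC`, the iterate of order `h_{R_l}` of `S_G` keeps the points of `W` in `C_n^ι`.
  have hle : ∀ l, L + n + 1 ≤ l → σ W ≤ c ^ l * σ (CI S ι n) := by
    intro l hl
    obtain ⟨hR1, hR2⟩ := S.Rl_spec (ℓ := l) (by omega)
    have hlR : l ≤ S.hgt (S.Rl l) := by have := le_hgt (S := S) (S.Rl l); omega
    calc σ W ≤ σ ((SG S G)^[S.hgt (S.Rl l)] ⁻¹' CI S ι n) := by
          refine measure_mono fun y hy i => ?_
          rw [SG_iter]
          obtain ⟨v, hv, hv1, hv2⟩ := hy.1 i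
          split_ifs with hi
          · obtain ⟨p, hp, hp'⟩ := hy.2 l (by omega) i
            obtain ⟨_, _, _, _, _, _, _, _, h, _⟩ := shiftC (n := n) (R := S.Rl l) (k := l) (p := p)
              (by omega) (by omega)
              (fun r h1 h2 => spa_zero (ℓ := l) (by omega) (by omega)) hv (by omega) hv2
              (by rw [hR1]; exact hp) (by rw [hR1]; exact hp')
            exact h
          · simp [hv]
      _ = c ^ S.hgt (S.Rl l) * σ (CI S ι n) := hit _ _ (measurableSet_CI n)
      _ ≤ c ^ l * σ (CI S ι n) := mul_le_mul_left (pow_le_pow_right_of_le_one' hlt.le hlR) _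
  have hlim : Tendsto (fun l => c ^ l * σ (CI S ι n)) atTop (𝓝 0) := by
    have := ENNReal.Tendsto.mul_const (b := σ (CI S ι n))
      (ENNReal.tendsto_pow_atTop_nhds_zero_of_lt_one hlt) (Or.inr (hfin n))
    rwa [zero_mul] at this
  refine hpos (le_antisymm (ge_of_tendsto hlim ?_) bot_le)
  exact eventually_atTop.2 ⟨_, hle⟩

/-- If an ergodic measure is not singular to its image by a twist, then it is invariant under this
twist and the complementary one. -/
theorem twist_invariant {σ : Measure (ι → S.Xpt)} (hE : Ergodic (TI S ι) σ)
    (hfin : ∀ n, σ (CI S ι n) ≠ ⊤) (hgood : ∀ᵐ y ∂σ, ∀ i, Good (y i)) (h0 : σ ≠ 0)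
    (G : Finset ι) (h : ¬ Measure.MutuallySingular σ (σ.map (SG S G))) :
    MeasurePreserving (SG S G) σ σ ∧ MeasurePreserving (SG S Gᶜ) σ σ := by
  obtain ⟨c, hc0, hct, hc⟩ := twist_smul hE hfin G h
  have hc' : σ.map (SG S Gᶜ) = c⁻¹ • σ := by
    ext A hA
    have h1 : σ A = c * σ (SG S Gᶜ ⁻¹' A) := by
      conv_lhs => rw [← hE.toMeasurePreserving.measure_preimage hA.nullMeasurableSet]
      rw [← smul_eq_mul, ← Measure.smul_apply, ← hc,
        Measure.map_apply (measurable_SG G) (measurable_SG _ hA), ← preimage_comp]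
      congr 1
      ext y
      have := SG_compl (S := S) Gᶜ y
      rw [compl_compl] at this
      simp only [mem_preimage, Function.comp, this]
    rw [Measure.map_apply (measurable_SG _) hA, Measure.smul_apply, smul_eq_mul, h1, ← mul_assoc,
      ENNReal.inv_mul_cancel hc0 hct, one_mul]
  have h1 := one_le_of_map hfin hgood h0 G hc
  have h2 := one_le_of_map hfin hgood h0 Gᶜ hc'
  have : c = 1 := le_antisymm (ENNReal.one_le_inv.1 h2) h1
  rw [this, one_smul] at hc
  rw [this, inv_one, one_smul] at hc'
  exact ⟨⟨measurable_SG G, hc⟩, ⟨measurable_SG _, hc'⟩⟩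

end NFC

/-! ### Marginals: factoring out invariant twists -/

namespace NFC
open NFCseq

variable {S : NFC} {ι : Type}

/-- The projection of `X^ι` to the coordinates satisfying `p`. -/
def proj (S : NFC) (p : ι → Prop) (y : ι → S.Xpt) : {i // p i} → S.Xpt := fun i => y i

theorem measurable_proj (p : ι → Prop) : Measurable (proj S p) :=
  measurable_pi_lambda _ fun _ => measurable_pi_apply _

theorem measurable_Good : Measurable fun x : S.Xpt => Good x := by
  have h1 : ∀ n (Q : Option ℕ → Prop), Measurable fun x : S.Xpt => Q (x.1 n) := fun n Q =>
    (measurable_from_top (f := Q)).comp (measurable_lev n)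
  refine Measurable.and (Measurable.forall fun D => Measurable.exists fun n =>
    h1 n fun o => ∃ v, o = some v ∧ D ≤ v ∧ v + D ≤ S.hgt n)
    (Measurable.exists fun L => Measurable.forall fun ℓ => Measurable.forall fun _ =>
      h1 (S.nseq ℓ) fun o => ∃ p, o = some p ∧ p + S.hgt (S.Rl ℓ) < S.hgt (S.nseq ℓ))

/-- The marginal of `σ` on the coordinates satisfying `p`, the point being constrained to `A`. -/
def marg (σ : Measure (ι → S.Xpt)) (p : ι → Prop) (A : Set (ι → S.Xpt)) :
    Measure ({i // p i} → S.Xpt) := (σ.restrict A).map (proj S p)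

theorem marg_apply (σ : Measure (ι → S.Xpt)) (p : ι → Prop) (A : Set (ι → S.Xpt))
    {B : Set ({i // p i} → S.Xpt)} (hB : MeasurableSet B) :
    marg σ p A B = σ (proj S p ⁻¹' B ∩ A) := by
  rw [marg, Measure.map_apply (measurable_proj p) hB,
    Measure.restrict_apply (measurable_proj p hB)]

theorem marg_mono (σ : Measure (ι → S.Xpt)) (p : ι → Prop) {A B : Set (ι → S.Xpt)} (h : A ⊆ B) :
    marg σ p A ≤ marg σ p B :=
  Measure.map_mono (Measure.restrict_mono h le_rfl) (measurable_proj p)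

variable [Fintype ι]

theorem marg_fin {σ : Measure (ι → S.Xpt)} (hfin : ∀ n, σ (CI S ι n) ≠ ⊤) (p : ι → Prop) (n m : ℕ)
    {A : Set (ι → S.Xpt)} (hA : ∀ y ∈ A, ∀ i, ¬ p i → (y i).1 n ≠ none) :
    marg σ p A (CI S _ m) ≠ ⊤ := by
  rw [marg_apply _ _ _ (measurableSet_CI m)]
  refine ne_top_of_le_ne_top (hfin (max n m)) (measure_mono fun y hy i => ?_)
  by_cases hi : p i
  · exact lev_ne_none (le_max_right n m) (hy.1 ⟨i, hi⟩)
  · exact lev_ne_none (le_max_left n m) (hA y hy.2 i hi)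

theorem marg_good {σ : Measure (ι → S.Xpt)} (hgood : ∀ᵐ y ∂σ, ∀ i, Good (y i)) (p : ι → Prop)
    (A : Set (ι → S.Xpt)) : ∀ᵐ y ∂(marg σ p A), ∀ i, Good (y i) := by
  refine (ae_map_iff (measurable_proj p).aemeasurable (measurableSet_setOfPred.2 ?_)).2 ?_
  · exact Measurable.forall fun i => measurable_Good.comp (measurable_pi_apply i)
  · exact ae_restrict_of_ae (hgood.mono fun y h i => h _)

/-- A set of `X^p` invariant under `T` pulls back to an invariant set of `X^ι`, so the marginal of an
ergodic measure is ergodic. -/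
theorem marg_ergodic {σ : Measure (ι → S.Xpt)} (hE : Ergodic (TI S ι) σ) (p : ι → Prop)
    (hS : MeasurePreserving (SG S (Finset.univ.filter p)) σ σ)
    {A : Set (ι → S.Xpt)} (hA : MeasurableSet A)
    (hA' : SG S (Finset.univ.filter p) ⁻¹' A = A) : Ergodic (TI S _) (marg σ p A) where
  measurable := measurable_TI
  map_eq := by
    ext B hB
    rw [Measure.map_apply measurable_TI hB, marg_apply _ _ _ (measurable_TI hB),
      marg_apply _ _ _ hB,
      ← hS.measure_preimage ((measurable_proj p hB).inter hA).nullMeasurableSet,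
      preimage_inter, hA']
    congr 2
    ext y
    simp only [mem_preimage]
    suffices h : proj S p (SG S (Finset.univ.filter p) y) = TI S _ (proj S p y) by rw [h]
    funext i
    simp [proj, SG, TI, i.2]
  aeconst_set := by
    intro B hB hinv
    have h := hE.aeconst_set (measurable_proj p hB) (by
      conv_rhs => rw [← hinv]
      rfl)
    rw [eventuallyConst_set'] at h ⊢
    rcases h with h | h
    · left
      rw [ae_eq_empty, marg_apply _ _ _ hB]
      exact measure_mono_null inter_subset_left (ae_eq_empty.1 h)
    · right
      rw [ae_eq_univ, marg_apply _ _ _ hB.compl]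
      exact measure_mono_null inter_subset_left (ae_eq_univ.1 h)

theorem SG_proj {p q : ι → Prop} (hpq : ∀ i, q i ↔ ¬ p i) (A : Set ({i // q i} → S.Xpt)) :
    SG S (Finset.univ.filter p) ⁻¹' (proj S q ⁻¹' A) = proj S q ⁻¹' A := by
  ext y
  simp only [mem_preimage]
  suffices h : proj S q (SG S (Finset.univ.filter p) y) = proj S q y by rw [h]
  funext i
  simp [proj, SG, (hpq _).1 i.2]

/-- For an ergodic measure invariant under the twist of the coordinates in `p`, rectangles have
product measure. The marginal on `p` with the other coordinates in a fixed set is invariant, hence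
proportional to a single ergodic measure. -/
theorem marg_prod {σ : Measure (ι → S.Xpt)} (hE : Ergodic (TI S ι) σ)
    (hfin : ∀ n, σ (CI S ι n) ≠ ⊤) {p q : ι → Prop} (hq : ∀ i, q i ↔ ¬ p i)
    (hS : MeasurePreserving (SG S (Finset.univ.filter p)) σ σ) {n0 : ℕ}
    (hn0 : σ (CI S ι n0) ≠ 0)
    {A1 : Set ({i // p i} → S.Xpt)} {A2 : Set ({i // q i} → S.Xpt)} (hA1 : MeasurableSet A1)
    (hA2 : MeasurableSet A2) :
    σ (proj S p ⁻¹' A1 ∩ proj S q ⁻¹' A2) * σ (CI S ι n0) =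
      σ (proj S p ⁻¹' A1 ∩ proj S q ⁻¹' (CI S _ n0)) *
      σ (proj S p ⁻¹' (CI S _ n0) ∩ proj S q ⁻¹' A2) := by
  have hpq : ∀ n, proj S p ⁻¹' (CI S _ n) ∩ proj S q ⁻¹' (CI S _ n) = CI S ι n := by
    intro n
    ext y
    refine ⟨fun h i => ?_, fun h => ⟨fun i => h _, fun i => h _⟩⟩
    by_cases hi : p i
    · exact h.1 ⟨i, hi⟩
    · exact h.2 ⟨i, (hq i).2 hi⟩
  set V : Set ({i // q i} → S.Xpt) → Measure ({i // p i} → S.Xpt) :=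
    fun B => marg σ p (proj S q ⁻¹' B) with hV
  have herg : ∀ B, MeasurableSet B → Ergodic (TI S _) (V B) := fun B hB =>
    marg_ergodic hE p hS (measurable_proj q hB) (SG_proj hq B)
  have hVfin : ∀ n B, B ⊆ CI S _ n → ∀ m, V B (CI S _ m) ≠ ⊤ := fun n B hB m =>
    marg_fin hfin p n m fun y hy i hi => hB hy ⟨i, (hq i).2 hi⟩
  have hsf : ∀ n B, B ⊆ CI S _ n → SigmaFinite (V B) := fun n B hB =>
    sigmaFinite_of_CI (hVfin n B hB)
  -- all the marginals are absolutely continuous with respect to the one at `n0`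
  have hac : ∀ n B, B ⊆ CI S _ n → V B ≪ V (CI S _ n0) := by
    intro n B hB
    have hB' : B ⊆ CI S _ (max n n0) := hB.trans (CI_mono (le_max_left _ _))
    have := hsf (max n n0) (CI S _ (max n n0)) le_rfl
    have := hsf n0 (CI S _ n0) le_rfl
    have hle : V (CI S _ n0) ≤ V (CI S _ (max n n0)) :=
      marg_mono σ p (preimage_mono (CI_mono (le_max_right _ _)))
    have h1 : V B ≤ V (CI S _ (max n n0)) := marg_mono σ p (preimage_mono hB')
    obtain ⟨c, hc⟩ := eq_smul_of_ac TI_emb (herg _ (measurableSet_CI (max n n0)))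
      (herg _ (measurableSet_CI n0)).toMeasurePreserving hle.absolutelyContinuous
    have hc0 : c ≠ 0 := by
      rintro rfl
      rw [zero_smul] at hc
      apply hn0
      rw [← hpq n0, ← marg_apply _ _ _ (measurableSet_CI n0)]
      change V (CI S _ n0) _ = 0
      rw [hc]
      simp
    refine h1.absolutelyContinuous.trans fun s hs => ?_
    rw [hc, Measure.smul_apply, smul_eq_mul] at hs
    exact (mul_eq_zero.1 hs).resolve_left hc0
  have main : ∀ n B, MeasurableSet B → B ⊆ CI S _ n →
      σ (proj S p ⁻¹' A1 ∩ proj S q ⁻¹' B) * σ (CI S ι n0) =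
      σ (proj S p ⁻¹' A1 ∩ proj S q ⁻¹' (CI S _ n0)) *
      σ (proj S p ⁻¹' (CI S _ n0) ∩ proj S q ⁻¹' B) := by
    intro n B hBm hB
    have := hsf n B hB
    have := hsf n0 (CI S _ n0) le_rfl
    obtain ⟨c, hc⟩ := eq_smul_of_ac TI_emb (herg _ (measurableSet_CI n0))
      (herg _ hBm).toMeasurePreserving (hac n B hB)
    have h1 : ∀ D : Set ({i // p i} → S.Xpt), MeasurableSet D →
        σ (proj S p ⁻¹' D ∩ proj S q ⁻¹' B) = c * σ (proj S p ⁻¹' D ∩ proj S q ⁻¹' (CI S _ n0)) := by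
      intro D hD
      rw [← marg_apply _ _ _ hD, ← marg_apply _ _ _ hD]
      change V B D = c * V _ D
      rw [hc]
      rfl
    rw [h1 _ hA1, h1 _ (measurableSet_CI n0), hpq]
    ring
  have hun : A2 = ⋃ n, A2 ∩ CI S _ n := by rw [← inter_iUnion, iUnion_CI, inter_univ]
  have hlim : ∀ D : Set ({i // p i} → S.Xpt), σ (proj S p ⁻¹' D ∩ proj S q ⁻¹' A2) =
      ⨆ n, σ (proj S p ⁻¹' D ∩ proj S q ⁻¹' (A2 ∩ CI S _ n)) := by
    intro D
    conv_lhs => rw [hun, preimage_iUnion, inter_iUnion]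
    refine Monotone.measure_iUnion fun a b h => ?_
    exact inter_subset_inter_right _ (preimage_mono (inter_subset_inter_right _ (CI_mono h)))
  rw [hlim, hlim, ENNReal.iSup_mul, ENNReal.mul_iSup]
  exact iSup_congr fun n => main n _ (hA2.inter (measurableSet_CI n)) inter_subset_right

end NFC

/-! ### Measures invariant under all coordinate shifts -/

namespace NFC
open NFCseq

variable {S : NFC} {ι : Type}

/-- The product of the levels `v i` of tower `n`. -/
def box (S : NFC) (n : ℕ) (v : ι → ℕ) : Set (ι → S.Xpt) := {y | ∀ i, (y i).1 n = some (v i)}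

theorem box_shift (n : ℕ) (v : ι → ℕ) (i : ι) (hv : v i < S.hgt n) :
    (SG S {i})^[v i] ⁻¹' box S n v = box S n (Function.update v i 0) := by
  ext y
  refine forall_congr' fun j => ?_
  rw [SG_iter]
  by_cases h : j = i
  · subst h
    simp only [Finset.mem_singleton, if_true, Function.update_self]
    refine ⟨fun h => lev_of_iter (t := v j) (by rw [h, zero_add]), fun h => ?_⟩
    rw [lev_iter h (by omega), zero_add]
  · simp [h]

variable [Fintype ι]

theorem measurableSet_box (n : ℕ) (v : ι → ℕ) : MeasurableSet (box S n v) :=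
  measurableSet_setOfPred.2 (meas_lev n fun w => ∀ i, w i = some (v i))

/-- Boxes of the same tower have the same mass, being carried to each other by single shifts. -/
theorem box_const {σ : Measure (ι → S.Xpt)} (hS : ∀ i, MeasurePreserving (SG S {i}) σ σ)
    (n : ℕ) (v : ι → ℕ) (hv : ∀ i, v i < S.hgt n) : σ (box S n v) = σ (box S n fun _ => 0) := by
  have h : ∀ s : Finset ι, σ (box S n v) = σ (box S n fun i => if i ∈ s then 0 else v i) := by
    intro s
    induction s using Finset.induction_on with
    | empty => simp
    | insert i s hi ih =>
      rw [ih, ← ((hS i).iterate (v i)).measure_preimage (measurableSet_box n _).nullMeasurableSet]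
      have h1 := box_shift (S := S) n (fun i => if i ∈ s then 0 else v i) i (by simp [hi, hv])
      simp only [hi, if_false] at h1
      rw [h1]
      congr 2
      funext j
      by_cases hj : j = i
      · subst hj; simp
      · simp [hj]
  simpa using h Finset.univ

/-- An `n`-box is cut into `3^d` boxes of tower `n+1`. -/
theorem box_split {σ : Measure (ι → S.Xpt)} (hS : ∀ i, MeasurePreserving (SG S {i}) σ σ) (n : ℕ) :
    σ (box S n fun _ : ι => 0) = 3 ^ Fintype.card ι * σ (box S (n + 1) fun _ : ι => 0) := by
  have hd : ∀ a : Fin 3, IsDig (a + 1 : ℕ) := fun a => by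
    have := a.2; unfold IsDig; omega
  have h0 : 0 < S.hgt n := S.hgt_pos n
  have h : (box S n fun _ : ι => 0) =
      ⋃ a : ι → Fin 3, box S (n + 1) fun i => S.off n (a i + 1) + 0 := by
    ext y
    simp only [mem_iUnion]
    constructor
    · intro h
      choose hdig hup using fun i => lev_up (h i)
      refine ⟨fun i => ⟨S.tcol n (y i) - 1, by have := hdig i; unfold IsDig at this; omega⟩,
        fun i => ?_⟩
      rw [hup i]
      have := hdig i
      unfold IsDig at this
      simp only [Option.some.injEq]
      congr 2
      omega
    · rintro ⟨a, ha⟩ i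
      exact lev_down (hd (a i)) h0 (ha i)
  rw [h, measure_iUnion ?_ fun a => measurableSet_box _ _, tsum_fintype]
  · rw [Finset.sum_congr rfl fun a _ => box_const hS (n + 1) _ fun i => off_add_lt h0]
    simp
  · intro a b hab
    refine disjoint_left.2 fun y hy hy' => hab (funext fun i => ?_)
    have h1 := tcol_eq (hd (a i)) h0 (hy i)
    have h2 := tcol_eq (hd (b i)) h0 (hy' i)
    apply Fin.ext
    omega

theorem box_mass {σ : Measure (ι → S.Xpt)} (hS : ∀ i, MeasurePreserving (SG S {i}) σ σ) (n : ℕ)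
    (v : ι → ℕ) (hv : ∀ i, v i < S.hgt n) :
    σ (box S n v) = σ (box S 0 fun _ : ι => 0) * ((3 : ℝ≥0∞)⁻¹ ^ n) ^ Fintype.card ι := by
  rw [box_const hS n v hv]
  clear hv
  induction n with
  | zero => simp
  | succ n ih =>
    have h := box_split hS n
    rw [ih] at h
    have h3 : (3 : ℝ≥0∞) ^ Fintype.card ι ≠ 0 := by simp
    have h3' : (3 : ℝ≥0∞) ^ Fintype.card ι ≠ ⊤ := by simp
    calc _ = ((3 : ℝ≥0∞)⁻¹ ^ Fintype.card ι * 3 ^ Fintype.card ι) *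
          σ (box S (n + 1) fun _ : ι => 0) := by
          rw [← ENNReal.inv_pow, ENNReal.inv_mul_cancel h3 h3', one_mul]
      _ = _ := by rw [mul_assoc, ← h, pow_succ, mul_pow]; ring

theorem pi_box (n : ℕ) (v : ι → ℕ) (hv : ∀ i, v i < S.hgt n) :
    (haveI := S.μ_sfin; Measure.pi fun _ : ι => S.μ) (box S n v) =
      ((3 : ℝ≥0∞)⁻¹ ^ n) ^ Fintype.card ι := by
  have := S.μ_sfin
  have h : box S n v = univ.pi fun i => S.level n (v i) := by
    ext y; simp [box, level]
  rw [h, Measure.pi_pi, Finset.prod_congr rfl fun i _ => S.μ_level n (v i) (hv i)]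
  simp

/-- A set determined by the levels in tower `n` is a finite disjoint union of boxes. -/
theorem cyl_sum (σ : Measure (ι → S.Xpt)) (n : ℕ) (R : (ι → Option ℕ) → Prop)
    (hR : ∀ w, R w → ∀ i, w i ≠ none) : σ {y | R fun i => (y i).1 n} =
      ∑ v : ι → Fin (S.hgt n), if R (fun i => some (v i : ℕ)) then
        σ (box S n fun i => (v i : ℕ)) else 0 := by
  have h : {y : ι → S.Xpt | R fun i => (y i).1 n} =
      ⋃ v : ι → Fin (S.hgt n), if R (fun i => some (v i : ℕ)) then
        box S n (fun i => (v i : ℕ)) else ∅ := by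
    ext y
    simp only [mem_iUnion]
    constructor
    · intro hy
      choose v hv using fun i => Option.ne_none_iff_exists'.1 (hR _ hy i)
      refine ⟨fun i => ⟨v i, lev_lt (hv i)⟩, ?_⟩
      have h2 : (fun i => (y i).1 n) = fun i => some (v i) := funext hv
      rw [mem_ofPred_eq, h2] at hy
      rw [if_pos hy]
      exact hv
    · rintro ⟨v, hv⟩
      split_ifs at hv with hRv
      · have h2 : (fun i => (y i).1 n) = fun i => some (v i : ℕ) := funext hv
        rw [mem_ofPred_eq, h2]
        exact hRv
      · exact absurd hv (notMem_empty _)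
  rw [h, measure_iUnion, tsum_fintype]
  · refine Finset.sum_congr rfl fun v _ => ?_
    split_ifs <;> simp
  · intro v w hvw
    refine disjoint_left.2 fun y hy hy' => hvw (funext fun i => ?_)
    simp only at hy hy'
    split_ifs at hy hy'
    · have := (hy i).symm.trans (hy' i)
      exact Fin.ext (Option.some.inj this)
    all_goals simp_all
  · intro v
    split_ifs
    · exact measurableSet_box _ _
    · exact MeasurableSet.empty

/-- Up to a constant, `μ^{⊗ι}` is the only Radon measure invariant under `T` acting on each
coordinate separately. -/
theorem eq_smul_pi {σ : Measure (ι → S.Xpt)} (hfin : ∀ n, σ (CI S ι n) ≠ ⊤)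
    (hS : ∀ i, MeasurePreserving (SG S {i}) σ σ) :
    σ = σ (box S 0 fun _ => 0) • (haveI := S.μ_sfin; Measure.pi fun _ : ι => S.μ) := by
  set c := σ (box S 0 fun _ : ι => 0)
  set m := (haveI := S.μ_sfin; Measure.pi fun _ : ι => S.μ)
  have key : ∀ n (R : (ι → Option ℕ) → Prop), (∀ w, R w → ∀ i, w i ≠ none) →
      σ {y | R fun i => (y i).1 n} = (c • m) {y | R fun i => (y i).1 n} := by
    intro n R hR
    rw [cyl_sum σ n R hR, cyl_sum _ n R hR]
    refine Finset.sum_congr rfl fun v _ => ?_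
    rw [box_mass hS n _ fun i => (v i).2, Measure.smul_apply, smul_eq_mul,
      pi_box n _ fun i => (v i).2]
  have hCI : ∀ n, σ (CI S ι n) = (c • m) (CI S ι n) := fun n =>
    key n (fun w => ∀ i, w i ≠ none) fun _ h => h
  refine Measure.ext_of_generateFrom_of_cover (S := cyl S ι) (T := range (CI S ι)) cyl_generate
    (countable_range _) cyl_algebra.isSetRing.isSetSemiring.isPiSystem ?_ ?_ ?_ ?_
  · rw [sUnion_range, iUnion_CI]
  · rintro _ ⟨n, rfl⟩; exact hfin n
  · rintro _ ⟨n, rfl⟩ _ ⟨k, Q, rfl⟩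
    obtain ⟨Q', hQ⟩ := cyl_lift (S := S) (le_max_left k n) Q
    obtain ⟨R', hR⟩ := cyl_lift (S := S) (le_max_right k n) fun w : ι → Option ℕ => ∀ i, w i ≠ none
    have h : {y : ι → S.Xpt | Q fun i => (y i).1 k} ∩ CI S ι n =
        {y : ι → S.Xpt | (fun w : ι → Option ℕ => Q' w ∧ R' w ∧ ∀ i, w i ≠ none)
          fun i => (y i).1 (max k n)} := by
      ext y
      constructor
      · rintro ⟨h1, h2⟩
        exact ⟨(hQ y).2 h1, (hR y).2 h2, fun i => lev_ne_none (le_max_right k n) (h2 i)⟩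
      · rintro ⟨h1, h2, -⟩
        exact ⟨(hQ y).1 h1, (hR y).1 h2⟩
    rw [h]
    exact key _ (fun w : ι → Option ℕ => Q' w ∧ R' w ∧ ∀ i, w i ≠ none) fun w h => h.2.2
  · rintro _ ⟨n, rfl⟩; exact hCI n

end NFC

/-! ### Graph measures and the induction -/

namespace NFC
open NFCseq

variable {S : NFC} {ι : Type}

/-- The map `x ↦ (T^{e_i} x)_i`, a point of `X` being encoded as an element of `X^Unit`. -/
def phi (S : NFC) (e : ι → ℕ) (x : Unit → S.Xpt) : ι → S.Xpt := fun i => S.T^[e i] (x ())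

theorem measurable_phi (e : ι → ℕ) : Measurable (phi S e) :=
  measurable_pi_lambda _ fun i => (S.T_meas.iterate (e i)).comp (measurable_pi_apply ())

theorem TI_inj : Function.Injective (TI S ι) :=
  fun _ _ h => funext fun i => S.T_inj (congrFun h i)

theorem phi_inj [Nonempty ι] (e : ι → ℕ) : Function.Injective (phi S e) := fun _ _ h =>
  funext fun _ => S.T_inj.iterate (e (Classical.arbitrary ι)) (congrFun h (Classical.arbitrary ι))

theorem phi_TI (e : ι → ℕ) (x : Unit → S.Xpt) : phi S e (TI S Unit x) = TI S ι (phi S e x) := by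
  funext i
  change S.T^[e i] (S.T (x ())) = S.T (S.T^[e i] (x ()))
  rw [← Function.iterate_succ_apply, Function.iterate_succ_apply']

/-- Graphs are invariant sets; that some `e_i` vanishes takes care of the point `𝟎`, which has no
preimage. -/
theorem phi_preimage {e : ι → ℕ} (he : ∃ i, e i = 0) (B : Set (Unit → S.Xpt)) :
    TI S ι ⁻¹' (phi S e '' B) = phi S e '' (TI S Unit ⁻¹' B) := by
  obtain ⟨i, hi⟩ := he
  ext y
  constructor
  · rintro ⟨x, hx, hxy⟩
    have h1 : TI S Unit (fun _ => y i) = x := by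
      funext _
      have := congrFun hxy i
      simp only [phi, hi, Function.iterate_zero, id] at this
      exact this.symm
    refine ⟨fun _ => y i, by rw [mem_preimage, h1]; exact hx, TI_inj ?_⟩
    rw [← phi_TI, h1, hxy]
  · rintro ⟨x, hx, rfl⟩
    exact ⟨_, hx, phi_TI e x⟩

/-- Points whose coordinates are eventually in the same columns lie on a common orbit. -/
theorem exists_phi [Finite ι] [Nonempty ι] {y : ι → S.Xpt}
    (h : ∀ᶠ N in atTop, ∃ b, ∀ i, S.tcol N (y i) = b) :
    ∃ e : ι → ℕ, (∃ i, e i = 0) ∧ y ∈ range (phi S e) := by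
  have := Fintype.ofFinite ι
  obtain ⟨N0, hN0⟩ := eventually_atTop.1 h
  choose m hm using fun i => (y i).2.2
  set N1 := max N0 (Finset.univ.sup m) with hN1
  have hdef : ∀ i, ∃ v, (y i).1 N1 = some v := fun i => Option.ne_none_iff_exists'.1
    (lev_ne_none ((Finset.le_sup (Finset.mem_univ i)).trans (le_max_right _ _)) (hm i))
  choose v hv using hdef
  obtain ⟨i0, hi0⟩ := Finite.exists_min v
  have hlev : ∀ N, N1 ≤ N → ∃ w, ∀ i, (y i).1 N = some (w + (v i - v i0)) := by
    intro N hN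
    induction N, hN using Nat.le_induction with
    | base => exact ⟨v i0, fun i => by rw [hv i]; have := hi0 i; congr 1; omega⟩
    | succ N hN ih =>
      obtain ⟨w, hw⟩ := ih
      obtain ⟨b, hb⟩ := hN0 N (by omega)
      refine ⟨S.off N b + w, fun i => ?_⟩
      rw [(lev_up (hw i)).2, hb i, add_assoc]
  refine ⟨fun i => v i - v i0, ⟨i0, by simp⟩, fun _ => y i0, funext fun i => ?_⟩
  obtain ⟨N2, hN2⟩ := iter_up (y i0) (v i - v i0)
  refine Xpt_ext (max N1 N2) fun N hN => ?_
  obtain ⟨w, hw⟩ := hlev N (by omega)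
  obtain ⟨j, hj, hj'⟩ := hN2 N (by omega)
  have h0 := hw i0
  rw [hj, Nat.sub_self, add_zero] at h0
  have := Option.some.inj h0
  change (S.T^[v i - v i0] (y i0)).1 N = _
  rw [hj', hw i, this]

/-- `σ` is, up to a constant, a product over the classes of a partition (the fibres of `c`) of
images of `μ` by `x ↦ (T^{e_i} x)_i`. -/
def GP (S : NFC) {ι : Type} (σ : Measure (ι → S.Xpt)) : Prop :=
  ∃ (κ : Type) (_ : Fintype κ) (c : ι → κ) (e : ι → ℕ) (w : ℝ≥0∞),
    Function.Surjective c ∧ w ≠ 0 ∧ w ≠ ⊤ ∧ ∀ A : ι → Set S.Xpt, (∀ i, MeasurableSet (A i)) →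
      σ (univ.pi A) = w * ∏ j, S.μ (⋂ i, ⋂ _ : c i = j, S.T^[e i] ⁻¹' A i)

variable [Fintype ι]

/-- If the coordinates of almost every point are eventually in the same columns, `σ` is carried by
one of the countably many graphs; its pull-back to `X` is an invariant Radon measure, hence a multiple
of `μ`. -/
theorem graph_case [Nonempty ι] {σ : Measure (ι → S.Xpt)} (hE : Ergodic (TI S ι) σ)
    (hfin : ∀ n, σ (CI S ι n) ≠ ⊤) (h0 : σ ≠ 0)
    (hc : ∀ᵐ y ∂σ, ∀ᶠ N in atTop, ∃ b, ∀ i, S.tcol N (y i) = b) : GP S σ := by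
  obtain ⟨e, he, hpos⟩ : ∃ e : ι → ℕ, (∃ i, e i = 0) ∧ σ (range (phi S e)) ≠ 0 := by
    by_contra hcon
    push Not at hcon
    have h1 : ∀ᵐ y ∂σ, ∀ e : ι → ℕ, (∃ i, e i = 0) → y ∉ range (phi S e) :=
      ae_all_iff.2 fun e => eventually_imp_distrib_left.2 fun he =>
        measure_eq_zero_iff_ae_notMem.1 (hcon e he)
    have h2 : ∀ᵐ y ∂σ, False := by
      filter_upwards [h1, hc] with y hy hyc
      obtain ⟨e, he, hr⟩ := exists_phi hyc
      exact hy e he hr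
    rw [eventually_false_iff_eq_bot, ae_eq_bot] at h2
    exact h0 h2
  have hemb : MeasurableEmbedding (phi S e) := (measurable_phi e).measurableEmbedding (phi_inj e)
  have hconull : σ (range (phi S e))ᶜ = 0 := by
    refine (hE.toPreErgodic.measure_self_or_compl_eq_zero hemb.measurableSet_range ?_).resolve_left
      hpos
    rw [← image_univ, phi_preimage he, preimage_univ]
  -- `σ0` lives on `X^Unit`, where invariance under `T` is invariance under the only single shift.
  set σ0 := σ.comap (phi S e) with hσ0
  have happ : ∀ B, σ0 B = σ (phi S e '' B) := fun B => hemb.comap_apply σ B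
  have hTI : MeasurePreserving (TI S Unit) σ0 σ0 := by
    refine ⟨measurable_TI, ?_⟩
    ext B hB
    rw [Measure.map_apply measurable_TI hB, happ, happ, ← phi_preimage he,
      hE.toMeasurePreserving.measure_preimage (hemb.measurableSet_image.2 hB).nullMeasurableSet]
  have hSG : ∀ i : Unit, MeasurePreserving (SG S {i}) σ0 σ0 := by
    intro i
    have : SG S {i} = TI S Unit := by
      funext y j
      simp [SG, TI]
    rw [this]
    exact hTI
  have hfin0 : ∀ n, σ0 (CI S Unit n) ≠ ⊤ := by
    intro n
    set N := max n (Finset.univ.sup e) with hN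
    have hb : σ0 (box S N fun _ => 0) ≠ ⊤ := by
      rw [happ]
      refine ne_top_of_le_ne_top (hfin N) (measure_mono ?_)
      rintro _ ⟨x, hx, rfl⟩ i
      have h1 : e i ≤ N := (Finset.le_sup (Finset.mem_univ i)).trans (le_max_right _ _)
      have h2 := le_hgt (S := S) N
      have := lev_iter (hx ()) (t := e i) (by simp only; omega)
      change (S.T^[e i] (x ())).1 N ≠ none
      simp [this]
    refine ne_top_of_le_ne_top ?_ (measure_mono (CI_mono (m := N) (le_max_left _ _)))
    rw [show CI S Unit N = {y | (fun w : Unit → Option ℕ =>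
      ∀ i, w i ≠ none) fun i => (y i).1 N} from rfl, cyl_sum σ0 N _ fun _ h => h]
    refine ENNReal.sum_ne_top.2 fun v _ => ?_
    split_ifs
    · rw [box_const hSG N _ fun i => (v i).2]; exact hb
    · simp
  have hfinal := eq_smul_pi hfin0 hSG
  set w := σ0 (box S 0 fun _ => 0) with hw
  refine ⟨Unit, inferInstance, fun _ => (), e, w, fun _ => ⟨Classical.arbitrary ι, rfl⟩, ?_, ?_, ?_⟩
  · intro hw0
    rw [hw0, zero_smul] at hfinal
    apply hpos
    rw [← image_univ, ← happ, hfinal]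
    simp
  · exact ne_top_of_le_ne_top (hfin0 0) (measure_mono fun y hy i => by simp [hy i])
  · intro A hA
    have h1 : univ.pi A =ᵐ[σ] (univ.pi A ∩ range (phi S e) : Set _) := by
      refine ae_eq_set.2 ⟨measure_mono_null (fun y hy => ?_) hconull, ?_⟩
      · exact fun h => hy.2 ⟨hy.1, h⟩
      · rw [sdiff_eq_empty.2 inter_subset_left, measure_empty]
    have := S.μ_sfin
    have h2 : phi S e ⁻¹' univ.pi A = univ.pi fun _ : Unit => ⋂ i, S.T^[e i] ⁻¹' A i := by
      ext x
      simp only [mem_preimage, mem_univ_pi, phi, mem_iInter]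
      exact ⟨fun h _ => h, fun h => h ()⟩
    rw [measure_congr h1, ← image_preimage_eq_inter_range, ← happ, hfinal, Measure.smul_apply, h2,
      Measure.pi_pi, smul_eq_mul]
    simp

/-- The product of two factors with disjoint sets of coordinates. -/
theorem GP_prod {σ : Measure (ι → S.Xpt)} {p q : ι → Prop} (hq : ∀ i, q i ↔ ¬ p i)
    {w : ℝ≥0∞} (hw0 : w ≠ 0) (hwt : w ≠ ⊤)
    {σ1 : Measure ({i // p i} → S.Xpt)} {σ2 : Measure ({i // q i} → S.Xpt)}
    (h : ∀ A1 A2, MeasurableSet A1 → MeasurableSet A2 →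
      σ (proj S p ⁻¹' A1 ∩ proj S q ⁻¹' A2) * w = σ1 A1 * σ2 A2)
    (h1 : GP S σ1) (h2 : GP S σ2) : GP S σ := by
  obtain ⟨κ1, _, c1, e1, w1, hc1, hw1, hw1', hA1⟩ := h1
  obtain ⟨κ2, _, c2, e2, w2, hc2, hw2, hw2', hA2⟩ := h2
  refine ⟨κ1 ⊕ κ2, inferInstance,
    fun i => if hi : p i then Sum.inl (c1 ⟨i, hi⟩) else Sum.inr (c2 ⟨i, (hq i).2 hi⟩),
    fun i => if hi : p i then e1 ⟨i, hi⟩ else e2 ⟨i, (hq i).2 hi⟩, w1 * w2 * w⁻¹, ?_, ?_, ?_, ?_⟩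
  · rintro (j | j)
    · obtain ⟨⟨i, hi⟩, rfl⟩ := hc1 j
      exact ⟨i, by simp [hi]⟩
    · obtain ⟨⟨i, hi⟩, rfl⟩ := hc2 j
      exact ⟨i, by simp [(hq i).1 hi]⟩
  · exact mul_ne_zero (mul_ne_zero hw1 hw2) (ENNReal.inv_ne_zero.2 hwt)
  · exact ENNReal.mul_ne_top (ENNReal.mul_ne_top hw1' hw2') (ENNReal.inv_ne_top.2 hw0)
  · intro A hA
    have hsplit : univ.pi A = proj S p ⁻¹' (univ.pi fun i : {i // p i} => A i) ∩
        proj S q ⁻¹' (univ.pi fun i : {i // q i} => A i) := by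
      ext y
      constructor
      · exact fun h => ⟨fun i _ => h i trivial, fun i _ => h i trivial⟩
      · rintro ⟨h1, h2⟩ i -
        by_cases hi : p i
        · exact h1 ⟨i, hi⟩ trivial
        · exact h2 ⟨i, (hq i).2 hi⟩ trivial
    have hmul := h (univ.pi fun i : {i // p i} => A i) (univ.pi fun i : {i // q i} => A i)
      (MeasurableSet.univ_pi fun i => hA _) (MeasurableSet.univ_pi fun i => hA _)
    rw [← hsplit, hA1 _ fun i => hA _, hA2 _ fun i => hA _] at hmul
    rw [Fintype.prod_sum_type]
    have hl : ∀ j : κ1, (⋂ i, ⋂ _ : (if hi : p i then (Sum.inl (c1 ⟨i, hi⟩) : κ1 ⊕ κ2) else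
        Sum.inr (c2 ⟨i, (hq i).2 hi⟩)) = Sum.inl j,
        S.T^[if hi : p i then e1 ⟨i, hi⟩ else e2 ⟨i, (hq i).2 hi⟩] ⁻¹' A i) =
        ⋂ i, ⋂ _ : c1 i = j, S.T^[e1 i] ⁻¹' A i := by
      intro j
      ext x
      simp only [mem_iInter]
      constructor
      · rintro h ⟨i, hi⟩ hij
        have := h i (by simp [hi, hij])
        rwa [dif_pos hi] at this
      · intro h i hij
        by_cases hi : p i
        · rw [dif_pos hi] at hij ⊢
          exact h ⟨i, hi⟩ (Sum.inl.inj hij)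
        · simp [hi] at hij
    have hr : ∀ j : κ2, (⋂ i, ⋂ _ : (if hi : p i then (Sum.inl (c1 ⟨i, hi⟩) : κ1 ⊕ κ2) else
        Sum.inr (c2 ⟨i, (hq i).2 hi⟩)) = Sum.inr j,
        S.T^[if hi : p i then e1 ⟨i, hi⟩ else e2 ⟨i, (hq i).2 hi⟩] ⁻¹' A i) =
        ⋂ i, ⋂ _ : c2 i = j, S.T^[e2 i] ⁻¹' A i := by
      intro j
      ext x
      simp only [mem_iInter]
      constructor
      · rintro h ⟨i, hi⟩ hij
        have hi' := (hq i).1 hi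
        have := h i (by simp [hi', hij])
        rwa [dif_neg hi'] at this
      · intro h i hij
        by_cases hi : p i
        · simp [hi] at hij
        · rw [dif_neg hi] at hij ⊢
          exact h ⟨i, _⟩ (Sum.inr.inj hij)
    simp only [hl, hr]
    calc σ (univ.pi A) = σ (univ.pi A) * (w * w⁻¹) := by
          rw [ENNReal.mul_inv_cancel hw0 hwt, mul_one]
      _ = _ := by rw [← mul_assoc, hmul]; ring

/-- Every ergodic Radon measure carried by good points is a product of graph measures. -/
theorem GP_of_ergodic : ∀ (k : ℕ) {ι : Type} [Fintype ι] [Nonempty ι],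
    Fintype.card ι = k → ∀ {σ : Measure (ι → S.Xpt)}, Ergodic (TI S ι) σ →
    (∀ n, σ (CI S ι n) ≠ ⊤) → (∀ᵐ y ∂σ, ∀ i, Good (y i)) → σ ≠ 0 → GP S σ := by
  intro k
  induction k using Nat.strong_induction_on with
  | _ k ih =>
  intro ι _ _ hk σ hE hfin hgood h0
  by_cases hno : ∀ G : Finset ι, G.Nonempty → Gᶜ.Nonempty →
      Measure.MutuallySingular σ (σ.map (SG S G))
  · exact graph_case hE hfin h0 (dichotomy hE.toMeasurePreserving hfin hgood hno)
  push Not at hno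
  obtain ⟨G, ⟨a, ha⟩, ⟨b, hb⟩, hG⟩ := hno
  obtain ⟨hS1, hS2⟩ := twist_invariant hE hfin hgood h0 G hG
  obtain ⟨n0, hn0⟩ : ∃ n, σ (CI S ι n) ≠ 0 := by
    by_contra hcon
    push Not at hcon
    apply h0
    rw [← Measure.measure_univ_eq_zero, ← iUnion_CI]
    exact measure_iUnion_null hcon
  obtain ⟨p, hp⟩ : ∃ p : ι → Prop, ∀ i, p i ↔ i ∈ G := ⟨_, fun _ => Iff.rfl⟩
  obtain ⟨q, hq⟩ : ∃ q : ι → Prop, ∀ i, q i ↔ i ∉ G := ⟨_, fun _ => Iff.rfl⟩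
  have hS1' : MeasurePreserving (SG S (Finset.univ.filter p)) σ σ := by
    convert hS1; ext i; simp [hp]
  have hS2' : MeasurePreserving (SG S (Finset.univ.filter q)) σ σ := by
    convert hS2; ext i; simp [hq]
  have hqp : ∀ i, p i ↔ ¬ q i := fun i => by simp [hp, hq]
  have hpq : ∀ i, q i ↔ ¬ p i := fun i => by simp [hp, hq]
  have hinter : proj S p ⁻¹' (CI S _ n0) ∩ proj S q ⁻¹' (CI S _ n0) = CI S ι n0 := by
    ext y
    refine ⟨fun h i => ?_, fun h => ⟨fun i => h _, fun i => h _⟩⟩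
    by_cases hi : p i
    · exact h.1 ⟨i, hi⟩
    · exact h.2 ⟨i, (hpq i).2 hi⟩
  have hne1 : marg σ p (proj S q ⁻¹' (CI S _ n0)) ≠ 0 := by
    intro h
    have := marg_apply σ p (proj S q ⁻¹' (CI S _ n0)) (measurableSet_CI n0)
    rw [h, hinter] at this
    exact hn0 this.symm
  have hne2 : marg σ q (proj S p ⁻¹' (CI S _ n0)) ≠ 0 := by
    intro h
    have := marg_apply σ q (proj S p ⁻¹' (CI S _ n0)) (measurableSet_CI n0)
    rw [h, inter_comm, hinter] at this
    exact hn0 this.symm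
  have : Nonempty {i // p i} := ⟨⟨a, (hp a).2 ha⟩⟩
  have : Nonempty {i // q i} := ⟨⟨b, by simpa [hq] using hb⟩⟩
  -- `σ` is, up to a constant, the product of its marginals over `G` and its complement.
  refine GP_prod hpq hn0 (hfin n0) (σ1 := marg σ p (proj S q ⁻¹' (CI S _ n0)))
    (σ2 := marg σ q (proj S p ⁻¹' (CI S _ n0))) ?_ ?_ ?_
  · intro A1 A2 hA1 hA2
    rw [marg_prod hE hfin hpq hS1' hn0 hA1 hA2, marg_apply _ _ _ hA1, marg_apply _ _ _ hA2,
      inter_comm (proj S q ⁻¹' A2)]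
  · refine ih _ ?_ rfl (marg_ergodic hE p hS1' (measurable_proj q (measurableSet_CI n0))
      (SG_proj hpq _)) (fun m => marg_fin hfin p n0 m fun y hy i hi => hy ⟨i, (hpq i).2 hi⟩)
      (marg_good hgood p _) hne1
    rw [← hk]
    exact Fintype.card_subtype_lt (x := b) (by simpa [hp] using hb)
  · refine ih _ ?_ rfl (marg_ergodic hE q hS2' (measurable_proj p (measurableSet_CI n0))
      (SG_proj hqp _)) (fun m => marg_fin hfin q n0 m fun y hy i hi => hy ⟨i, (hqp i).2 hi⟩)
      (marg_good hgood q _) hne2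
    rw [← hk]
    exact Fintype.card_subtype_lt (x := a) (by simpa [hq] using ha)

end NFC

/-! ### The classification -/

namespace NFC
open NFCseq

variable {S : NFC}

/-- The parts are the fibres of the class map; the constant is attached to the factor containing the
coordinate `0`. -/
theorem isProduct_of_GP {d : ℕ} (hd : 1 ≤ d) {σ : Measure (Fin d → S.Xpt)} (h : GP S σ) :
    S.IsProductOfGraphMeasures d σ := by
  obtain ⟨κ, _, c, e, w, hc, hw0, hwt, hA⟩ := h
  set f := Fintype.equivFin κ
  set j0 : Fin (Fintype.card κ) := f (c ⟨0, hd⟩)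
  set D : Fin (Fintype.card κ) → Finset (Fin d) :=
    fun j => Finset.univ.filter fun i => f (c i) = j with hD
  set α : Fin (Fintype.card κ) → ℝ≥0∞ := fun j => if j = j0 then w else 1 with hα
  have hm : ∀ j, Measurable fun (x : S.Xpt) (i : {i // i ∈ D j}) => S.T^[e i] x := fun j =>
    measurable_pi_lambda _ fun i => S.T_meas.iterate (e i)
  have happ : ∀ j (A : {i // i ∈ D j} → Set S.Xpt), (∀ i, MeasurableSet (A i)) →
      (α j • S.μ.map fun (x : S.Xpt) (i : {i // i ∈ D j}) => S.T^[e i] x) (univ.pi A) =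
        α j * S.μ (⋂ i : {i // i ∈ D j}, S.T^[e i.1] ⁻¹' A i) := by
    intro j A hAm
    rw [Measure.smul_apply, smul_eq_mul,
      Measure.map_apply (hm j) (MeasurableSet.univ_pi hAm)]
    congr 2
    ext x
    simp
  refine ⟨Fintype.card κ, D, ?_, ?_, ?_,
    fun j => α j • S.μ.map fun (x : S.Xpt) (i : {i // i ∈ D j}) => S.T^[e i] x, ?_, ?_⟩
  · intro j
    obtain ⟨i, hi⟩ := hc (f.symm j)
    exact ⟨i, by simp [hD, hi]⟩
  · intro j j' hjj
    refine Finset.disjoint_left.2 fun i hi hi' => hjj ?_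
    simp only [hD, Finset.mem_filter] at hi hi'
    exact hi.2.symm.trans hi'.2
  · exact fun i => ⟨f (c i), by simp [hD]⟩
  · intro j
    refine ⟨α j, ?_, ?_, fun i => Int.ofNat (e i), fun A hAm => happ j A hAm⟩
    · simp only [hα]; split_ifs
      exacts [pos_iff_ne_zero.2 hw0, one_pos]
    · simp only [hα]; split_ifs
      exacts [hwt, ENNReal.one_ne_top]
  · intro A hAm
    rw [hA A hAm, Finset.prod_congr rfl fun j _ => happ j (fun i => A i) fun i => hAm _,
      Finset.prod_mul_distrib]
    congr 1
    · simp [hα]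
    · rw [← Equiv.prod_comp f]
      refine Finset.prod_congr rfl fun j _ => congrArg S.μ ?_
      ext x
      simp only [mem_iInter]
      constructor
      · rintro h ⟨i, hi⟩
        exact h i (f.injective (Finset.mem_filter.1 hi).2)
      · exact fun h i hi => h ⟨i, Finset.mem_filter.2 ⟨Finset.mem_univ i, congrArg f hi⟩⟩

end NFC

theorem NFCX.classification (S : NFCX) {d : ℕ} (hd : 1 ≤ d) {σ : Measure (S.toNFC.Xd d)}
    (h0 : σ ≠ 0) (hR : S.toNFC.IsRadon d σ) (hE : Ergodic (S.toNFC.Td d) σ)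
    (hX : σ {y : S.toNFC.Xd d | ¬ ∀ i, y i ∈ S.Xinf} = 0) :
    S.toNFC.IsProductOfGraphMeasures d σ := by
  have : Nonempty (Fin d) := ⟨⟨0, hd⟩⟩
  refine NFC.isProduct_of_GP hd (NFC.GP_of_ergodic d (Fintype.card_fin d) hE
    (fun n => (hR n).ne) ?_ h0)
  have h1 : ∀ᵐ y ∂σ, ∀ i, y i ∈ S.Xinf := ae_iff.2 hX
  exact h1.mono fun y hy i => NFC.Good_of ⟨S.ellx (y i), fun ℓ hl n h1 h2 =>
    S.Xinf_spec _ (hy i) ℓ hl n h1 h2⟩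

/-! ### Ergodicity and conservativity of the product -/

namespace NFC
open NFCseq

variable {S : NFC} {ι : Type} [Fintype ι]

/-- The product measure `μ^{⊗ι}` on `X^ι`. -/
def mpi (S : NFC) (ι : Type) [Fintype ι] : Measure (ι → S.Xpt) :=
  haveI := S.μ_sfin; Measure.pi fun _ : ι => S.μ

theorem mpi_TI : MeasurePreserving (TI S ι) (mpi S ι) (mpi S ι) := by
  have := S.μ_sfin
  exact measurePreserving_pi (fun _ : ι => S.μ) (fun _ => S.μ) fun _ => S.μ_pres

theorem mpi_SG (G : Finset ι) : MeasurePreserving (SG S G) (mpi S ι) (mpi S ι) := by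
  have := S.μ_sfin
  have h : SG S G = fun (y : ι → S.Xpt) i => (if i ∈ G then S.T else id) (y i) := by
    funext y i
    unfold SG
    split_ifs <;> rfl
  rw [h]
  refine measurePreserving_pi (fun _ : ι => S.μ) (fun _ => S.μ) fun i => ?_
  split_ifs
  exacts [S.μ_pres, MeasurePreserving.id _]

theorem mpi_box (n : ℕ) (v : ι → ℕ) (hv : ∀ i, v i < S.hgt n) :
    mpi S ι (box S n v) = ((3 : ℝ≥0∞)⁻¹ ^ n) ^ Fintype.card ι := pi_box n v hv

theorem mpi_CI (n : ℕ) : mpi S ι (CI S ι n) ≠ ⊤ := by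
  have h := cyl_sum (mpi S ι) n (fun w => ∀ i, w i ≠ none) fun _ h => h
  have h' : mpi S ι (CI S ι n) = _ := h
  rw [h']
  refine ENNReal.sum_ne_top.2 fun v _ => ?_
  split_ifs
  · rw [mpi_box n _ fun i => (v i).2]
    exact ENNReal.pow_ne_top (ENNReal.pow_ne_top (by simp))
  · simp

/-- Under the product measure, the columns in tower `N + 1` are independent of the levels in
tower `N`. -/
theorem pat_mass (N : ℕ) (G : Finset ι) (R : (ι → Option ℕ) → Prop)
    (hR : ∀ w, R w → ∀ i, w i ≠ none) :
    mpi S ι ({y | R fun i => (y i).1 N} ∩ {y | pat N G 1 y}) =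
      (3 : ℝ≥0∞)⁻¹ ^ Fintype.card ι * mpi S ι {y | R fun i => (y i).1 N} := by
  have hm : MeasurableSet {y : ι → S.Xpt | R fun i => (y i).1 N} :=
    measurableSet_setOfPred.2 (meas_lev N R)
  rw [← Measure.restrict_apply hm, cyl_sum _ N R hR, cyl_sum (mpi S ι) N R hR, Finset.mul_sum]
  refine Finset.sum_congr rfl fun v _ => ?_
  split_ifs
  swap
  · simp
  have hd : ∀ i, IsDig (1 + if i ∈ G then 1 else 0) := fun i => by
    unfold IsDig; split_ifs <;> omega
  have hb : box S N (fun i => (v i : ℕ)) ∩ {y | pat N G 1 y} =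
      box S (N + 1) fun i => S.off N (1 + if i ∈ G then 1 else 0) + v i := by
    ext y
    constructor
    · rintro ⟨h1, h2⟩ i
      rw [(lev_up (h1 i)).2, h2 i]
    · exact fun h => ⟨fun i => lev_down (hd i) (v i).2 (h i),
        fun i => tcol_eq (hd i) (v i).2 (h i)⟩
  rw [Measure.restrict_apply (measurableSet_box _ _), hb, mpi_box N _ fun i => (v i).2,
    mpi_box (N + 1) _ fun i => off_add_lt (v i).2, ← mul_pow, pow_succ, mul_comm]

theorem three_inv_pow (k : ℕ) : (3 : ℝ≥0∞)⁻¹ ^ k ≠ 0 ∧ (3 : ℝ≥0∞)⁻¹ ^ k ≤ 1 :=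
  ⟨pow_ne_zero _ (by simp), pow_le_one₀ (by simp) (by simp)⟩

/-- Almost every point of `C_n^ι` shows, in some tower above `n`, the pattern with column `2` on `G`
and column `1` elsewhere. -/
theorem mpi_no_pat (n : ℕ) (G : Finset ι) :
    mpi S ι {y | y ∈ CI S ι n ∧ ∀ r, n ≤ r → ¬ pat r G 1 y} = 0 := by
  set q : ℝ≥0∞ := 3⁻¹ ^ Fintype.card ι with hq
  set F : ℕ → Set (ι → S.Xpt) := fun k =>
    {y | y ∈ CI S ι n ∧ ∀ r, n ≤ r → r < n + k → ¬ pat r G 1 y} with hF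
  have hcyl : ∀ k, ∃ R : (ι → Option ℕ) → Prop, (∀ w, R w → ∀ i, w i ≠ none) ∧
      F k = {y | R fun i => (y i).1 (n + k)} := by
    intro k
    induction k with
    | zero =>
      refine ⟨fun w => ∀ i, w i ≠ none, fun _ h => h, ?_⟩
      ext y
      exact ⟨fun h => h.1, fun h => ⟨h, fun r h1 h2 => by omega⟩⟩
    | succ k ih =>
      obtain ⟨R, hR, hk⟩ := ih
      obtain ⟨R', hR'⟩ := cyl_lift (S := S) (Nat.le_succ (n + k)) R
      refine ⟨fun w => (R' w ∧ ∀ i, w i ≠ none) ∧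
        ¬ ∀ i, (match w i with
          | none => 0
          | some j =>
            if j < S.hgt (n + k) + S.spa (n + k) then 1
            else if j < 2 * S.hgt (n + k) + 2 * S.spa (n + k) + 1 then 2
            else 3) = 1 + if i ∈ G then 1 else 0, fun _ h => h.1.2, ?_⟩
      ext y
      have hyk : y ∈ F k ↔ R fun i => (y i).1 (n + k) := by rw [hk]; rfl
      constructor
      · rintro ⟨h1, h2⟩
        exact ⟨⟨(hR' y).2 (hyk.1 ⟨h1, fun r h3 h4 => h2 r h3 (by omega)⟩),
          fun i => lev_ne_none (by omega) (h1 i)⟩, h2 (n + k) (by omega) (by omega)⟩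
      · rintro ⟨⟨h1, -⟩, h2⟩
        obtain ⟨h3, h4⟩ := hyk.2 ((hR' y).1 h1)
        refine ⟨h3, fun r h5 h6 => ?_⟩
        rcases Nat.lt_or_ge r (n + k) with h | h
        · exact h4 r h5 h
        · obtain rfl : r = n + k := by omega
          exact h2
  -- The columns in successive towers are independent of the past, and the pattern has probability `q`.
  have hmass : ∀ k, mpi S ι (F k) = (1 - q) ^ k * mpi S ι (CI S ι n) := by
    intro k
    induction k with
    | zero =>
      rw [pow_zero, one_mul]
      congr 1
      ext y
      exact ⟨fun h => h.1, fun h => ⟨h, fun r h1 h2 => by omega⟩⟩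
    | succ k ih =>
      obtain ⟨R, hR, hk⟩ := hcyl k
      have hs : F (k + 1) = F k \ (F k ∩ {y | pat (n + k) G 1 y}) := by
        ext y
        constructor
        · rintro ⟨h1, h2⟩
          exact ⟨⟨h1, fun r h3 h4 => h2 r h3 (by omega)⟩,
            fun h => h2 (n + k) (by omega) (by omega) h.2⟩
        · rintro ⟨h1, h2⟩
          refine ⟨h1.1, fun r h5 h6 => ?_⟩
          rcases Nat.lt_or_ge r (n + k) with h | h
          · exact h1.2 r h5 h
          · obtain rfl : r = n + k := by omega
            exact fun h => h2 ⟨h1, h⟩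
      have hFm : MeasurableSet (F k) := by
        rw [hk]; exact measurableSet_setOfPred.2 (meas_lev (n + k) R)
      have hfin : mpi S ι (F k) ≠ ⊤ := ne_top_of_le_ne_top (mpi_CI n)
        (measure_mono fun y hy => hy.1)
      have hp := pat_mass (S := S) (n + k) G R hR
      rw [← hk] at hp
      rw [hs, measure_sdiff inter_subset_left
        (hFm.inter (measurableSet_setOfPred.2 (measurable_pat _ G 1))).nullMeasurableSet
        (ne_top_of_le_ne_top hfin (measure_mono inter_subset_left)), hp, pow_succ,
        mul_right_comm, ← ih, ENNReal.mul_sub fun _ _ => hfin, mul_one, mul_comm]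
  have hlt : 1 - q < 1 := ENNReal.sub_lt_self ENNReal.one_ne_top one_ne_zero (three_inv_pow _).1
  have hlim : Tendsto (fun k => (1 - q) ^ k * mpi S ι (CI S ι n)) atTop (𝓝 0) := by
    have := ENNReal.Tendsto.mul_const (ENNReal.tendsto_pow_atTop_nhds_zero_of_lt_one hlt)
      (Or.inr (mpi_CI (S := S) (ι := ι) n))
    rwa [zero_mul] at this
  refine le_antisymm (ge_of_tendsto' hlim fun k => ?_) zero_le
  rw [← hmass k]
  exact measure_mono fun y hy => ⟨hy.1, fun r h _ => hy.2 r h⟩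

/-- Almost every point shows the pattern of `G` in infinitely many towers. -/
theorem mpi_freq (G : Finset ι) :
    ∀ᵐ y ∂mpi S ι, ∃ᶠ N in atTop, pat N G 1 y ∨ pat N G 2 y := by
  have h : ∀ᵐ y ∂mpi S ι, ∀ n, ¬ (y ∈ CI S ι n ∧ ∀ r, n ≤ r → ¬ pat r G 1 y) :=
    ae_all_iff.2 fun n => by
      rw [ae_iff]
      simpa only [not_not] using mpi_no_pat n G
  refine h.mono fun y hy => frequently_atTop.2 fun n => ?_
  obtain ⟨n0, hn0⟩ := mem_iUnion.1 ((iUnion_CI (S := S) (ι := ι)).symm ▸ mem_univ y)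
  have := hy (max n n0)
  push Not at this
  obtain ⟨r, h1, h2⟩ := this (CI_mono (le_max_right _ _) hn0)
  exact ⟨r, (le_max_left _ _).trans h1, Or.inl h2⟩

/-- A set invariant under `T^{×ι}` is, up to a null set, contained in its preimage by `S_G`: otherwise
the restriction of the measure to the difference would be singular to its image by `S_G`, against
`stageA`. -/
theorem mpi_sdiff (hgood : ∀ᵐ y ∂mpi S ι, ∀ i, Good (y i)) (G : Finset ι)
    {A : Set (ι → S.Xpt)} (hA : MeasurableSet A) (hT : TI S ι ⁻¹' A = A) :
    mpi S ι (A \ SG S G ⁻¹' A) = 0 := by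
  by_contra hpos
  set B := A \ SG S G ⁻¹' A with hB
  have hBm : MeasurableSet B := hA.diff (measurable_SG G hA)
  have hmem : ∀ y, TI S ι y ∈ A ↔ y ∈ A := fun y => by rw [← mem_preimage, hT]
  have hTB : TI S ι ⁻¹' B = B := by
    ext y
    have h2 : SG S G (TI S ι y) ∈ A ↔ SG S G y ∈ A := by
      rw [(SG_comm G).eq, hmem]
    simp only [hB, mem_preimage, Set.mem_sdiff, hmem, h2]
  have hpres : MeasurePreserving (TI S ι) ((mpi S ι).restrict B) ((mpi S ι).restrict B) := by
    have := mpi_TI.restrict_preimage hBm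
    rwa [hTB] at this
  obtain ⟨n, hn⟩ : ∃ n, (mpi S ι).restrict B
      {y | y ∈ Om S ι n ∧ ∃ᶠ N in atTop, pat N G 1 y ∨ pat N G 2 y} ≠ 0 := by
    by_contra hcon
    push Not at hcon
    have hnull := measure_iUnion_null hcon
    have hall : ∀ᵐ y ∂mpi S ι, y ∈ ⋃ n,
        {y | y ∈ Om S ι n ∧ ∃ᶠ N in atTop, pat N G 1 y ∨ pat N G 2 y} := by
      filter_upwards [hgood, mpi_freq G] with y h1 h2
      obtain ⟨n, hn⟩ := exists_Om h1
      exact mem_iUnion.2 ⟨n, hn, h2⟩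
    have h3 : ∀ᵐ y ∂(mpi S ι).restrict B, False := by
      filter_upwards [ae_restrict_of_ae hall, measure_eq_zero_iff_ae_notMem.1 hnull] with y h1 h2
      exact h2 h1
    have h4 : (mpi S ι).restrict B = 0 := by
      rw [← ae_eq_bot, ← eventually_false_iff_eq_bot]; exact h3
    rw [Measure.restrict_eq_zero] at h4
    exact hpos h4
  refine stageA _ hpres n (ne_top_of_le_ne_top (mpi_CI n) (Measure.restrict_apply_le _ _)) G hn ?_
  refine ⟨Bᶜ, hBm.compl, ?_, ?_⟩
  · rw [Measure.restrict_apply hBm.compl, compl_inter_self, measure_empty]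
  · rw [compl_compl, Measure.map_apply (measurable_SG G) hBm,
      Measure.restrict_apply (measurable_SG G hBm)]
    refine measure_mono_null (t := ∅) ?_ measure_empty
    rintro y ⟨h1, h2⟩
    exact h2.2 h1.1

/-- The restriction of the product measure to an invariant set is invariant under all single shifts,
hence a multiple of the product measure. -/
theorem mpi_ergodic (hgood : ∀ᵐ y ∂mpi S ι, ∀ i, Good (y i)) : Ergodic (TI S ι) (mpi S ι) := by
  refine ⟨mpi_TI, ⟨fun A hA hT => ?_⟩⟩
  have hinv : ∀ i, A =ᵐ[mpi S ι] SG S {i} ⁻¹' A := by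
    intro i
    refine (ae_le_set.2 (mpi_sdiff hgood _ hA hT)).antisymm (ae_le_set.2 ?_)
    have h := mpi_sdiff hgood {i} hA.compl (by rw [preimage_compl, hT])
    convert h using 2
    ext y
    simp only [Set.mem_sdiff, mem_preimage, mem_compl_iff, not_not]
    exact and_comm
  have hpres : ∀ i, MeasurePreserving (SG S {i}) ((mpi S ι).restrict A)
      ((mpi S ι).restrict A) := by
    intro i
    have := (mpi_SG (S := S) {i}).restrict_preimage hA
    rwa [← Measure.restrict_congr_set (hinv i)] at this
  have heq := eq_smul_pi (fun n => ne_top_of_le_ne_top (mpi_CI n)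
    (Measure.restrict_apply_le _ _)) hpres
  set c := (mpi S ι).restrict A (box S 0 fun _ => 0)
  have h0 : c * mpi S ι Aᶜ = 0 := by
    have h1 : (mpi S ι).restrict A Aᶜ = c * mpi S ι Aᶜ := by
      conv_lhs => rw [heq]
      rfl
    rw [← h1, Measure.restrict_apply hA.compl, compl_inter_self, measure_empty]
  rw [eventuallyConst_set']
  rcases mul_eq_zero.1 h0 with h | h
  · left
    rw [h, zero_smul, Measure.restrict_eq_zero] at heq
    exact ae_eq_empty.2 heq
  · exact Or.inr (ae_eq_univ.2 h)

/-- A set of positive measure is split by some box into two parts of positive measure, since boxes of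
high towers have small measure. -/
theorem mpi_split [Nonempty ι] {s : Set (ι → S.Xpt)} (h : mpi S ι s ≠ 0) :
    ∃ B, MeasurableSet B ∧ mpi S ι (s ∩ B) ≠ 0 ∧ mpi S ι (s \ B) ≠ 0 := by
  by_contra hcon
  push Not at hcon
  obtain ⟨n0, hn0⟩ : ∃ n, mpi S ι (s ∩ CI S ι n) ≠ 0 := by
    by_contra hc
    push Not at hc
    have := measure_iUnion_null hc
    rw [← inter_iUnion, iUnion_CI, inter_univ] at this
    exact h this
  have hle : ∀ n, n0 ≤ n → mpi S ι s ≤ ((3 : ℝ≥0∞)⁻¹ ^ n) ^ Fintype.card ι := by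
    intro n hn
    have h1 : (mpi S ι).restrict s (CI S ι n) ≠ 0 := by
      rw [Measure.restrict_apply (measurableSet_CI n), inter_comm]
      exact fun h2 => hn0 (measure_mono_null (inter_subset_inter_right s (CI_mono hn)) h2)
    have h2 : (mpi S ι).restrict s (CI S ι n) = _ :=
      cyl_sum ((mpi S ι).restrict s) n (fun w => ∀ i, w i ≠ none) fun _ h => h
    rw [h2] at h1
    obtain ⟨v, -, hv⟩ := Finset.exists_ne_zero_of_sum_ne_zero h1
    split_ifs at hv
    · rw [Measure.restrict_apply (measurableSet_box _ _), inter_comm] at hv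
      have h3 := hcon _ (measurableSet_box n _) hv
      rw [← mpi_box (S := S) (ι := ι) n (fun i => (v i : ℕ)) fun i => (v i).2]
      exact (measure_mono (subset_sdiff_union _ _)).trans ((measure_union_le _ _).trans (by
        rw [h3, zero_add]))
    · exact absurd rfl hv
  refine h (le_antisymm (ge_of_tendsto
    (ENNReal.tendsto_pow_atTop_nhds_zero_of_lt_one (r := 3⁻¹) (by simp))
    ((eventually_ge_atTop n0).mono fun n hn => (hle n hn).trans ?_)) zero_le)
  exact pow_le_of_le_one zero_le (three_inv_pow n).2 Fintype.card_ne_zero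

/-- If a set of positive measure had no returns, the saturation of one of two disjoint parts of it of
positive measure would be an invariant set disjoint from the other. -/
theorem mpi_conservative [Nonempty ι] (hE : Ergodic (TI S ι) (mpi S ι)) :
    Conservative (TI S ι) (mpi S ι) := by
  refine ⟨mpi_TI.quasiMeasurePreserving, fun s hs h0 => ?_⟩
  by_contra hcon
  push Not at hcon
  obtain ⟨B, hBm, hB1, hB2⟩ := mpi_split h0
  -- `U` is the saturation of `s ∩ B`. As `T` is not onto, both images and preimages are needed.
  set U : Set (ι → S.Xpt) := ⋃ (a : ℕ) (k : ℕ), (TI S ι)^[a] ⁻¹' ((TI S ι)^[k] '' (s ∩ B)) with hU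
  have hmem : ∀ y, y ∈ U ↔ ∃ a k, ∃ z ∈ s ∩ B, (TI S ι)^[k] z = (TI S ι)^[a] y := fun y => by
    simp only [hU, mem_iUnion, mem_preimage, mem_image]
  have himg : ∀ k, MeasurableSet ((TI S ι)^[k] '' (s ∩ B)) := by
    intro k
    induction k with
    | zero => simpa using hs.inter hBm
    | succ k ih =>
      rw [Function.iterate_succ', image_comp]
      exact TI_emb.measurableSet_image.2 ih
  have hUm : MeasurableSet U := MeasurableSet.iUnion fun a => MeasurableSet.iUnion fun k =>
    measurable_TI.iterate a (himg k)
  have hUinv : TI S ι ⁻¹' U = U := by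
    ext y
    rw [mem_preimage, hmem, hmem]
    constructor
    · rintro ⟨a, k, z, hz, h⟩
      exact ⟨a + 1, k, z, hz, by rw [h, Function.iterate_succ_apply]⟩
    · rintro ⟨a, k, z, hz, h⟩
      refine ⟨a, k + 1, z, hz, ?_⟩
      rw [Function.iterate_succ_apply', h]
      exact Function.Commute.self_iterate (TI S ι) a y
  rcases hE.toPreErgodic.measure_self_or_compl_eq_zero hUm hUinv with h | h
  · exact hB1 (measure_mono_null (fun y hy => (hmem y).2 ⟨0, 0, y, hy, rfl⟩) h)
  · refine hB2 (measure_mono_null (t := Uᶜ) (fun y hy hyU => ?_) h)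
    obtain ⟨a, k, z, hz, hak⟩ := (hmem y).1 hyU
    rcases lt_trichotomy a k with hlt | rfl | hlt
    · obtain ⟨j, rfl⟩ := Nat.exists_eq_add_of_lt hlt
      rw [show a + j + 1 = a + (j + 1) by omega, Function.iterate_add_apply] at hak
      have := TI_inj.iterate a hak
      exact hcon z hz.1 (j + 1) (by omega) (by rw [this]; exact hy.1)
    · have := TI_inj.iterate a hak
      exact hy.2 (this ▸ hz.2)
    · obtain ⟨j, rfl⟩ := Nat.exists_eq_add_of_lt hlt
      rw [show k + j + 1 = k + (j + 1) by omega, Function.iterate_add_apply] at hak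
      have := TI_inj.iterate k hak
      exact hcon y hy.1 (j + 1) (by omega) (by rw [← this]; exact hz.1)

end NFC

/-- Almost every point of the product has good coordinates, as `X_∞` is conull. -/
theorem NFCX.mpi_Good (S : NFCX) (ι : Type) [Fintype ι] :
    ∀ᵐ y ∂NFC.mpi S.toNFC ι, ∀ i, NFC.Good (y i) := by
  have := S.μ_sfin
  have h1 : ∀ᵐ x ∂S.μ, x ∈ S.Xinf := ae_iff.2 S.Xinf_conull
  have h2 : ∀ᵐ x ∂S.μ, NFC.Good x := h1.mono fun x hx =>
    NFC.Good_of ⟨S.ellx x, fun ℓ hl n h1 h2 => S.Xinf_spec _ hx ℓ hl n h1 h2⟩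
  exact ae_all_iff.2 fun i =>
    (Measure.quasiMeasurePreserving_eval (μ := fun _ : ι => S.μ) i).ae h2

/-- For each `d ≥ 1`, `(X^d, μ^{⊗d}, T^{×d})` is conservative and ergodic;
moreover every nonzero, Radon, `T^{×d}`-invariant ergodic measure `σ` on `X^d` with
`σ(X^d ∖ X_∞^d) = 0` is a product, over a partition `D_1, …, D_r` of `{1,…,d}`, of graph
measures on the `X^{D_j}` arising from powers of `T`. -/
theorem stmt0 (S : NFCX) (d : ℕ) (hd : 1 ≤ d) :
    (haveI := S.μ_sfin;
      Conservative (S.toNFC.Td d) (Measure.pi fun _ : Fin d => S.μ) ∧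
      Ergodic (S.toNFC.Td d) (Measure.pi fun _ : Fin d => S.μ)) ∧
    ∀ σ : Measure (S.toNFC.Xd d), σ ≠ 0 → S.toNFC.IsRadon d σ →
      Ergodic (S.toNFC.Td d) σ →
      σ {y : S.toNFC.Xd d | ¬ ∀ i, y i ∈ S.Xinf} = 0 →
      S.toNFC.IsProductOfGraphMeasures d σ := by
  have : Nonempty (Fin d) := ⟨⟨0, hd⟩⟩
  have hE := NFC.mpi_ergodic (S.mpi_Good (Fin d))
  exact ⟨⟨NFC.mpi_conservative hE, hE⟩, fun σ h0 hR hE hX => S.classification hd h0 hR hE hX⟩
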